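/- Assume Re λ₁(0) ≠ 0, Re λ₂(0) ≠ 0, and that for all ζ in a neighborhood of 0 in ℝ^l there are no resonances of first type of any order, i.e., p₁λ₁(ζ) + p₂λ₂(ζ) ≠ 0 for all nonnegative integers p₁, p₂ with p₁ + p₂ ≥ 1. Then the germ of V at 0 is C^∞-smoothly equivalent to a vector field of the form ξ̇ = v̄(ξ,η,ζ), η̇ = w̄(ξ,η,ζ), ζ̇_i = 0 (i = 1, …, l); that is, there exist open neighborhoods U, U' of 0 in ℝ^{2+l} and a C^∞ diffeomorphism Φ : U → U' with Φ(0) = 0 such that the transported vector field (Φ_*V)(y) = DΦ(Φ⁻¹(y))·V(Φ⁻¹(y)) has its last l components identically zero on U'. -/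

import Mathlib

open Filter Topology

/-!
Write `p` for the projection `(ξ, η, ζ) ↦ (ξ, η)`. It suffices to find, for each component `g` of
`V` along `ker p`, a smooth `f` near `0` with `V f = -g` which vanishes on `ker p`: adding these
functions to the coordinates `ζ` gives coordinates that are constant along `V`.

Such an `f` is first found as a formal series in `(ξ, η)` with coefficients smooth in `ζ`. In degree
`N` one has to invert the derivation that the transverse linear part of `V` induces on forms of
degree `N`; its eigenvalues are the numbers `p₁ λ₁ + p₂ λ₂` with `p₁ + p₂ = N`, so absence of
resonances is what is needed. Borel summation turns the series into a smooth function and leaves an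
error `g` that is flat along `ker p`.

For flat `g` the equation is solved by integrating `g` along the flow of `V`, cut off to a globally
defined field close to its linear part. If both eigenvalues have real parts of the same sign, the
flow contracts towards `ker p` in one time direction and the integral converges with all its
derivatives. At a saddle, `g` is split into two flat functions supported in cones around the stable
and the unstable directions. Each of them is integrated in the time direction in which an orbit
approaches `ker p` as long as it stays in the cone and never returns once it has left it.
-/

open scoped ContDiff NNReal

section GlobalODE

open Real BoundedContinuousFunction

open scoped BoundedContinuousFunction

variable {E : Type*} [NormedAddCommGroup E] [NormedSpace ℝ E]

theorem norm_intervalIntegral_le_of_norm_le_mul_exp {g : ℝ → E} {B c : ℝ} (hc : 0 < c)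
    (hB : 0 ≤ B) (h : ∀ s, ‖g s‖ ≤ B * exp (c * |s|)) (t : ℝ) :
    ‖∫ s in (0 : ℝ)..t, g s‖ ≤ B / c * exp (c * |t|) := by
  have of_nonneg : ∀ g : ℝ → E, (∀ s, ‖g s‖ ≤ B * exp (c * |s|)) → ∀ t, 0 ≤ t →
      ‖∫ s in (0 : ℝ)..t, g s‖ ≤ B / c * exp (c * |t|) := by
    intro g h t ht
    have hderiv : ∀ s, HasDerivAt (fun s => B / c * exp (c * s)) (B * exp (c * s)) s := fun s =>
      (((hasDerivAt_id' s).const_mul c).exp.const_mul (B / c)).congr_deriv (by field_simp)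
    have hint : IntervalIntegrable (fun s => B * exp (c * s)) MeasureTheory.volume 0 t :=
      (by fun_prop : Continuous fun s => B * exp (c * s)).intervalIntegrable _ _
    calc ‖∫ s in (0 : ℝ)..t, g s‖ ≤ ∫ s in (0 : ℝ)..t, B * exp (c * s) :=
          intervalIntegral.norm_integral_le_of_norm_le ht
            (Eventually.of_forall fun s hs => by simpa only [abs_of_pos hs.1] using h s) hint
      _ = B / c * exp (c * t) - B / c * exp (c * 0) :=
          intervalIntegral.integral_eq_sub_of_hasDerivAt (fun s _ => hderiv s) hint
      _ ≤ B / c * exp (c * |t|) := by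
          rw [abs_of_nonneg ht, sub_le_self_iff]
          positivity
  rcases le_total 0 t with ht | ht
  · exact of_nonneg g h t ht
  · have := of_nonneg (fun s => g (-s)) (fun s => by simpa using h (-s)) (-t) (by linarith)
    rw [intervalIntegral.integral_comp_neg, intervalIntegral.integral_symm, norm_neg] at this
    simpa using this

/-- The Picard operator of `γ' = f(t, γ)`, `γ 0 = x₀`, conjugated by the weight `e^{c|t|}`: it acts
on `u = e^{-c|t|} γ`, which is bounded when `f` is globally Lipschitz, and it contracts the sup
norm for large `c`. -/
noncomputable def weightedPicard (f : ℝ → E → E) (x₀ : E) (c : ℝ) (u : ℝ → E) (t : ℝ) : E :=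
  exp (-(c * |t|)) • (x₀ + ∫ s in (0 : ℝ)..t, f s (exp (c * |s|) • u s))

section WeightedPicard

variable {f : ℝ → E → E} {K : ℝ≥0} {C c : ℝ}

theorem continuous_weightedPicard_integrand (hf : Continuous (Function.uncurry f)) (u : ℝ →ᵇ E) :
    Continuous fun s => f s (exp (c * |s|) • u s) :=
  hf.comp (continuous_id.prodMk
    ((by fun_prop : Continuous fun s => exp (c * |s|)).smul u.continuous))

theorem continuous_weightedPicard (hf : Continuous (Function.uncurry f)) (x₀ : E) (u : ℝ →ᵇ E) :
    Continuous (weightedPicard f x₀ c u) :=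
  (by fun_prop : Continuous fun t => exp (-(c * |t|))).smul
    (continuous_const.add (intervalIntegral.continuous_primitive
      (fun _ _ => (continuous_weightedPicard_integrand hf u).intervalIntegrable _ _) 0))

theorem norm_exp_smul_apply_le (u : ℝ →ᵇ E) (s : ℝ) :
    ‖exp (c * |s|) • u s‖ ≤ ‖u‖ * exp (c * |s|) := by
  rw [norm_smul, norm_of_nonneg (exp_pos _).le, mul_comm]
  gcongr
  exact u.norm_coe_le_norm s

theorem norm_weightedPicard_le (hc : 0 < c) (hL : ∀ t, LipschitzWith K (f t))
    (hC : ∀ t, ‖f t 0‖ ≤ C) (x₀ : E) (u : ℝ →ᵇ E) (t : ℝ) :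
    ‖weightedPicard f x₀ c u t‖ ≤ ‖x₀‖ + (C + K * ‖u‖) / c := by
  have hC0 : 0 ≤ C := (norm_nonneg _).trans (hC 0)
  have one_le : ∀ s : ℝ, 1 ≤ exp (c * |s|) := fun s => one_le_exp (by positivity)
  have hbound : ∀ s, ‖f s (exp (c * |s|) • u s)‖ ≤ (C + K * ‖u‖) * exp (c * |s|) := fun s =>
    calc ‖f s (exp (c * |s|) • u s)‖
        ≤ ‖f s 0‖ + ‖f s (exp (c * |s|) • u s) - f s 0‖ := norm_le_norm_add_norm_sub' _ _
      _ ≤ C * exp (c * |s|) + K * (‖u‖ * exp (c * |s|)) := by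
          refine add_le_add ((hC s).trans (le_mul_of_one_le_right hC0 (one_le s)))
            (((hL s).norm_sub_le _ _).trans ?_)
          rw [sub_zero]
          gcongr
          exact norm_exp_smul_apply_le u s
      _ = (C + K * ‖u‖) * exp (c * |s|) := by ring
  rw [weightedPicard, norm_smul, norm_of_nonneg (exp_pos _).le, exp_neg,
    inv_mul_le_iff₀ (exp_pos _)]
  calc _ ≤ ‖x₀‖ + (C + K * ‖u‖) / c * exp (c * |t|) := by
        grw [norm_add_le, norm_intervalIntegral_le_of_norm_le_mul_exp hc (by positivity) hbound t]
    _ ≤ ‖x₀‖ * exp (c * |t|) + (C + K * ‖u‖) / c * exp (c * |t|) := by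
        gcongr
        exact le_mul_of_one_le_right (norm_nonneg _) (one_le t)
    _ = _ := by ring

theorem dist_weightedPicard_le (hc : 0 < c) (hf : Continuous (Function.uncurry f))
    (hL : ∀ t, LipschitzWith K (f t)) (x₀ : E) (u u' : ℝ →ᵇ E) (t : ℝ) :
    dist (weightedPicard f x₀ c u t) (weightedPicard f x₀ c u' t) ≤ K / c * dist u u' := by
  have hdiff : ∀ s, ‖f s (exp (c * |s|) • u s) - f s (exp (c * |s|) • u' s)‖ ≤
      (K * dist u u') * exp (c * |s|) := by
    intro s
    grw [(hL s).norm_sub_le, ← smul_sub, ← BoundedContinuousFunction.sub_apply,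
      norm_exp_smul_apply_le (u - u'), dist_eq_norm, mul_assoc]
  rw [dist_eq_norm, weightedPicard, weightedPicard, ← smul_sub, add_sub_add_left_eq_sub,
    ← intervalIntegral.integral_sub
      ((continuous_weightedPicard_integrand hf u).intervalIntegrable _ _)
      ((continuous_weightedPicard_integrand hf u').intervalIntegrable _ _),
    norm_smul, norm_of_nonneg (exp_pos _).le, exp_neg, inv_mul_le_iff₀ (exp_pos _)]
  grw [norm_intervalIntegral_le_of_norm_le_mul_exp hc (by positivity) hdiff t]
  exact le_of_eq (by ring)

theorem exists_weightedPicard_eq_self [CompleteSpace E] (hf : Continuous (Function.uncurry f))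
    (hL : ∀ t, LipschitzWith K (f t)) (hC : ∀ t, ‖f t 0‖ ≤ C) (x₀ : E) :
    ∃ (c : ℝ) (u : ℝ →ᵇ E), weightedPicard f x₀ c u = u := by
  have hK : (0 : ℝ) < (K + 1 : ℝ≥0) := by positivity
  let P : (ℝ →ᵇ E) → ℝ →ᵇ E := fun u => .ofNormedAddCommGroup _
    (continuous_weightedPicard hf x₀ u) _ (norm_weightedPicard_le hK hL hC x₀ u)
  have hP : ContractingWith (K / (K + 1)) P := by
    refine ⟨(div_lt_one (by positivity)).2 (lt_add_one K), LipschitzWith.of_dist_le_mul ?_⟩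
    refine fun u u' => (BoundedContinuousFunction.dist_le (by positivity)).2 fun t => ?_
    exact dist_weightedPicard_le hK hf hL x₀ u u' t
  exact ⟨_, hP.fixedPoint, congrArg DFunLike.coe hP.fixedPoint_isFixedPt⟩

theorem exists_isIntegralCurve_of_lipschitzWith [CompleteSpace E]
    (hf : Continuous (Function.uncurry f)) (hL : ∀ t, LipschitzWith K (f t))
    (hC : ∀ t, ‖f t 0‖ ≤ C) (x₀ : E) : ∃ γ : ℝ → E, γ 0 = x₀ ∧ IsIntegralCurve γ f := by
  obtain ⟨c, u, hu⟩ := exists_weightedPicard_eq_self hf hL hC x₀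
  have hγ : ∀ t, exp (c * |t|) • u t = x₀ + ∫ s in (0 : ℝ)..t, f s (exp (c * |s|) • u s) := by
    intro t
    conv_lhs => rw [← hu, weightedPicard, smul_smul, ← exp_add, add_neg_cancel, exp_zero, one_smul]
  have hcont := continuous_weightedPicard_integrand (c := c) hf u
  refine ⟨fun t => exp (c * |t|) • u t, by simpa using hγ 0, fun t => ?_⟩
  rw [funext hγ]
  exact ((intervalIntegral.integral_hasDerivAt_right (hcont.intervalIntegrable _ _)
    (hcont.stronglyMeasurableAtFilter _ _) hcont.continuousAt).const_add x₀).congr_deriv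
      (congrArg (f t) (hγ t))

end WeightedPicard

end GlobalODE

section Semiflow

open Real Set

/-- A forward semiflow `φ` of a smooth vector field `V` on an open convex set `Ω` on which all
derivatives of `V` of positive order are bounded. -/
structure IsSemiflow {E : Type*} [NormedAddCommGroup E] [NormedSpace ℝ E]
    (V : E → E) (Ω : Set E) (φ : E → ℝ → E) : Prop where
  convex : Convex ℝ Ω
  isOpen : IsOpen Ω
  smooth : ContDiff ℝ ∞ V
  bounded : ∀ j : ℕ, 1 ≤ j → ∃ C, ∀ x ∈ Ω, ‖iteratedFDeriv ℝ j V x‖ ≤ C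
  apply_zero : ∀ x ∈ Ω, φ x 0 = x
  mem : ∀ x ∈ Ω, ∀ t, 0 ≤ t → φ x t ∈ Ω
  hasDerivAt : ∀ x ∈ Ω, ∀ t, 0 ≤ t → HasDerivAt (φ x) (V (φ x t)) t

/-- `Y x` solves the variational equation along the orbit of `x`, so that `Y x t` is the derivative
at `x` of the time-`t` map; the bound `K` of `DV` controls the growth of `Y`. -/
structure IsLinearization {E : Type*} [NormedAddCommGroup E] [NormedSpace ℝ E]
    (V : E → E) (Ω : Set E) (φ : E → ℝ → E) (K : ℝ≥0) (Y : E → ℝ → E →L[ℝ] E) : Prop where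
  norm_fderiv_le : ∀ x ∈ Ω, ‖fderiv ℝ V x‖ ≤ K
  apply_zero : ∀ x ∈ Ω, Y x 0 = .id ℝ E
  hasDerivAt : ∀ x ∈ Ω, ∀ t, 0 ≤ t → HasDerivAt (Y x) ((fderiv ℝ V (φ x t)).comp (Y x t)) t

/-- All derivatives of `g` decay faster than any exponential along the semiflow `φ`, uniformly
on bounded sets. -/
def DecaysAlong {E F : Type*} [NormedAddCommGroup E] [NormedSpace ℝ E]
    [NormedAddCommGroup F] [NormedSpace ℝ F] (Ω : Set E) (φ : E → ℝ → E) (g : E → F) : Prop :=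
  ∀ (j N : ℕ) (R : ℝ), ∃ C, ∀ x ∈ Ω, ‖x‖ ≤ R → ∀ t, 0 ≤ t →
    ‖iteratedFDeriv ℝ j g (φ x t)‖ ≤ C * exp (-(N * t))

variable {E F : Type*} [NormedAddCommGroup E] [NormedSpace ℝ E] [NormedAddCommGroup F]
  [NormedSpace ℝ F] {V : E → E} {Ω : Set E} {φ : E → ℝ → E}

theorem norm_iteratedFDeriv_two (f : E → F) (x : E) :
    ‖iteratedFDeriv ℝ 2 f x‖ = ‖fderiv ℝ (fderiv ℝ f) x‖ := by
  rw [← norm_iteratedFDeriv_fderiv, norm_iteratedFDeriv_one]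

theorem norm_sub_sub_fderiv_le_of_convex {f : E → F} (hf : ContDiff ℝ 2 f) {s : Set E}
    (hs : Convex ℝ s) {C : ℝ} (hC : ∀ x ∈ s, ‖iteratedFDeriv ℝ 2 f x‖ ≤ C) {a b : E} (ha : a ∈ s)
    (hb : b ∈ s) : ‖f b - f a - fderiv ℝ f a (b - a)‖ ≤ C * ‖b - a‖ ^ 2 := by
  have hC0 : 0 ≤ C := (norm_nonneg _).trans (hC a ha)
  have hdf : Differentiable ℝ (fderiv ℝ f) :=
    (hf.fderiv_right (m := 1) (by norm_num)).differentiable one_ne_zero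
  have hlip : ∀ z ∈ segment ℝ a b, ‖fderiv ℝ f z - fderiv ℝ f a‖ ≤ C * ‖b - a‖ := by
    intro z hz
    grw [hs.norm_image_sub_le_of_norm_fderiv_le (fun x _ => hdf x)
      (fun x hx => (norm_iteratedFDeriv_two f x).symm.trans_le (hC x hx)) ha
      (hs.segment_subset ha hb hz), norm_sub_le_of_mem_segment hz]
  rw [pow_two, ← mul_assoc]
  exact (convex_segment a b).norm_image_sub_le_of_norm_hasFDerivWithin_le'
    (fun x _ => (hf.differentiable two_ne_zero x).hasFDerivAt.hasFDerivWithinAt) hlip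
    (left_mem_segment ℝ a b) (right_mem_segment ℝ a b)

theorem gronwallBound_zero_mul (K ε r x : ℝ) :
    gronwallBound 0 K (ε * r) x = gronwallBound 0 K ε x * r := by
  rcases eq_or_ne K 0 with rfl | hK
  · simp only [gronwallBound_K0]
    ring
  · simp only [gronwallBound_of_K_ne_0 hK]
    ring

namespace IsSemiflow

theorem continuousOn (h : IsSemiflow V Ω φ) {x : E} (hx : x ∈ Ω) : ContinuousOn (φ x) (Ici 0) :=
  fun t ht => (h.hasDerivAt x hx t ht).continuousAt.continuousWithinAt

theorem exists_norm_fderiv_le (h : IsSemiflow V Ω φ) : ∃ K : ℝ≥0, ∀ x ∈ Ω, ‖fderiv ℝ V x‖ ≤ K := by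
  obtain ⟨C, hC⟩ := h.bounded 1 le_rfl
  exact ⟨C.toNNReal, fun x hx =>
    norm_iteratedFDeriv_one (𝕜 := ℝ) (f := V) ▸ (hC x hx).trans (le_coe_toNNReal C)⟩

theorem lipschitzOnWith (h : IsSemiflow V Ω φ) {K : ℝ≥0} (hK : ∀ x ∈ Ω, ‖fderiv ℝ V x‖ ≤ K) :
    LipschitzOnWith K V Ω :=
  h.convex.lipschitzOnWith_of_nnnorm_fderiv_le
    (fun x _ => h.smooth.differentiable (by simp) x) hK

theorem dist_le (h : IsSemiflow V Ω φ) {K : ℝ≥0} (hK : ∀ x ∈ Ω, ‖fderiv ℝ V x‖ ≤ K) {x y : E}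
    (hx : x ∈ Ω) (hy : y ∈ Ω) {t : ℝ} (ht : 0 ≤ t) :
    dist (φ x t) (φ y t) ≤ dist x y * exp (K * t) := by
  simpa only [sub_zero] using dist_le_of_trajectories_ODE_of_mem
    (fun _ _ => h.lipschitzOnWith hK)
    ((h.continuousOn hx).mono fun _ hs => hs.1)
    (fun s hs => (h.hasDerivAt x hx s hs.1).hasDerivWithinAt) (fun s hs => h.mem x hx s hs.1)
    ((h.continuousOn hy).mono fun _ hs => hs.1)
    (fun s hs => (h.hasDerivAt y hy s hs.1).hasDerivWithinAt) (fun s hs => h.mem y hy s hs.1)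
    (by rw [h.apply_zero x hx, h.apply_zero y hy]) t ⟨ht, le_rfl⟩

theorem exists_isLinearization [CompleteSpace E] (h : IsSemiflow V Ω φ) :
    ∃ K Y, IsLinearization V Ω φ K Y := by
  obtain ⟨K, hK⟩ := h.exists_norm_fderiv_le
  have hsol : ∀ x ∈ Ω, ∃ Y : ℝ → E →L[ℝ] E, Y 0 = .id ℝ E ∧
      ∀ t, 0 ≤ t → HasDerivAt Y ((fderiv ℝ V (φ x t)).comp (Y t)) t := by
    intro x hx
    -- The orbit is only controlled for `t ≥ 0`; freezing it at negative times gives an equation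
    -- with globally Lipschitz right-hand side.
    have hcont : Continuous fun t => φ x (max t 0) :=
      (h.continuousOn hx).comp_continuous (by fun_prop) fun t => le_max_right t 0
    obtain ⟨Y, hY0, hY⟩ := exists_isIntegralCurve_of_lipschitzWith (K := K) (C := 0)
      (f := fun t (Z : E →L[ℝ] E) => (fderiv ℝ V (φ x (max t 0))).comp Z)
      ((((h.smooth.continuous_fderiv (by simp)).comp hcont).comp continuous_fst).clm_comp
        continuous_snd)
      (fun t => LipschitzWith.of_dist_le_mul fun Z Z' => by
        rw [dist_eq_norm, dist_eq_norm, ← ContinuousLinearMap.comp_sub]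
        grw [ContinuousLinearMap.opNorm_comp_le, hK _ (h.mem x hx _ (le_max_right t 0))])
      (fun t => by simp) (.id ℝ E)
    exact ⟨Y, hY0, fun t ht => by simpa only [max_eq_left ht] using hY t⟩
  choose! Y hY0 hY using hsol
  exact ⟨_, Y, hK, hY0, hY⟩

end IsSemiflow

namespace IsLinearization

variable {K : ℝ≥0} {Y : E → ℝ → E →L[ℝ] E}

theorem norm_le (hY : IsLinearization V Ω φ K Y) (h : IsSemiflow V Ω φ) {x : E} (hx : x ∈ Ω)
    {t : ℝ} (ht : 0 ≤ t) : ‖Y x t‖ ≤ exp (K * t) := by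
  have := norm_le_gronwallBound_of_norm_deriv_right_le (f := Y x) (δ := 1) (K := K) (ε := 0)
    (fun s hs => (hY.hasDerivAt x hx s hs.1).continuousAt.continuousWithinAt)
    (fun s hs => (hY.hasDerivAt x hx s hs.1).hasDerivWithinAt)
    (by rw [hY.apply_zero x hx]; exact ContinuousLinearMap.norm_id_le)
    (fun s hs => by
      grw [ContinuousLinearMap.opNorm_comp_le, hY.norm_fderiv_le _ (h.mem x hx s hs.1), add_zero])
    t ⟨ht, le_rfl⟩
  simpa [gronwallBound_ε0] using this

theorem norm_sub_sub_apply_le (hY : IsLinearization V Ω φ K Y) (h : IsSemiflow V Ω φ) {C : ℝ}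
    (hC : ∀ x ∈ Ω, ‖iteratedFDeriv ℝ 2 V x‖ ≤ C) {x z : E} (hx : x ∈ Ω) (hz : z ∈ Ω) {T : ℝ}
    (hT : 0 ≤ T) : ‖φ z T - φ x T - Y x T (z - x)‖ ≤
      gronwallBound 0 K (C * exp (K * T) ^ 2 * ‖z - x‖ ^ 2) T := by
  have hderiv : ∀ s, 0 ≤ s → HasDerivAt (fun s => φ z s - φ x s - Y x s (z - x))
      (V (φ z s) - V (φ x s) - fderiv ℝ V (φ x s) (Y x s (z - x))) s := fun s hs =>
    ((h.hasDerivAt z hz s hs).sub (h.hasDerivAt x hx s hs)).sub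
      (by simpa using (hY.hasDerivAt x hx s hs).clm_apply (hasDerivAt_const s (z - x)))
  have hbound : ∀ s ∈ Ico 0 T,
      ‖V (φ z s) - V (φ x s) - fderiv ℝ V (φ x s) (Y x s (z - x))‖ ≤
        K * ‖φ z s - φ x s - Y x s (z - x)‖ + C * exp (K * T) ^ 2 * ‖z - x‖ ^ 2 := by
    intro s hs
    have hC0 : 0 ≤ C := (norm_nonneg _).trans (hC x hx)
    have hdist : ‖φ z s - φ x s‖ ≤ ‖z - x‖ * exp (K * T) := by
      simp only [← dist_eq_norm]
      grw [h.dist_le hY.norm_fderiv_le hz hx hs.1, hs.2.le]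
    calc _ = ‖fderiv ℝ V (φ x s) (φ z s - φ x s - Y x s (z - x)) +
            (V (φ z s) - V (φ x s) - fderiv ℝ V (φ x s) (φ z s - φ x s))‖ := by
          simp only [map_sub]
          abel_nf
      _ ≤ K * ‖φ z s - φ x s - Y x s (z - x)‖ + C * ‖φ z s - φ x s‖ ^ 2 :=
          (norm_add_le _ _).trans (add_le_add
            (ContinuousLinearMap.le_of_opNorm_le _ (hY.norm_fderiv_le _ (h.mem x hx s hs.1)) _)
            (norm_sub_sub_fderiv_le_of_convex (mod_cast contDiff_infty.1 h.smooth 2) h.convex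
              hC (h.mem x hx s hs.1) (h.mem z hz s hs.1)))
      _ ≤ K * ‖φ z s - φ x s - Y x s (z - x)‖ + C * (‖z - x‖ * exp (K * T)) ^ 2 := by gcongr
      _ = _ := by ring
  simpa only [sub_zero] using norm_le_gronwallBound_of_norm_deriv_right_le
    (fun s hs => (hderiv s hs.1).continuousAt.continuousWithinAt)
    (fun s hs => (hderiv s hs.1).hasDerivWithinAt)
    (by simp [h.apply_zero x hx, h.apply_zero z hz, hY.apply_zero x hx]) hbound T ⟨hT, le_rfl⟩

theorem hasFDerivAt (hY : IsLinearization V Ω φ K Y) (h : IsSemiflow V Ω φ) {x : E} (hx : x ∈ Ω)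
    {T : ℝ} (hT : 0 ≤ T) : HasFDerivAt (fun z => φ z T) (Y x T) x := by
  obtain ⟨C, hC⟩ := h.bounded 2 one_le_two
  have hquad : (fun z => φ z T - φ x T - Y x T (z - x)) =O[𝓝 x] fun z => ‖z - x‖ ^ 2 := by
    refine .of_bound (gronwallBound 0 K (C * exp (K * T) ^ 2) T) ?_
    filter_upwards [h.isOpen.mem_nhds hx] with z hz
    rw [norm_pow, norm_norm, ← gronwallBound_zero_mul]
    exact hY.norm_sub_sub_apply_le h hC hx hz hT
  exact .of_isLittleO (hquad.trans_isLittleO (Asymptotics.isLittleO_pow_sub_sub x one_lt_two))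

end IsLinearization

end Semiflow

section Prolongation

open Real Set

/-- The vector field induced by `V` on the tangent space `E × E`, damped by `-K` in the fibre so
that the unit ball of the fibre is forward invariant once `K` bounds `DV`. -/
noncomputable def prolongedField {E : Type*} [NormedAddCommGroup E] [NormedSpace ℝ E]
    (V : E → E) (K : ℝ≥0) (z : E × E) : E × E :=
  (V z.1, fderiv ℝ V z.1 z.2 - (K : ℝ) • z.2)

/-- The semiflow of `prolongedField V K` when `Y` linearizes the semiflow `φ` of `V`. -/
noncomputable def prolongedFlow {E : Type*} [NormedAddCommGroup E] [NormedSpace ℝ E]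
    (φ : E → ℝ → E) (K : ℝ≥0) (Y : E → ℝ → E →L[ℝ] E) (z : E × E) (t : ℝ) : E × E :=
  (φ z.1 t, exp (-(K * t)) • Y z.1 t z.2)

variable {E F : Type*} [NormedAddCommGroup E] [NormedSpace ℝ E] [NormedAddCommGroup F]
  [NormedSpace ℝ F]

theorem norm_iteratedFDeriv_comp_fst_le {f : E → F} (hf : ContDiff ℝ ∞ f) (j : ℕ) (z : E × E) :
    ‖iteratedFDeriv ℝ j (fun z : E × E => f z.1) z‖ ≤ ‖iteratedFDeriv ℝ j f z.1‖ := by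
  change ‖iteratedFDeriv ℝ j (f ∘ ContinuousLinearMap.fst ℝ E E) z‖ ≤ _
  rw [(ContinuousLinearMap.fst ℝ E E).iteratedFDeriv_comp_right hf z (mod_cast le_top)]
  refine (ContinuousMultilinearMap.norm_compContinuousLinearMap_le _ _).trans ?_
  exact mul_le_of_le_one_right (norm_nonneg _) (Finset.prod_le_one (fun _ _ => norm_nonneg _)
    fun _ _ => ContinuousLinearMap.norm_fst_le ℝ E E)

theorem norm_iteratedFDeriv_snd_le (j : ℕ) {z : E × E} (hz : ‖z.2‖ ≤ 1) :
    ‖iteratedFDeriv ℝ j (fun z : E × E => z.2) z‖ ≤ 1 := by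
  match j with
  | 0 => simpa using hz
  | 1 =>
    rw [norm_iteratedFDeriv_one, fderiv_snd]
    exact ContinuousLinearMap.norm_snd_le ℝ E E
  | j + 2 =>
    rw [← norm_iteratedFDeriv_fderiv, show fderiv ℝ (fun z : E × E => z.2) =
      fun _ => ContinuousLinearMap.snd ℝ E E from funext fun _ => fderiv_snd,
      iteratedFDeriv_const_of_ne (by simp)]
    simp

theorem contDiff_fderiv_apply {f : E → F} (hf : ContDiff ℝ ∞ f) :
    ContDiff ℝ ∞ (fun z : E × E => fderiv ℝ f z.1 z.2) :=
  ((hf.fderiv_right (m := ∞) (by simp)).comp contDiff_fst).clm_apply contDiff_snd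

theorem norm_iteratedFDeriv_fderiv_apply_le {f : E → F} (hf : ContDiff ℝ ∞ f) (j : ℕ)
    {z : E × E} (hz : ‖z.2‖ ≤ 1) :
    ‖iteratedFDeriv ℝ j (fun z : E × E => fderiv ℝ f z.1 z.2) z‖ ≤
      ∑ i ∈ Finset.range (j + 1), (j.choose i : ℝ) * ‖iteratedFDeriv ℝ (i + 1) f z.1‖ := by
  have hf' : ContDiff ℝ ∞ (fderiv ℝ f) := hf.fderiv_right (by simp)
  refine (norm_iteratedFDeriv_clm_apply (hf'.comp contDiff_fst) contDiff_snd z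
    (mod_cast le_top)).trans (Finset.sum_le_sum fun i _ => ?_)
  rw [← norm_iteratedFDeriv_fderiv]
  grw [norm_iteratedFDeriv_snd_le _ hz, mul_one]
  gcongr
  exact norm_iteratedFDeriv_comp_fst_le hf' i z

theorem contDiff_prolongedField {V : E → E} (hV : ContDiff ℝ ∞ V) (K : ℝ≥0) :
    ContDiff ℝ ∞ (prolongedField V K) :=
  (hV.comp contDiff_fst).prodMk
    ((contDiff_fderiv_apply hV).sub (contDiff_const.smul contDiff_snd))

theorem norm_iteratedFDeriv_prolongedField_le {V : E → E} (hV : ContDiff ℝ ∞ V) (K : ℝ≥0) (j : ℕ)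
    {z : E × E} (hz : ‖z.2‖ ≤ 1) :
    ‖iteratedFDeriv ℝ j (prolongedField V K) z‖ ≤ max ‖iteratedFDeriv ℝ j V z.1‖
      ((∑ i ∈ Finset.range (j + 1), (j.choose i : ℝ) * ‖iteratedFDeriv ℝ (i + 1) V z.1‖) + K) := by
  have hfst : ContDiff ℝ ∞ fun z : E × E => V z.1 := hV.comp contDiff_fst
  have hfib := contDiff_fderiv_apply hV
  have hdamp : ContDiff ℝ ∞ fun z : E × E => (K : ℝ) • z.2 := contDiff_const.smul contDiff_snd
  have hj : (j : WithTop ℕ∞) ≤ ∞ := mod_cast le_top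
  change ‖iteratedFDeriv ℝ j (fun z : E × E => (V z.1, fderiv ℝ V z.1 z.2 - (K : ℝ) • z.2)) z‖ ≤ _
  rw [iteratedFDeriv_prodMk hfst.contDiffAt (hfib.sub hdamp).contDiffAt hj,
    ContinuousMultilinearMap.opNorm_prod,
    fun_iteratedFDeriv_sub_apply (hfib.of_le hj).contDiffAt (hdamp.of_le hj).contDiffAt,
    iteratedFDeriv_const_smul_apply' contDiff_snd.contDiffAt]
  refine max_le_max (norm_iteratedFDeriv_comp_fst_le hV j z) ?_
  grw [norm_sub_le, norm_smul, norm_iteratedFDeriv_fderiv_apply_le hV j hz,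
    norm_iteratedFDeriv_snd_le j hz, mul_one, Real.norm_of_nonneg K.coe_nonneg]

variable {V : E → E} {Ω : Set E} {φ : E → ℝ → E} {K : ℝ≥0} {Y : E → ℝ → E →L[ℝ] E}

theorem IsSemiflow.exists_norm_iteratedFDeriv_prolongedField_le (h : IsSemiflow V Ω φ) (K : ℝ≥0)
    {j : ℕ} (hj : 1 ≤ j) : ∃ C, ∀ z ∈ Ω ×ˢ Metric.ball (0 : E) 1,
      ‖iteratedFDeriv ℝ j (prolongedField V K) z‖ ≤ C := by
  obtain ⟨B, hB⟩ := h.bounded j hj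
  choose C hC using fun i : ℕ => h.bounded (i + 1) (by omega)
  refine ⟨max B ((∑ i ∈ Finset.range (j + 1), (j.choose i : ℝ) * C i) + K), fun z hz => ?_⟩
  refine (norm_iteratedFDeriv_prolongedField_le h.smooth K j
    (mem_ball_zero_iff.1 hz.2).le).trans (max_le_max (hB _ hz.1) ?_)
  gcongr with i
  exact hC i _ hz.1

namespace IsLinearization

theorem norm_prolongedFlow_snd_le (hY : IsLinearization V Ω φ K Y) (h : IsSemiflow V Ω φ)
    {z : E × E} (hz : z.1 ∈ Ω) {t : ℝ} (ht : 0 ≤ t) : ‖(prolongedFlow φ K Y z t).2‖ ≤ ‖z.2‖ := by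
  rw [prolongedFlow, norm_smul, Real.norm_of_nonneg (exp_pos _).le]
  calc exp (-(K * t)) * ‖Y z.1 t z.2‖
      ≤ exp (-(K * t)) * (exp (K * t) * ‖z.2‖) := by
        gcongr
        exact (Y z.1 t).le_of_opNorm_le (hY.norm_le h hz ht) _
    _ = ‖z.2‖ := by rw [← mul_assoc, ← exp_add, neg_add_cancel, exp_zero, one_mul]

theorem hasDerivAt_prolongedFlow (hY : IsLinearization V Ω φ K Y) (h : IsSemiflow V Ω φ)
    {z : E × E} (hz : z.1 ∈ Ω) {t : ℝ} (ht : 0 ≤ t) :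
    HasDerivAt (prolongedFlow φ K Y z) (prolongedField V K (prolongedFlow φ K Y z t)) t := by
  have hexp : HasDerivAt (fun t => exp (-(K * t))) (exp (-(K * t)) * (-K)) t := by
    simpa using ((hasDerivAt_id t).const_mul (K : ℝ)).neg.exp
  have hfib : HasDerivAt (fun t => Y z.1 t z.2) (fderiv ℝ V (φ z.1 t) (Y z.1 t z.2)) t := by
    simpa using (hY.hasDerivAt _ hz t ht).clm_apply (hasDerivAt_const t z.2)
  refine (h.hasDerivAt _ hz t ht).prodMk ?_
  convert hexp.fun_smul hfib using 1
  simp only [prolongedFlow, map_smul]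
  module

theorem isSemiflow_prolongedFlow (hY : IsLinearization V Ω φ K Y) (h : IsSemiflow V Ω φ) :
    IsSemiflow (prolongedField V K) (Ω ×ˢ Metric.ball 0 1) (prolongedFlow φ K Y) where
  convex := h.convex.prod (convex_ball _ _)
  isOpen := h.isOpen.prod Metric.isOpen_ball
  smooth := contDiff_prolongedField h.smooth K
  bounded _ hj := h.exists_norm_iteratedFDeriv_prolongedField_le K hj
  apply_zero z hz := by simp [prolongedFlow, h.apply_zero _ hz.1, hY.apply_zero _ hz.1]
  mem z hz t ht := ⟨h.mem _ hz.1 t ht, mem_ball_zero_iff.2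
    ((hY.norm_prolongedFlow_snd_le h hz.1 ht).trans_lt (mem_ball_zero_iff.1 hz.2))⟩
  hasDerivAt _ hz _ ht := hY.hasDerivAt_prolongedFlow h hz.1 ht

theorem decaysAlong_prolongedFlow (hY : IsLinearization V Ω φ K Y) (h : IsSemiflow V Ω φ)
    {g : E → F} (hg : ContDiff ℝ ∞ g) (hd : DecaysAlong Ω φ g) :
    DecaysAlong (Ω ×ˢ Metric.ball 0 1) (prolongedFlow φ K Y)
      (fun z : E × E => fderiv ℝ g z.1 z.2) := by
  intro j N R
  choose C hC using fun i => hd (i + 1) N R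
  refine ⟨∑ i ∈ Finset.range (j + 1), (j.choose i : ℝ) * C i, fun z hz hR t ht => ?_⟩
  have hfib : ‖(prolongedFlow φ K Y z t).2‖ ≤ 1 :=
    (hY.norm_prolongedFlow_snd_le h hz.1 ht).trans (mem_ball_zero_iff.1 hz.2).le
  refine (norm_iteratedFDeriv_fderiv_apply_le hg j hfib).trans ?_
  simp only [Finset.sum_mul, mul_assoc]
  gcongr with i
  exact hC i _ hz.1 ((norm_fst_le z).trans hR) t ht

end IsLinearization

end Prolongation

section FlowIntegral

open MeasureTheory Real Set

theorem exp_mul_mul_le_of_le_exp {M C a : ℝ} {N : ℕ} (hN : M + 1 ≤ N) {t : ℝ} (ht : 0 ≤ t)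
    (ha0 : 0 ≤ a) (ha : a ≤ C * exp (-(N * t))) : exp (M * t) * a ≤ C * exp (-t) := by
  have hC : 0 ≤ C := nonneg_of_mul_nonneg_left (ha0.trans ha) (exp_pos _)
  calc exp (M * t) * a ≤ exp (M * t) * (C * exp (-(N * t))) := by gcongr
    _ = C * exp (M * t + -(N * t)) := by rw [exp_add]; ring
    _ ≤ C * exp (-t) := by
      gcongr
      nlinarith

variable {E : Type*} [NormedAddCommGroup E] [NormedSpace ℝ E]
  {V : E → E} {Ω : Set E} {φ : E → ℝ → E} {g : E → ℝ} {K : ℝ≥0} {Y : E → ℝ → E →L[ℝ] E}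

theorem integrableOn_of_norm_le_mul_exp_neg {G : Type*} [NormedAddCommGroup G] {u : ℝ → G} {C : ℝ}
    (hu : ContinuousOn u (Ici 0)) (hC : ∀ t, 0 ≤ t → ‖u t‖ ≤ C * exp (-t)) :
    IntegrableOn u (Ioi 0) :=
  ((integrableOn_exp_neg_Ioi 0).const_mul C).mono'
    ((hu.mono Ioi_subset_Ici_self).aestronglyMeasurable measurableSet_Ioi)
    ((ae_restrict_mem measurableSet_Ioi).mono fun t ht => hC t (le_of_lt ht))

theorem IsSemiflow.integrableOn_exp_mul (h : IsSemiflow V Ω φ) (hg : Continuous g)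
    (hd : DecaysAlong Ω φ g) (M : ℝ) {x : E} (hx : x ∈ Ω) :
    IntegrableOn (fun t => exp (M * t) * g (φ x t)) (Ioi 0) := by
  obtain ⟨N, hN⟩ := exists_nat_ge (M + 1)
  obtain ⟨C, hC⟩ := hd 0 N ‖x‖
  refine integrableOn_of_norm_le_mul_exp_neg (C := C)
    (ContinuousOn.mul (by fun_prop) (hg.comp_continuousOn (h.continuousOn hx))) fun t ht => ?_
  rw [norm_mul, Real.norm_of_nonneg (exp_pos _).le]
  exact exp_mul_mul_le_of_le_exp hN ht (norm_nonneg _)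
    (norm_iteratedFDeriv_zero (𝕜 := ℝ) (f := g) ▸ hC x hx le_rfl t ht)

namespace IsLinearization

theorem exists_norm_fderiv_comp_le (hY : IsLinearization V Ω φ K Y) (h : IsSemiflow V Ω φ)
    (hd : DecaysAlong Ω φ g) (M R : ℝ) : ∃ C, ∀ x ∈ Ω, ‖x‖ ≤ R → ∀ t, 0 ≤ t →
      ‖exp (M * t) • (fderiv ℝ g (φ x t)).comp (Y x t)‖ ≤ C * exp (-t) := by
  obtain ⟨N, hN⟩ := exists_nat_ge (M + K + 1)
  obtain ⟨C, hC⟩ := hd 1 N R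
  refine ⟨C, fun x hx hR t ht => ?_⟩
  have hdecay := hC x hx hR t ht
  rw [norm_iteratedFDeriv_one] at hdecay
  calc ‖exp (M * t) • (fderiv ℝ g (φ x t)).comp (Y x t)‖
      ≤ exp (M * t) * (‖fderiv ℝ g (φ x t)‖ * exp (K * t)) := by
        rw [norm_smul, Real.norm_of_nonneg (exp_pos _).le]
        grw [ContinuousLinearMap.opNorm_comp_le, hY.norm_le h hx ht]
    _ = exp ((M + K) * t) * ‖fderiv ℝ g (φ x t)‖ := by rw [add_mul, exp_add]; ring
    _ ≤ C * exp (-t) := exp_mul_mul_le_of_le_exp hN ht (norm_nonneg _) hdecay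

theorem integrableOn_exp_smul_fderiv_comp (hY : IsLinearization V Ω φ K Y) (h : IsSemiflow V Ω φ)
    (hg : ContDiff ℝ 1 g) (hd : DecaysAlong Ω φ g) (M : ℝ) {x : E} (hx : x ∈ Ω) :
    IntegrableOn (fun t => exp (M * t) • (fderiv ℝ g (φ x t)).comp (Y x t)) (Ioi 0) := by
  obtain ⟨C, hC⟩ := hY.exists_norm_fderiv_comp_le h hd M ‖x‖
  refine integrableOn_of_norm_le_mul_exp_neg (C := C) (ContinuousOn.smul
    (f := fun t => exp (M * t)) (by fun_prop) ?_) (hC x hx le_rfl)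
  exact ((hg.continuous_fderiv one_ne_zero).comp_continuousOn (h.continuousOn hx)).clm_comp
    fun t ht => (hY.hasDerivAt x hx t ht).continuousAt.continuousWithinAt

theorem hasFDerivAt_integral (hY : IsLinearization V Ω φ K Y) (h : IsSemiflow V Ω φ)
    (hg : ContDiff ℝ 1 g) (hd : DecaysAlong Ω φ g) (M : ℝ) {x : E} (hx : x ∈ Ω) :
    HasFDerivAt (fun x => ∫ t in Ioi (0 : ℝ), exp (M * t) * g (φ x t))
      (∫ t in Ioi (0 : ℝ), exp (M * t) • (fderiv ℝ g (φ x t)).comp (Y x t)) x := by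
  obtain ⟨ε, hε, hball⟩ := Metric.isOpen_iff.1 h.isOpen x hx
  obtain ⟨C, hC⟩ := hY.exists_norm_fderiv_comp_le h hd M (‖x‖ + ε)
  have hR : ∀ z ∈ Metric.ball x ε, ‖z‖ ≤ ‖x‖ + ε := fun z hz =>
    (norm_le_norm_add_norm_sub x z).trans
      (by gcongr; exact (mem_ball_iff_norm'.1 hz).le)
  refine hasFDerivAt_integral_of_dominated_of_fderiv_le (Metric.ball_mem_nhds x hε)
    (F' := fun z t => exp (M * t) • (fderiv ℝ g (φ z t)).comp (Y z t))
    (bound := fun t => C * exp (-t)) ?_ (h.integrableOn_exp_mul hg.continuous hd M hx)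
    (hY.integrableOn_exp_smul_fderiv_comp h hg hd M hx).aestronglyMeasurable ?_
    ((integrableOn_exp_neg_Ioi 0).const_mul C) ?_
  · filter_upwards [h.isOpen.mem_nhds hx] with z hz
    exact (h.integrableOn_exp_mul hg.continuous hd M hz).aestronglyMeasurable
  · filter_upwards [ae_restrict_mem measurableSet_Ioi] with t ht z hz
    exact hC z (hball hz) (hR z hz) t (le_of_lt ht)
  · filter_upwards [ae_restrict_mem measurableSet_Ioi] with t ht z hz
    exact ((hg.differentiable one_ne_zero (φ z t)).hasFDerivAt.comp z
      (hY.hasFDerivAt h (hball hz) (le_of_lt ht))).const_mul (exp (M * t))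

theorem fderiv_integral_apply (hY : IsLinearization V Ω φ K Y)
    (h : IsSemiflow V Ω φ) (hg : ContDiff ℝ 1 g) (hd : DecaysAlong Ω φ g) (M : ℝ) {c : ℝ}
    (hc : c ≠ 0) (y : E) {x : E} (hx : x ∈ Ω) :
    fderiv ℝ (fun x => ∫ t in Ioi (0 : ℝ), exp (M * t) * g (φ x t)) x y =
      c * ∫ t in Ioi (0 : ℝ), exp ((M + K) * t) *
        fderiv ℝ g (prolongedFlow φ K Y (x, c⁻¹ • y) t).1
          (prolongedFlow φ K Y (x, c⁻¹ • y) t).2 := by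
  rw [(hY.hasFDerivAt_integral h hg hd M hx).fderiv,
    ContinuousLinearMap.integral_apply (hY.integrableOn_exp_smul_fderiv_comp h hg hd M hx),
    ← integral_const_mul]
  refine integral_congr_ae (Eventually.of_forall fun t => ?_)
  have hexp : exp (M * t) = exp ((M + K) * t) * exp (-(K * t)) := by
    rw [← exp_add]
    ring_nf
  simp only [prolongedFlow, smul_apply, ContinuousLinearMap.comp_apply, map_smul, smul_eq_mul, hexp]
  field_simp

end IsLinearization

-- The derivative of such an integral is again an integral of the same kind, for the prolonged
-- semiflow on `E × E`; this is why the induction generalizes the space.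
theorem contDiffOn_integral_along_semiflow.{u} (k : ℕ) :
    ∀ {E : Type u} [NormedAddCommGroup E] [NormedSpace ℝ E] [FiniteDimensional ℝ E]
      {V : E → E} {Ω : Set E} {φ : E → ℝ → E} (_ : IsSemiflow V Ω φ) {g : E → ℝ}
      (_ : ContDiff ℝ ∞ g) (_ : DecaysAlong Ω φ g) (M : ℝ),
      ContDiffOn ℝ k (fun x => ∫ t in Ioi (0 : ℝ), exp (M * t) * g (φ x t)) Ω := by
  induction k with
  | zero =>
    intro E _ _ _ V Ω φ h g hg hd M
    have : CompleteSpace E := FiniteDimensional.complete ℝ E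
    obtain ⟨K, Y, hY⟩ := h.exists_isLinearization
    exact contDiffOn_zero.2 fun x hx => (hY.hasFDerivAt_integral h (contDiff_infty.1 hg 1) hd M
      hx).continuousAt.continuousWithinAt
  | succ k ih =>
    intro E _ _ _ V Ω φ h g hg hd M
    have : CompleteSpace E := FiniteDimensional.complete ℝ E
    have hg1 : ContDiff ℝ 1 g := contDiff_infty.1 hg 1
    obtain ⟨K, Y, hY⟩ := h.exists_isLinearization
    rw [Nat.cast_add, Nat.cast_one, contDiffOn_succ_iff_fderiv_of_isOpen h.isOpen]
    refine ⟨fun x hx => (hY.hasFDerivAt_integral h hg1 hd M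
      hx).differentiableAt.differentiableWithinAt, by simp, contDiffOn_clm_apply.2 fun y => ?_⟩
    obtain ⟨c, hyc⟩ := exists_gt ‖y‖
    have hc : 0 < c := (norm_nonneg y).trans_lt hyc
    have hy : c⁻¹ • y ∈ Metric.ball (0 : E) 1 := by
      rwa [mem_ball_zero_iff, norm_smul, norm_inv, Real.norm_of_nonneg hc.le,
        inv_mul_lt_iff₀ hc, mul_one]
    have hprolonged := ih (hY.isSemiflow_prolongedFlow h) (contDiff_fderiv_apply hg)
      (hY.decaysAlong_prolongedFlow h hg hd) (M + K)
    exact (contDiffOn_const.mul (hprolonged.comp (contDiff_id.prodMk contDiff_const).contDiffOn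
      fun x hx => ⟨hx, hy⟩)).congr
      fun x hx => hY.fderiv_integral_apply h hg1 hd M hc.ne' y hx

end FlowIntegral

section FlowEquation

open MeasureTheory Real Set

theorem setIntegral_Ioi_comp_add_right {G : Type*} [NormedAddCommGroup G] [NormedSpace ℝ G]
    (f : ℝ → G) (s : ℝ) : ∫ t in Ioi (0 : ℝ), f (t + s) = ∫ t in Ioi s, f t := by
  simpa using (measurePreserving_add_right volume s).setIntegral_preimage_emb
    (measurableEmbedding_addRight s) f (Ioi s)

theorem hasDerivWithinAt_setIntegral_Ioi {G : Type*} [NormedAddCommGroup G] [NormedSpace ℝ G]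
    [CompleteSpace G] {u : ℝ → G} {a : ℝ} (hu : ContinuousOn u (Ici a))
    (hint : IntegrableOn u (Ioi a)) :
    HasDerivWithinAt (fun s => ∫ t in Ioi s, u t) (-u a) (Ici a) a := by
  have hderiv : HasDerivWithinAt (fun s => ∫ t in a..s, u t) (u a) (Ici a) a :=
    intervalIntegral.integral_hasDerivWithinAt_right IntervalIntegrable.refl
      ⟨Ioi a, self_mem_nhdsWithin, hint.aestronglyMeasurable⟩
      ((hu a self_mem_Ici).mono Ioi_subset_Ici_self)
  refine (hderiv.const_sub (∫ t in Ioi a, u t)).congr (fun s hs => ?_) (by simp)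
  rw [← intervalIntegral.integral_Ioi_sub_Ioi hint hs, sub_sub_cancel]

variable {E : Type*} [NormedAddCommGroup E] [NormedSpace ℝ E]
  {V : E → E} {Ω : Set E} {φ : E → ℝ → E} {g : E → ℝ}

namespace IsSemiflow

theorem eq_of_hasDerivAt (h : IsSemiflow V Ω φ) {x : E} (hx : x ∈ Ω) {γ : ℝ → E} (h0 : γ 0 = x)
    (hm : ∀ t, 0 ≤ t → γ t ∈ Ω) (hγ : ∀ t, 0 ≤ t → HasDerivAt γ (V (γ t)) t) {t : ℝ}
    (ht : 0 ≤ t) : γ t = φ x t := by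
  obtain ⟨K, hK⟩ := h.exists_norm_fderiv_le
  exact ODE_solution_unique_of_mem_Icc_right (v := fun _ => V) (s := fun _ => Ω) (K := K)
    (fun _ _ => h.lipschitzOnWith hK)
    (fun s hs => (hγ s hs.1).continuousAt.continuousWithinAt)
    (fun s hs => (hγ s hs.1).hasDerivWithinAt) (fun s hs => hm s hs.1)
    ((h.continuousOn hx).mono fun s hs => hs.1)
    (fun s hs => (h.hasDerivAt x hx s hs.1).hasDerivWithinAt) (fun s hs => h.mem x hx s hs.1)
    (h0.trans (h.apply_zero x hx).symm) ⟨ht, le_rfl⟩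

theorem add_apply (h : IsSemiflow V Ω φ) {x : E} (hx : x ∈ Ω) {s t : ℝ} (hs : 0 ≤ s)
    (ht : 0 ≤ t) : φ x (t + s) = φ (φ x s) t :=
  h.eq_of_hasDerivAt (h.mem x hx s hs) (γ := fun t => φ x (t + s)) (by simp)
    (fun t ht => h.mem x hx _ (add_nonneg ht hs))
    (fun t ht => (h.hasDerivAt x hx _ (add_nonneg ht hs)).comp_add_const t s) ht

theorem eq_self_of_eq_zero (h : IsSemiflow V Ω φ) {x : E} (hx : x ∈ Ω) (h0 : V x = 0) {t : ℝ}
    (ht : 0 ≤ t) : φ x t = x :=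
  (h.eq_of_hasDerivAt hx (γ := fun _ => x) rfl (fun _ _ => hx)
    (fun t _ => h0 ▸ hasDerivAt_const t x) ht).symm

theorem integral_apply_eq (h : IsSemiflow V Ω φ) {x : E} (hx : x ∈ Ω) {s : ℝ} (hs : 0 ≤ s) :
    ∫ t in Ioi (0 : ℝ), g (φ (φ x s) t) = ∫ t in Ioi s, g (φ x t) := by
  rw [← setIntegral_Ioi_comp_add_right fun t => g (φ x t)]
  exact setIntegral_congr_fun measurableSet_Ioi fun t ht =>
    congrArg g (h.add_apply hx hs (le_of_lt ht)).symm

theorem fderiv_apply_eq_neg_of_integral (h : IsSemiflow V Ω φ) (hg : Continuous g)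
    (hd : DecaysAlong Ω φ g) {x : E} (hx : x ∈ Ω)
    (hf : DifferentiableAt ℝ (fun x => ∫ t in Ioi (0 : ℝ), g (φ x t)) x) :
    fderiv ℝ (fun x => ∫ t in Ioi (0 : ℝ), g (φ x t)) x (V x) = -g x := by
  have horbit : HasDerivAt (fun s => ∫ t in Ioi (0 : ℝ), g (φ (φ x s) t))
      (fderiv ℝ (fun x => ∫ t in Ioi (0 : ℝ), g (φ x t)) x (V x)) 0 := by
    have h0 := h.hasDerivAt x hx 0 le_rfl
    rw [h.apply_zero x hx] at h0
    exact hf.hasFDerivAt.comp_hasDerivAt_of_eq 0 h0 (h.apply_zero x hx).symm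
  have hint : IntegrableOn (fun t => g (φ x t)) (Ioi 0) := by
    simpa using h.integrableOn_exp_mul hg hd 0 hx
  have htail := hasDerivWithinAt_setIntegral_Ioi (hg.comp_continuousOn (h.continuousOn hx)) hint
  rw [Function.comp_apply, h.apply_zero x hx] at htail
  exact (uniqueDiffOn_Ici (0 : ℝ) 0 self_mem_Ici).eq_deriv _ horbit.hasDerivWithinAt
    (htail.congr (fun s hs => h.integral_apply_eq hx hs) (h.integral_apply_eq hx le_rfl))

theorem exists_fderiv_apply_eq_neg [FiniteDimensional ℝ E] (h : IsSemiflow V univ φ)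
    (hg : ContDiff ℝ ∞ g) (hd : DecaysAlong univ φ g) :
    ∃ f : E → ℝ, ContDiff ℝ ∞ f ∧ (∀ x, fderiv ℝ f x (V x) = -g x) ∧
      ∀ x, V x = 0 → g x = 0 → f x = 0 := by
  have hf : ContDiff ℝ ∞ fun x => ∫ t in Ioi (0 : ℝ), g (φ x t) := contDiff_infty.2 fun k => by
    simpa using contDiffOn_univ.1 (contDiffOn_integral_along_semiflow k h hg hd 0)
  refine ⟨_, hf, fun x => h.fderiv_apply_eq_neg_of_integral hg.continuous hd (mem_univ x)
    (hf.differentiable (by simp) x), fun x hV hgx => ?_⟩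
  refine setIntegral_eq_zero_of_forall_eq_zero fun t ht => ?_
  rw [h.eq_self_of_eq_zero (mem_univ x) hV (le_of_lt ht), hgx]

end IsSemiflow

end FlowEquation

section Flat

open Set

variable {E X F : Type*} [NormedAddCommGroup E] [NormedSpace ℝ E]
  [NormedAddCommGroup X] [NormedSpace ℝ X] [NormedAddCommGroup F] [NormedSpace ℝ F]
  {p : E →L[ℝ] X}

theorem exists_norm_iteratedFDeriv_le_of_hasCompactSupport {u : E → F} (hu : ContDiff ℝ ∞ u)
    (hc : HasCompactSupport u) (j : ℕ) : ∃ C, ∀ e, ‖iteratedFDeriv ℝ j u e‖ ≤ C :=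
  (hu.continuous_iteratedFDeriv (m := j) (mod_cast le_top)).bounded_above_of_compact_support
    (hc.iteratedFDeriv j)

theorem mul_norm_fderiv_apply_le {u : E → F} (hu : ContDiff ℝ 2 u) {B : ℝ}
    (hB : ∀ e, ‖iteratedFDeriv ℝ 2 u e‖ ≤ B) (e : E) {y : E} (hy : ‖y‖ = 1) {r : ℝ} (hr : 0 ≤ r) :
    r * ‖fderiv ℝ u e y‖ ≤ ‖u (e + r • y)‖ + ‖u e‖ + B * r ^ 2 := by
  have htaylor := norm_sub_sub_fderiv_le_of_convex hu convex_univ (fun x _ => hB x) (mem_univ e)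
    (mem_univ (e + r • y))
  rw [add_sub_cancel_left, map_smul, norm_smul, hy, mul_one, Real.norm_of_nonneg hr] at htaylor
  calc r * ‖fderiv ℝ u e y‖ = ‖r • fderiv ℝ u e y‖ := by rw [norm_smul, Real.norm_of_nonneg hr]
    _ = ‖u (e + r • y) - u e - (u (e + r • y) - u e - r • fderiv ℝ u e y)‖ := by abel_nf
    _ ≤ ‖u (e + r • y)‖ + ‖u e‖ + B * r ^ 2 := by grw [norm_sub_le, norm_sub_le, htaylor]

theorem norm_map_add_pow_smul_le (p : E →L[ℝ] X) {e y : E} (hy : ‖y‖ = 1) {s : ℝ}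
    (hs : s ∈ Ioc ‖p e‖ 1) {N : ℕ} (hN : N ≠ 0) :
    ‖p (e + s ^ N • y)‖ ≤ (1 + ‖p‖) * s := by
  have hs0 : 0 ≤ s := (norm_nonneg _).trans hs.1.le
  have hpy : ‖p y‖ ≤ ‖p‖ := by simpa [hy] using p.le_opNorm y
  rw [map_add, map_smul]
  grw [norm_add_le, norm_smul, Real.norm_of_nonneg (pow_nonneg hs0 N), hpy, hs.1.le,
    pow_le_of_le_one hs0 hs.2 hN]
  linarith

theorem norm_fderiv_le_mul_pow_of_norm_le {u : E → F} (hu : ContDiff ℝ 2 u) {B C : ℝ}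
    (hB : ∀ e, ‖iteratedFDeriv ℝ 2 u e‖ ≤ B) {N : ℕ} (hN : N ≠ 0) (hC0 : 0 ≤ C)
    (hC : ∀ e, ‖u e‖ ≤ C * ‖p e‖ ^ (2 * N)) {e : E} {s : ℝ} (hs : s ∈ Ioc ‖p e‖ 1) :
    ‖fderiv ℝ u e‖ ≤ (C * (1 + ‖p‖) ^ (2 * N) + C + B) * s ^ N := by
  have hs0 : 0 < s := (norm_nonneg _).trans_lt hs.1
  have hB0 : 0 ≤ B := (norm_nonneg _).trans (hB e)
  refine ContinuousLinearMap.opNorm_le_of_unit_norm (by positivity) fun y hy => ?_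
  refine le_of_mul_le_mul_left ?_ (pow_pos hs0 N)
  calc s ^ N * ‖fderiv ℝ u e y‖
      ≤ ‖u (e + s ^ N • y)‖ + ‖u e‖ + B * (s ^ N) ^ 2 :=
        mul_norm_fderiv_apply_le hu hB e hy (by positivity)
    _ ≤ C * ((1 + ‖p‖) * s) ^ (2 * N) + C * s ^ (2 * N) + B * (s ^ N) ^ 2 := by
        grw [hC, hC, norm_map_add_pow_smul_le p hy hs hN, hs.1.le]
    _ = s ^ N * ((C * (1 + ‖p‖) ^ (2 * N) + C + B) * s ^ N) := by
        rw [mul_pow]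
        ring

-- Interpolation: a difference quotient with step `‖p e‖ ^ N` balances the bound on `u` against
-- the bound on its second derivative.
theorem exists_norm_fderiv_le_of_norm_le {u : E → F} (hu : ContDiff ℝ ∞ u)
    (hc : HasCompactSupport u) {N : ℕ} {C : ℝ} (hC0 : 0 ≤ C)
    (hC : ∀ e, ‖u e‖ ≤ C * ‖p e‖ ^ (2 * N)) : ∃ C', ∀ e, ‖fderiv ℝ u e‖ ≤ C' * ‖p e‖ ^ N := by
  obtain ⟨B₁, hB₁⟩ := exists_norm_iteratedFDeriv_le_of_hasCompactSupport hu hc 1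
  obtain ⟨B₂, hB₂⟩ := exists_norm_iteratedFDeriv_le_of_hasCompactSupport hu hc 2
  simp only [norm_iteratedFDeriv_one] at hB₁
  rcases eq_or_ne N 0 with rfl | hN
  · exact ⟨B₁, fun e => by simpa using hB₁ e⟩
  set A := C * (1 + ‖p‖) ^ (2 * N) + C + B₂
  refine ⟨max A B₁, fun e => ?_⟩
  rcases le_or_gt 1 ‖p e‖ with hfar | hnear
  · have hB₁0 : 0 ≤ B₁ := (norm_nonneg _).trans (hB₁ e)
    calc ‖fderiv ℝ u e‖ ≤ B₁ * 1 := by rw [mul_one]; exact hB₁ e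
      _ ≤ max A B₁ * ‖p e‖ ^ N := by
        gcongr
        · exact le_max_right A B₁
        · exact one_le_pow₀ hfar
  · have hlim : Tendsto (fun s : ℝ => A * s ^ N) (𝓝[>] ‖p e‖) (𝓝 (A * ‖p e‖ ^ N)) :=
      ((by fun_prop : Continuous fun s : ℝ => A * s ^ N).tendsto _).mono_left nhdsWithin_le_nhds
    have hA : ‖fderiv ℝ u e‖ ≤ A * ‖p e‖ ^ N := ge_of_tendsto hlim <| by
      filter_upwards [Ioc_mem_nhdsGT hnear] with s hs
      exact norm_fderiv_le_mul_pow_of_norm_le (mod_cast contDiff_infty.1 hu 2) hB₂ hN hC0 hC hs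
    grw [hA, ← le_max_left]

/-- Compactly supported smooth functions vanishing to infinite order on the kernel of `p`. -/
structure IsFlat (p : E →L[ℝ] X) (g : E → F) : Prop where
  smooth : ContDiff ℝ ∞ g
  compact : HasCompactSupport g
  decay : ∀ N : ℕ, ∃ C, ∀ e, ‖g e‖ ≤ C * ‖p e‖ ^ N

namespace IsFlat

variable {g : E → F}

theorem eq_zero (hg : IsFlat p g) {e : E} (he : p e = 0) : g e = 0 := by
  obtain ⟨C, hC⟩ := hg.decay 1
  simpa [he] using hC e

theorem exists_nonneg_norm_le (hg : IsFlat p g) (N : ℕ) :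
    ∃ C, 0 ≤ C ∧ ∀ e, ‖g e‖ ≤ C * ‖p e‖ ^ N := by
  obtain ⟨C, hC⟩ := hg.decay N
  exact ⟨|C|, abs_nonneg C, fun e => by grw [hC e, ← le_abs_self]⟩

protected theorem fderiv (hg : IsFlat p g) : IsFlat p (fderiv ℝ g) where
  smooth := hg.smooth.fderiv_right (by simp)
  compact := hg.compact.fderiv ℝ
  decay N := by
    obtain ⟨C, hC0, hC⟩ := hg.exists_nonneg_norm_le (2 * N)
    exact exists_norm_fderiv_le_of_norm_le hg.smooth hg.compact hC0 hC

protected theorem iteratedFDeriv (hg : IsFlat p g) (j : ℕ) : IsFlat p (iteratedFDeriv ℝ j g) where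
  smooth := hg.smooth.iteratedFDeriv_right (mod_cast le_top)
  compact := hg.compact.iteratedFDeriv j
  decay := by
    induction j with
    | zero => simpa only [norm_iteratedFDeriv_zero] using hg.decay
    | succ j ih =>
      have hj : IsFlat p (iteratedFDeriv ℝ j g) :=
        ⟨hg.smooth.iteratedFDeriv_right (mod_cast le_top), hg.compact.iteratedFDeriv j, ih⟩
      simpa only [norm_fderiv_iteratedFDeriv] using hj.fderiv.decay

theorem of_norm_le {G : Type*} [NormedAddCommGroup G] [NormedSpace ℝ G] {f : E → G}
    (hg : IsFlat p g) (hf : ContDiff ℝ ∞ f) (h : ∀ e, ‖f e‖ ≤ ‖g e‖) : IsFlat p f where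
  smooth := hf
  compact := hg.compact.mono fun e he h0 => he (norm_le_zero_iff.1 ((h e).trans (by simp [h0])))
  decay N := (hg.decay N).imp fun _ hC e => (h e).trans (hC e)

end IsFlat

end Flat

section Homogeneous

variable {E X F G : Type*} [NormedAddCommGroup E] [NormedSpace ℝ E] [NormedAddCommGroup X]
  [NormedSpace ℝ X] [NormedAddCommGroup F] [NormedSpace ℝ F] [NormedAddCommGroup G]
  [NormedSpace ℝ G] {p : E →L[ℝ] X} {d : ℕ}

/-- Functions which are smooth away from the origin and positively homogeneous of degree `-d`. -/
structure IsHomogeneousOff (d : ℕ) (Q : X → G) : Prop where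
  smooth : ∀ x, x ≠ 0 → ContDiffAt ℝ ∞ Q x
  homogeneous : ∀ c : ℝ, 0 < c → ∀ x, x ≠ 0 → c ^ d • Q (c • x) = Q x

namespace IsHomogeneousOff

theorem fderiv_apply {Q : X → G} (h : IsHomogeneousOff d Q) (w : X) :
    IsHomogeneousOff (d + 1) (fun x => fderiv ℝ Q x w) where
  smooth x hx := ((h.smooth x hx).fderiv_right (m := ∞) (by simp)).clm_apply contDiffAt_const
  homogeneous c hc x hx := by
    have hscale : (fun y => c ^ d • Q (c • y)) =ᶠ[𝓝 x] Q := by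
      filter_upwards [isOpen_ne.mem_nhds hx] with y hy
      exact h.homogeneous c hc y hy
    have hQ : HasFDerivAt Q (fderiv ℝ Q (c • x)) (c • x) :=
      ((h.smooth (c • x) (smul_ne_zero hc.ne' hx)).differentiableAt (by simp)).hasFDerivAt
    have hderiv : HasFDerivAt (fun y => c ^ d • Q (c • y)) _ x :=
      (hQ.comp x ((hasFDerivAt_id x).const_smul c)).const_smul (c ^ d)
    rw [← hscale.fderiv_eq, hderiv.fderiv]
    simp [smul_smul, pow_succ]

theorem exists_norm_mul_pow_le [FiniteDimensional ℝ X] {Q : X → G} (h : IsHomogeneousOff d Q) :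
    ∃ C, ∀ x, x ≠ 0 → ‖Q x‖ * ‖x‖ ^ d ≤ C := by
  have : ProperSpace X := FiniteDimensional.proper ℝ X
  obtain ⟨C, hC⟩ := (isCompact_sphere (0 : X) 1).exists_bound_of_continuousOn (f := Q)
    fun x hx => (h.smooth x fun h0 => by simp [h0] at hx).continuousAt.continuousWithinAt
  refine ⟨C, fun x hx => ?_⟩
  have hx0 : 0 < ‖x‖ := norm_pos_iff.2 hx
  rw [← h.homogeneous ‖x‖⁻¹ (by positivity) x hx, norm_smul, norm_pow, norm_inv, norm_norm]
  calc ‖x‖⁻¹ ^ d * ‖Q (‖x‖⁻¹ • x)‖ * ‖x‖ ^ d = ‖Q (‖x‖⁻¹ • x)‖ * (‖x‖⁻¹ * ‖x‖) ^ d := by ring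
    _ = ‖Q (‖x‖⁻¹ • x)‖ := by rw [inv_mul_cancel₀ hx0.ne', one_pow, mul_one]
    _ ≤ C := hC _ (by simp [norm_smul, hx0.ne'])

end IsHomogeneousOff

theorem hasFDerivAt_zero_of_norm_le_mul_norm_map_sq {f : E → F} {C : ℝ}
    (hf : ∀ e, ‖f e‖ ≤ C * ‖p e‖ ^ 2) {e : E} (he : p e = 0) :
    HasFDerivAt f (0 : E →L[ℝ] F) e := by
  have hfe : f e = 0 := by simpa [he] using hf e
  have hp : (fun z => p z) =O[𝓝 e] fun z => z - e := by
    simpa only [map_sub, he, sub_zero] using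
      (p.isBigO_comp (fun z => z - e) (𝓝 e) : (fun z => p (z - e)) =O[𝓝 e] _)
  have hO : f =O[𝓝 e] fun z => ‖z - e‖ ^ 2 :=
    (Asymptotics.IsBigO.of_bound C (Eventually.of_forall fun z => by simpa using hf z)).trans
      (hp.norm_norm.pow 2)
  refine .of_isLittleO ?_
  simpa [hfe] using hO.trans_isLittleO (Asymptotics.isLittleO_pow_sub_sub e one_lt_two)

namespace IsFlat

theorem fderiv_apply {g : E → F} (hg : IsFlat p g) (v : E) :
    IsFlat p (fun e => fderiv ℝ g e v) where
  smooth := hg.fderiv.smooth.clm_apply contDiff_const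
  compact := hg.compact.fderiv_apply ℝ v
  decay N := by
    obtain ⟨C, hC⟩ := hg.fderiv.decay N
    refine ⟨C * ‖v‖, fun e => ?_⟩
    grw [ContinuousLinearMap.le_opNorm, hC e]
    exact (mul_right_comm _ _ _).le

variable [FiniteDimensional ℝ X] {Q : X → ℝ} {g : E → F}

theorem exists_norm_smul_le_sq (hg : IsFlat p g) (hQ : IsHomogeneousOff d Q) :
    ∃ C, ∀ e, ‖Q (p e) • g e‖ ≤ C * ‖p e‖ ^ 2 := by
  obtain ⟨A, hA⟩ := hQ.exists_norm_mul_pow_le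
  obtain ⟨C, hC0, hC⟩ := hg.exists_nonneg_norm_le (d + 2)
  refine ⟨A * C, fun e => ?_⟩
  by_cases he : p e = 0
  · simp [he, hg.eq_zero he]
  calc ‖Q (p e) • g e‖ ≤ ‖Q (p e)‖ * (C * ‖p e‖ ^ (d + 2)) := by
        rw [norm_smul]
        gcongr
        exact hC e
    _ = ‖Q (p e)‖ * ‖p e‖ ^ d * C * ‖p e‖ ^ 2 := by ring
    _ ≤ A * C * ‖p e‖ ^ 2 := by grw [hA _ he]

theorem hasFDerivAt_smul (hg : IsFlat p g) (hQ : IsHomogeneousOff d Q) (e : E) :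
    HasFDerivAt (fun e => Q (p e) • g e)
      (Q (p e) • fderiv ℝ g e + ((fderiv ℝ Q (p e)).comp p).smulRight (g e)) e := by
  by_cases he : p e = 0
  · obtain ⟨C, hC⟩ := hg.exists_norm_smul_le_sq hQ
    simpa [hg.eq_zero he, hg.fderiv.eq_zero he] using
      hasFDerivAt_zero_of_norm_le_mul_norm_map_sq hC he
  · exact (((hQ.smooth _ he).differentiableAt (by simp)).hasFDerivAt.comp e p.hasFDerivAt).fun_smul
      (hg.smooth.differentiable (by simp) e).hasFDerivAt

theorem contDiff_smul [FiniteDimensional ℝ E] (hg : IsFlat p g) (hQ : IsHomogeneousOff d Q) :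
    ContDiff ℝ ∞ (fun e => Q (p e) • g e) := by
  refine contDiff_infty.2 fun k => ?_
  induction k generalizing d Q g with
  | zero =>
    exact contDiff_zero.2 (continuous_iff_continuousAt.2 fun e =>
      (hg.hasFDerivAt_smul hQ e).continuousAt)
  | succ k ih =>
    rw [Nat.cast_add, Nat.cast_one, contDiff_succ_iff_fderiv_apply]
    refine ⟨fun e => (hg.hasFDerivAt_smul hQ e).differentiableAt, by simp, fun v => ?_⟩
    simp only [(hg.hasFDerivAt_smul hQ _).fderiv]
    exact (ih (hg.fderiv_apply v) hQ).add (ih hg (hQ.fderiv_apply (p v)))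

end IsFlat

/-- A cutoff equal to `1` near the plane `b = 0` and to `0` near the plane `a = 0`, homogeneous of
degree `0`. Its value at common zeros of `a` and `b` is irrelevant. -/
noncomputable def sectorCutoff (a b : X →L[ℝ] ℝ) (x : X) : ℝ :=
  Real.smoothTransition (3 * (a x ^ 2 / (a x ^ 2 + b x ^ 2)) - 1)

section SectorCutoff

variable {a b : X →L[ℝ] ℝ}

theorem sectorCutoff_eq_zero {x : X} (hx : 2 * a x ^ 2 < b x ^ 2) : sectorCutoff a b x = 0 := by
  refine Real.smoothTransition.zero_of_nonpos ?_
  have hpos : 0 < a x ^ 2 + b x ^ 2 := by nlinarith [sq_nonneg (a x)]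
  rw [sub_nonpos, ← mul_div_assoc, div_le_one hpos]
  linarith

theorem sectorCutoff_eq_one {x : X} (hx : 2 * b x ^ 2 < a x ^ 2) : sectorCutoff a b x = 1 := by
  refine Real.smoothTransition.one_of_one_le ?_
  have hpos : 0 < a x ^ 2 + b x ^ 2 := by nlinarith [sq_nonneg (b x)]
  rw [le_sub_iff_add_le, ← mul_div_assoc, le_div_iff₀ hpos]
  linarith

theorem isHomogeneousOff_sectorCutoff (hab : ∀ x, a x = 0 → b x = 0 → x = 0) :
    IsHomogeneousOff 0 (sectorCutoff a b) where
  smooth x hx := by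
    have hne : a x ^ 2 + b x ^ 2 ≠ 0 := fun h => hx <| hab x
      (pow_eq_zero_iff two_ne_zero |>.1 (by nlinarith [sq_nonneg (a x), sq_nonneg (b x)]))
      (pow_eq_zero_iff two_ne_zero |>.1 (by nlinarith [sq_nonneg (a x), sq_nonneg (b x)]))
    have ha : ContDiffAt ℝ ∞ (fun x => a x ^ 2) x := (a.contDiff.pow 2).contDiffAt
    have hb : ContDiffAt ℝ ∞ (fun x => b x ^ 2) x := (b.contDiff.pow 2).contDiffAt
    exact Real.smoothTransition.contDiff.contDiffAt.comp x
      ((contDiffAt_const.mul (ha.div (ha.add hb) hne)).sub contDiffAt_const)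
  homogeneous c hc x _ := by
    simp only [sectorCutoff, pow_zero, one_mul, map_smul, smul_eq_mul, mul_pow, ← mul_add]
    rw [mul_div_mul_left _ _ (pow_pos hc 2).ne']

end SectorCutoff

theorem IsFlat.exists_add_eq [FiniteDimensional ℝ E] [FiniteDimensional ℝ X] {g : E → F}
    (hg : IsFlat p g) {a b : X →L[ℝ] ℝ} (hab : ∀ x, a x = 0 → b x = 0 → x = 0) :
    ∃ g₁ g₂ : E → F, IsFlat p g₁ ∧ IsFlat p g₂ ∧ (∀ e, g₁ e + g₂ e = g e) ∧
      (∀ e, g₁ e ≠ 0 → b (p e) ^ 2 ≤ 2 * a (p e) ^ 2) ∧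
      (∀ e, g₂ e ≠ 0 → a (p e) ^ 2 ≤ 2 * b (p e) ^ 2) := by
  set Q := sectorCutoff a b
  have hQ0 : ∀ x, 0 ≤ Q x := fun x => Real.smoothTransition.nonneg _
  have hQ1 : ∀ x, Q x ≤ 1 := fun x => Real.smoothTransition.le_one _
  have hsmooth := hg.contDiff_smul (isHomogeneousOff_sectorCutoff hab)
  have hcompl : ∀ e, g e - Q (p e) • g e = (1 - Q (p e)) • g e := fun e => by module
  refine ⟨fun e => Q (p e) • g e, fun e => g e - Q (p e) • g e, hg.of_norm_le hsmooth fun e => ?_,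
    hg.of_norm_le (hg.smooth.sub hsmooth) fun e => ?_, fun e => by module, fun e he => ?_,
    fun e he => ?_⟩
  · rw [norm_smul, Real.norm_of_nonneg (hQ0 _)]
    exact mul_le_of_le_one_left (norm_nonneg _) (hQ1 _)
  · rw [hcompl, norm_smul, Real.norm_of_nonneg (sub_nonneg.2 (hQ1 _))]
    exact mul_le_of_le_one_left (norm_nonneg _) (sub_le_self _ (hQ0 _))
  · by_contra! hcon
    exact he (by simp [Q, sectorCutoff_eq_zero hcon])
  · by_contra! hcon
    exact he (by simp [Q, sectorCutoff_eq_one hcon])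

end Homogeneous

section Decay

theorem le_exp_mul_of_hasDerivAt_le {f f' : ℝ → ℝ} {c T : ℝ} (hT : 0 ≤ T)
    (hf : ∀ t ∈ Set.Icc 0 T, HasDerivAt f (f' t) t)
    (h : ∀ t ∈ Set.Icc 0 T, f' t ≤ -c * f t) : f T ≤ Real.exp (-(c * T)) * f 0 := by
  have hd : ∀ t ∈ Set.Icc 0 T, HasDerivAt (fun t => Real.exp (c * t) * f t)
      (Real.exp (c * t) * (c * f t + f' t)) t := fun t ht => by
    have hexp : HasDerivAt (fun t => Real.exp (c * t)) (Real.exp (c * t) * c) t := by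
      simpa using ((hasDerivAt_id t).const_mul c).exp
    exact (hexp.fun_mul (hf t ht)).congr_deriv (by ring)
  have hanti : AntitoneOn (fun t => Real.exp (c * t) * f t) (Set.Icc 0 T) := by
    refine antitoneOn_of_hasDerivWithinAt_nonpos (convex_Icc 0 T)
      (fun t ht => (hd t ht).continuousAt.continuousWithinAt)
      (fun t ht => (hd t (interior_subset ht)).hasDerivWithinAt) fun t ht => ?_
    have := h t (interior_subset ht)
    exact mul_nonpos_of_nonneg_of_nonpos (Real.exp_pos _).le (by linarith)
  calc f T = Real.exp (-(c * T)) * (Real.exp (c * T) * f T) := by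
        rw [← mul_assoc, ← Real.exp_add, neg_add_cancel, Real.exp_zero, one_mul]
    _ ≤ Real.exp (-(c * T)) * f 0 := by
        gcongr
        simpa using hanti ⟨le_rfl, hT⟩ ⟨hT, le_rfl⟩ hT

variable {E X : Type*} [NormedAddCommGroup E] [NormedSpace ℝ E]
  [NormedAddCommGroup X] [NormedSpace ℝ X] {p : E →L[ℝ] X} {V : E → E} {φ : E → ℝ → E}

/-- A smooth vector field with bounded derivatives of positive order which vanishes on the kernel
of `p`. -/
structure IsTameField (p : E →L[ℝ] X) (V : E → E) : Prop where
  smooth : ContDiff ℝ ∞ V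
  bounded : ∀ j : ℕ, 1 ≤ j → ∃ C, ∀ x, ‖iteratedFDeriv ℝ j V x‖ ≤ C
  vanish : ∀ e, p e = 0 → V e = 0

/-- The equation `V f = -g` has a smooth solution vanishing on the kernel of `p`, for every `g`
flat along that kernel. -/
def HasFlatSolutions (p : E →L[ℝ] X) (V : E → E) : Prop :=
  ∀ g : E → ℝ, IsFlat p g → ∃ f : E → ℝ, ContDiff ℝ ∞ f ∧ (∀ x, fderiv ℝ f x (V x) = -g x) ∧
    ∀ x, p x = 0 → f x = 0

theorem HasFlatSolutions.of_neg (h : HasFlatSolutions p (-V)) : HasFlatSolutions p V := by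
  intro g hg
  obtain ⟨f, hf, hfV, hf0⟩ := h g hg
  refine ⟨-f, hf.neg, fun x => ?_, fun x hx => by simp [hf0 x hx]⟩
  simpa [fderiv_neg] using hfV x

namespace IsTameField

protected theorem neg (h : IsTameField p V) : IsTameField p (-V) where
  smooth := h.smooth.neg
  bounded j hj := by simpa [iteratedFDeriv_neg_apply] using h.bounded j hj
  vanish e he := by simp [h.vanish e he]

theorem exists_isSemiflow [CompleteSpace E] (h : IsTameField p V) :
    ∃ φ, IsSemiflow V Set.univ φ := by
  obtain ⟨C, hC⟩ := h.bounded 1 le_rfl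
  have hL : LipschitzWith C.toNNReal V :=
    lipschitzWith_of_nnnorm_fderiv_le (h.smooth.differentiable (by simp)) fun x => by
      rw [← NNReal.coe_le_coe, coe_nnnorm, ← norm_iteratedFDeriv_one]
      exact (hC x).trans (Real.le_coe_toNNReal C)
  choose φ hφ0 hφ using exists_isIntegralCurve_of_lipschitzWith (f := fun _ => V)
    (h.smooth.continuous.comp continuous_snd) (fun _ => hL) (fun _ => le_rfl)
  exact ⟨φ, convex_univ, isOpen_univ, h.smooth,
    fun j hj => (h.bounded j hj).imp fun C hC x _ => hC x, fun x _ => hφ0 x,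
    fun _ _ _ _ => Set.mem_univ _, fun x _ t _ => hφ x t⟩

theorem exists_fderiv_apply_eq_neg [FiniteDimensional ℝ E] (hV : IsTameField p V) {g : E → ℝ}
    (hg : IsFlat p g) (hd : ∀ φ, IsSemiflow V Set.univ φ → DecaysAlong Set.univ φ g) :
    ∃ f : E → ℝ, ContDiff ℝ ∞ f ∧ (∀ x, fderiv ℝ f x (V x) = -g x) ∧
      ∀ x, p x = 0 → f x = 0 := by
  have : CompleteSpace E := FiniteDimensional.complete ℝ E
  obtain ⟨φ, hφ⟩ := hV.exists_isSemiflow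
  obtain ⟨f, hf, hfV, hf0⟩ := hφ.exists_fderiv_apply_eq_neg hg.smooth (hd φ hφ)
  exact ⟨f, hf, hfV, fun x hx => hf0 x (hV.vanish x hx) (hg.eq_zero hx)⟩

end IsTameField

theorem pow_le_mul_exp_of_sq_le {y C c R t : ℝ} {m N : ℕ} (hm : N ≤ m * c) (ht : 0 ≤ t)
    (h : y ^ 2 ≤ C * Real.exp (-(c * t)) * R ^ 2) :
    y ^ (2 * m) ≤ (|C| * R ^ 2) ^ m * Real.exp (-(N * t)) := by
  rw [pow_mul]
  calc (y ^ 2) ^ m ≤ (|C| * R ^ 2 * Real.exp (-(c * t))) ^ m := by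
        gcongr
        refine h.trans ?_
        rw [mul_right_comm]
        gcongr
        exact le_abs_self C
    _ = (|C| * R ^ 2) ^ m * Real.exp (-(m * c * t)) := by
        rw [mul_pow, ← Real.exp_nat_mul]
        ring_nf
    _ ≤ (|C| * R ^ 2) ^ m * Real.exp (-(N * t)) := by gcongr

theorem IsFlat.decaysAlong {g : E → ℝ} (hg : IsFlat p g) {S : Set E} (hS : IsClosed S)
    (hgS : Function.support g ⊆ S) {C c : ℝ} (hc : 0 < c)
    (h : ∀ e t, 0 ≤ t → φ e t ∈ S → ‖p (φ e t)‖ ^ 2 ≤ C * Real.exp (-(c * t)) * ‖e‖ ^ 2) :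
    DecaysAlong Set.univ φ g := by
  intro j N R
  obtain ⟨m, hm⟩ := exists_nat_ge (N / c)
  obtain ⟨B, hB0, hB⟩ := (hg.iteratedFDeriv j).exists_nonneg_norm_le (2 * m)
  refine ⟨B * (|C| * R ^ 2) ^ m, fun e _ he t ht => ?_⟩
  by_cases hmem : φ e t ∈ S
  · refine (hB _).trans ?_
    rw [mul_assoc]
    gcongr
    refine (pow_le_mul_exp_of_sq_le ((div_le_iff₀ hc).1 hm) ht (h e t ht hmem)).trans ?_
    gcongr
  · have hz : iteratedFDeriv ℝ j g (φ e t) = 0 := image_eq_zero_of_notMem_tsupport fun hmem' =>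
      hmem (closure_minimal hgS hS (tsupport_iteratedFDeriv_subset j hmem'))
    rw [hz, norm_zero]
    have : (0 : ℝ) ≤ (|C| * R ^ 2) ^ m := by positivity
    positivity

theorem IsSemiflow.hasDerivAt_clm (hφ : IsSemiflow V Set.univ φ) (a : E →L[ℝ] ℝ) (e : E) {t : ℝ}
    (ht : 0 ≤ t) : HasDerivAt (fun t => a (φ e t)) (a (V (φ e t))) t :=
  a.hasFDerivAt.comp_hasDerivAt t (hφ.hasDerivAt e (Set.mem_univ e) t ht)

theorem IsSemiflow.hasDerivAt_sq_clm (hφ : IsSemiflow V Set.univ φ) (a : E →L[ℝ] ℝ) (e : E)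
    {t : ℝ} (ht : 0 ≤ t) :
    HasDerivAt (fun t => a (φ e t) ^ 2) (2 * a (φ e t) * a (V (φ e t))) t := by
  simpa using (hφ.hasDerivAt_clm a e ht).fun_pow 2

end Decay

section Saddle

variable {E X : Type*} [NormedAddCommGroup E] [NormedSpace ℝ E]
  [NormedAddCommGroup X] [NormedSpace ℝ X] {p : E →L[ℝ] X} {V : E → E} {φ : E → ℝ → E}
  {a b : X →L[ℝ] ℝ} {μ : ℝ}

/-- Transversally to the kernel of `p`, the field `V` contracts the coordinate `a` and expands the
coordinate `b`, up to an error which is small compared with the rate `μ`. -/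
structure IsSaddleField (p : E →L[ℝ] X) (V : E → E) (a b : X →L[ℝ] ℝ) (μ : ℝ) : Prop where
  pos : 0 < μ
  norm_sq_le : ∃ K ≥ 0, ∀ x, ‖x‖ ^ 2 ≤ K * (a x ^ 2 + b x ^ 2)
  contracting : ∀ e,
    a (p e) * a (p (V e)) ≤ -μ * a (p e) ^ 2 + μ / 6 * (a (p e) ^ 2 + b (p e) ^ 2)
  expanding : ∀ e,
    μ * b (p e) ^ 2 - μ / 6 * (a (p e) ^ 2 + b (p e) ^ 2) ≤ b (p e) * b (p (V e))

namespace IsSaddleField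

theorem neg (h : IsSaddleField p V a b μ) : IsSaddleField p (-V) b a μ where
  pos := h.pos
  norm_sq_le := by simpa only [add_comm] using h.norm_sq_le
  contracting e := by
    have := h.expanding e
    simp only [Pi.neg_apply, map_neg]
    linarith
  expanding e := by
    have := h.contracting e
    simp only [Pi.neg_apply, map_neg]
    linarith

theorem eq_zero (h : IsSaddleField p V a b μ) {x : X} (ha : a x = 0) (hb : b x = 0) : x = 0 := by
  obtain ⟨K, -, hK⟩ := h.norm_sq_le
  simpa [ha, hb] using hK x

theorem mem_cone_of_mem_cone (h : IsSaddleField p V a b μ) (hφ : IsSemiflow V Set.univ φ) {e : E}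
    {t T : ℝ} (ht : t ∈ Set.Icc 0 T) (hT : b (p (φ e T)) ^ 2 ≤ 2 * a (p (φ e T)) ^ 2) :
    b (p (φ e t)) ^ 2 ≤ 2 * a (p (φ e t)) ^ 2 := by
  have hd := fun s (hs : 0 ≤ s) =>
    (hφ.hasDerivAt_sq_clm (b.comp p) e hs).fun_sub
      ((hφ.hasDerivAt_sq_clm (a.comp p) e hs).const_mul 2)
  have hmono : MonotoneOn (fun t => b (p (φ e t)) ^ 2 - 2 * a (p (φ e t)) ^ 2) (Set.Ici 0) := by
    refine monotoneOn_of_hasDerivWithinAt_nonneg (convex_Ici 0)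
      (fun s hs => (hd s hs).continuousAt.continuousWithinAt)
      (fun s hs => (hd s (interior_subset hs)).hasDerivWithinAt) fun s _ => ?_
    simp only [ContinuousLinearMap.comp_apply]
    nlinarith [h.contracting (φ e s), h.expanding (φ e s), h.pos,
      mul_nonneg h.pos.le (sq_nonneg (a (p (φ e s)))),
      mul_nonneg h.pos.le (sq_nonneg (b (p (φ e s))))]
  have := hmono ht.1 (ht.1.trans ht.2) ht.2
  simp only at this
  linarith

theorem sq_le_exp_mul (h : IsSaddleField p V a b μ) (hφ : IsSemiflow V Set.univ φ) {e : E} {T : ℝ}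
    (hT0 : 0 ≤ T) (hT : b (p (φ e T)) ^ 2 ≤ 2 * a (p (φ e T)) ^ 2) :
    a (p (φ e T)) ^ 2 ≤ Real.exp (-(μ * T)) * a (p e) ^ 2 := by
  rw [← congrArg (fun x => a (p x) ^ 2) (hφ.apply_zero e (Set.mem_univ e))]
  refine le_exp_mul_of_hasDerivAt_le hT0 (fun t ht => hφ.hasDerivAt_sq_clm (a.comp p) e ht.1)
    fun t ht => ?_
  simp only [ContinuousLinearMap.comp_apply]
  nlinarith [h.contracting (φ e t),
    mul_le_mul_of_nonneg_left (h.mem_cone_of_mem_cone hφ ht hT) h.pos.le]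

theorem decaysAlong {g : E → ℝ} (h : IsSaddleField p V a b μ) (hφ : IsSemiflow V Set.univ φ)
    (hg : IsFlat p g) (hsupp : ∀ e, g e ≠ 0 → b (p e) ^ 2 ≤ 2 * a (p e) ^ 2) :
    DecaysAlong Set.univ φ g := by
  obtain ⟨K, hK0, hK⟩ := h.norm_sq_le
  have hS : IsClosed {e | b (p e) ^ 2 ≤ 2 * a (p e) ^ 2} := isClosed_le (by fun_prop) (by fun_prop)
  refine hg.decaysAlong hS hsupp (C := 3 * K * ‖a.comp p‖ ^ 2) h.pos fun e T hT hmem => ?_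
  have hcone : b (p (φ e T)) ^ 2 ≤ 2 * a (p (φ e T)) ^ 2 := hmem
  have hinit : a (p e) ^ 2 ≤ (‖a.comp p‖ * ‖e‖) ^ 2 := by
    rw [← sq_abs]
    gcongr
    exact (a.comp p).le_opNorm e
  calc ‖p (φ e T)‖ ^ 2 ≤ K * (a (p (φ e T)) ^ 2 + b (p (φ e T)) ^ 2) := hK _
    _ ≤ K * (a (p (φ e T)) ^ 2 + 2 * a (p (φ e T)) ^ 2) := by gcongr
    _ = 3 * K * a (p (φ e T)) ^ 2 := by ring
    _ ≤ 3 * K * (Real.exp (-(μ * T)) * (‖a.comp p‖ * ‖e‖) ^ 2) := by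
      grw [h.sq_le_exp_mul hφ hT hcone, hinit]
    _ = 3 * K * ‖a.comp p‖ ^ 2 * Real.exp (-(μ * T)) * ‖e‖ ^ 2 := by ring

-- The part of `g` supported near `b = 0` decays forward in time, the other part backward.
theorem hasFlatSolutions [FiniteDimensional ℝ E] [FiniteDimensional ℝ X]
    (h : IsSaddleField p V a b μ) (hV : IsTameField p V) : HasFlatSolutions p V := by
  intro g hg
  obtain ⟨g₁, g₂, hg₁, hg₂, hsum, hs₁, hs₂⟩ := hg.exists_add_eq fun x => h.eq_zero (x := x)
  obtain ⟨f₁, hf₁, hd₁, hz₁⟩ := hV.exists_fderiv_apply_eq_neg hg₁ fun φ hφ =>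
    h.decaysAlong hφ hg₁ hs₁
  obtain ⟨f₂, hf₂, hd₂, hz₂⟩ := hV.neg.exists_fderiv_apply_eq_neg hg₂ fun φ hφ =>
    h.neg.decaysAlong hφ hg₂ hs₂
  refine ⟨fun x => f₁ x - f₂ x, hf₁.sub hf₂, fun x => ?_, fun x hx => by
    simp only [hz₁ x hx, hz₂ x hx, sub_zero]⟩
  have hneg : fderiv ℝ f₂ x (V x) = g₂ x := by simpa using hd₂ x
  rw [fderiv_fun_sub (hf₁.differentiable (by simp) x) (hf₂.differentiable (by simp) x),
    sub_apply, hd₁, hneg, ← hsum]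
  ring

end IsSaddleField

theorem abs_map_mul_map_sub_le (c : X →L[ℝ] ℝ) {A : X →L[ℝ] X} {ν ε : ℝ} {x y : X}
    (hc : c (A x) = ν * c x) (hxy : ‖y - A x‖ ≤ ε * ‖x‖) :
    |c x * c y - ν * c x ^ 2| ≤ ‖c‖ ^ 2 * ε * ‖x‖ ^ 2 := by
  calc |c x * c y - ν * c x ^ 2| = |c x| * |c (y - A x)| := by
        rw [← abs_mul, map_sub, hc]
        ring_nf
    _ ≤ (‖c‖ * ‖x‖) * (‖c‖ * (ε * ‖x‖)) := by
        gcongr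
        · exact c.le_opNorm x
        · exact (c.le_opNorm _).trans (by gcongr)
    _ = ‖c‖ ^ 2 * ε * ‖x‖ ^ 2 := by ring

theorem exists_hasFlatSolutions_of_saddle [FiniteDimensional ℝ E] [FiniteDimensional ℝ X]
    (p : E →L[ℝ] X) {A : X →L[ℝ] X} {μ₁ μ₂ K : ℝ} (hμ₁ : μ₁ < 0) (hμ₂ : 0 < μ₂)
    (ha : ∀ x, a (A x) = μ₁ * a x) (hb : ∀ x, b (A x) = μ₂ * b x) (hK0 : 0 ≤ K)
    (hK : ∀ x, ‖x‖ ^ 2 ≤ K * (a x ^ 2 + b x ^ 2)) :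
    ∃ ε > 0, ∀ V, IsTameField p V → (∀ e, ‖p (V e) - A (p e)‖ ≤ ε * ‖p e‖) →
      HasFlatSolutions p V := by
  set μ := min (-μ₁) μ₂
  have hμ : 0 < μ := lt_min (neg_pos.2 hμ₁) hμ₂
  set M := 6 * (K + 1) * (‖a‖ ^ 2 + ‖b‖ ^ 2 + 1)
  have hM : 0 < M := by positivity
  refine ⟨μ / M, by positivity, fun V hV hVA => IsSaddleField.hasFlatSolutions
    (a := a) (b := b) (μ := μ) ⟨hμ, ⟨K, hK0, hK⟩, fun e => ?_, fun e => ?_⟩ hV⟩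
  all_goals
    have hsmall : ∀ N, N ≤ ‖a‖ ^ 2 + ‖b‖ ^ 2 + 1 →
        N * (μ / M) * ‖p e‖ ^ 2 ≤ μ / 6 * (a (p e) ^ 2 + b (p e) ^ 2) := fun N hN => by
      calc N * (μ / M) * ‖p e‖ ^ 2 ≤ (‖a‖ ^ 2 + ‖b‖ ^ 2 + 1) * (μ / M) *
            ((K + 1) * (a (p e) ^ 2 + b (p e) ^ 2)) := by
            gcongr
            exact (hK _).trans (by gcongr; linarith)
        _ = μ / 6 * (a (p e) ^ 2 + b (p e) ^ 2) := by
            simp only [M]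
            field_simp
  · have herr := (abs_le.1 (abs_map_mul_map_sub_le a (ha _) (hVA e))).2
    have hrate : μ₁ * a (p e) ^ 2 ≤ -μ * a (p e) ^ 2 := by
      gcongr
      linarith [min_le_left (-μ₁) μ₂]
    linarith [hsmall (‖a‖ ^ 2) (by linarith [sq_nonneg ‖b‖])]
  · have herr := (abs_le.1 (abs_map_mul_map_sub_le b (hb _) (hVA e))).1
    have hrate : μ * b (p e) ^ 2 ≤ μ₂ * b (p e) ^ 2 := by
      gcongr
      exact min_le_right _ _
    linarith [hsmall (‖b‖ ^ 2) (by linarith [sq_nonneg ‖a‖])]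

end Saddle

section Lyapunov

variable {E X : Type*} [NormedAddCommGroup E] [NormedSpace ℝ E]
  [NormedAddCommGroup X] [NormedSpace ℝ X] {p : E →L[ℝ] X} {V : E → E} {φ : E → ℝ → E}
  {B : X →L[ℝ] X →L[ℝ] ℝ} {m κ : ℝ}

theorem norm_sq_le_of_lyapunov (hφ : IsSemiflow V Set.univ φ) (hB : ∀ x y, B x y = B y x)
    (hm : 0 < m) (hBm : ∀ x, m * ‖x‖ ^ 2 ≤ B x x) (hκ : 0 < κ)
    (hV : ∀ e, B (p e) (p (V e)) ≤ -κ * ‖p e‖ ^ 2) (e : E) {T : ℝ} (hT : 0 ≤ T) :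
    ‖p (φ e T)‖ ^ 2 ≤
      ‖B‖ * ‖p‖ ^ 2 / m * Real.exp (-(2 * κ / (‖B‖ + 1) * T)) * ‖e‖ ^ 2 := by
  set c := 2 * κ / (‖B‖ + 1)
  have hle : ∀ x, B x x ≤ ‖B‖ * ‖x‖ ^ 2 := fun x => by
    rw [pow_two, ← mul_assoc]
    exact (le_abs_self _).trans (B.le_opNorm₂ x x)
  have hderiv : ∀ t ∈ Set.Icc 0 T, HasDerivAt (fun t => B (p (φ e t)) (p (φ e t)))
      (2 * B (p (φ e t)) (p (V (φ e t)))) t := fun t ht => by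
    have hp := p.hasFDerivAt.comp_hasDerivAt t (hφ.hasDerivAt e (Set.mem_univ e) t ht.1)
    exact ((B.hasFDerivAt.comp_hasDerivAt t hp).clm_apply hp).congr_deriv
      (by simp only [Function.comp_apply, hB (p (V _)), two_mul])
  have hdecay : B (p (φ e T)) (p (φ e T)) ≤ Real.exp (-(c * T)) * B (p e) (p e) := by
    have h := le_exp_mul_of_hasDerivAt_le hT hderiv (c := c) fun t _ => ?_
    · rwa [hφ.apply_zero e (Set.mem_univ e)] at h
    · have hc : c * (‖B‖ + 1) = 2 * κ := div_mul_cancel₀ _ (by positivity)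
      have hcB : c * B (p (φ e t)) (p (φ e t)) ≤ c * ((‖B‖ + 1) * ‖p (φ e t)‖ ^ 2) := by
        gcongr
        exact (hle _).trans (by gcongr; linarith)
      rw [← mul_assoc, hc] at hcB
      linarith [hV (φ e t)]
  refine le_of_mul_le_mul_left ?_ hm
  calc m * ‖p (φ e T)‖ ^ 2 ≤ Real.exp (-(c * T)) * (‖B‖ * (‖p‖ * ‖e‖) ^ 2) := by
        grw [hBm, hdecay, hle, p.le_opNorm]
    _ = m * (‖B‖ * ‖p‖ ^ 2 / m * Real.exp (-(c * T)) * ‖e‖ ^ 2) := by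
        field_simp

theorem exists_hasFlatSolutions_of_lyapunov [FiniteDimensional ℝ E] (p : E →L[ℝ] X)
    {A : X →L[ℝ] X} (hB : ∀ x y, B x y = B y x) (hm : 0 < m) (hBm : ∀ x, m * ‖x‖ ^ 2 ≤ B x x)
    (hκ : 0 < κ) (hA : ∀ x, B x (A x) ≤ -κ * ‖x‖ ^ 2) :
    ∃ ε > 0, ∀ V, IsTameField p V → (∀ e, ‖p (V e) - A (p e)‖ ≤ ε * ‖p e‖) →
      HasFlatSolutions p V := by
  refine ⟨κ / 2 / (‖B‖ + 1), by positivity, fun V hV hVA g hg => ?_⟩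
  refine hV.exists_fderiv_apply_eq_neg hg fun φ hφ =>
    hg.decaysAlong isClosed_univ (Set.subset_univ _) (by positivity) fun e T hT _ =>
      norm_sq_le_of_lyapunov hφ hB hm hBm (half_pos hκ) (fun e => ?_) e hT
  have herr : B (p e) (p (V e) - A (p e)) ≤ κ / 2 * ‖p e‖ ^ 2 := by
    calc B (p e) (p (V e) - A (p e)) ≤ ‖B‖ * ‖p e‖ * ‖p (V e) - A (p e)‖ :=
          (le_abs_self _).trans (B.le_opNorm₂ _ _)
      _ ≤ (‖B‖ + 1) * ‖p e‖ * (κ / 2 / (‖B‖ + 1) * ‖p e‖) := by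
          gcongr
          · linarith
          · exact hVA e
      _ = κ / 2 * ‖p e‖ ^ 2 := by field_simp
  rw [map_sub] at herr
  linarith [hA (p e)]

end Lyapunov

section Planar

variable {E : Type*} [NormedAddCommGroup E] [NormedSpace ℝ E] [FiniteDimensional ℝ E]
  {A : ℝ × ℝ →L[ℝ] ℝ × ℝ} {a b c d : ℝ}

theorem norm_sq_le_fst_sq_add_snd_sq (x : ℝ × ℝ) : ‖x‖ ^ 2 ≤ x.1 ^ 2 + x.2 ^ 2 := by
  rw [Prod.norm_def]
  rcases max_choice ‖x.1‖ ‖x.2‖ with h | h <;> rw [h, Real.norm_eq_abs, sq_abs]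
  · exact le_add_of_nonneg_right (sq_nonneg _)
  · exact le_add_of_nonneg_left (sq_nonneg _)

/-- For a planar matrix `A = [[a, b], [c, d]]` with trace `τ` and determinant `δ`, the symmetric
form `Q = δ I + adj(A)ᵀ adj(A)`, which satisfies `Q(x, A x) = δ τ |x|²`. -/
noncomputable def lyapunovForm (a b c d : ℝ) : ℝ × ℝ →L[ℝ] ℝ × ℝ →L[ℝ] ℝ :=
  let x := ContinuousLinearMap.fst ℝ ℝ ℝ
  let y := ContinuousLinearMap.snd ℝ ℝ ℝ
  (a * d - b * c) • (x.smulRight x + y.smulRight y) +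
    (d • x - b • y).smulRight (d • x - b • y) + (a • y - c • x).smulRight (a • y - c • x)

theorem lyapunovForm_apply (z w : ℝ × ℝ) : lyapunovForm a b c d z w =
    (a * d - b * c) * (z.1 * w.1 + z.2 * w.2) + (d * z.1 - b * z.2) * (d * w.1 - b * w.2) +
      (a * z.2 - c * z.1) * (a * w.2 - c * w.1) := by
  simp [lyapunovForm, mul_add]

theorem exists_hasFlatSolutions_of_det_pos_of_trace_neg (p : E →L[ℝ] ℝ × ℝ)
    (hA : ∀ x, A x = (a * x.1 + b * x.2, c * x.1 + d * x.2)) (hδ : 0 < a * d - b * c)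
    (hτ : a + d < 0) :
    ∃ ε > 0, ∀ V, IsTameField p V → (∀ e, ‖p (V e) - A (p e)‖ ≤ ε * ‖p e‖) →
      HasFlatSolutions p V := by
  refine exists_hasFlatSolutions_of_lyapunov p (B := lyapunovForm a b c d)
    (fun x y => by simp only [lyapunovForm_apply]; ring) hδ (fun x => ?_)
    (κ := (a * d - b * c) * -(a + d)) (mul_pos hδ (neg_pos.2 hτ)) fun x => ?_
  · rw [lyapunovForm_apply]
    nlinarith [mul_le_mul_of_nonneg_left (norm_sq_le_fst_sq_add_snd_sq x) hδ.le,
      mul_self_nonneg (d * x.1 - b * x.2), mul_self_nonneg (a * x.2 - c * x.1)]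
  · calc lyapunovForm a b c d x (A x)
          = -((a * d - b * c) * -(a + d)) * (x.1 ^ 2 + x.2 ^ 2) := by
          rw [lyapunovForm_apply, hA]
          ring
      _ ≤ -((a * d - b * c) * -(a + d)) * ‖x‖ ^ 2 :=
          mul_le_mul_of_nonpos_left (norm_sq_le_fst_sq_add_snd_sq x)
            (neg_nonpos.2 (mul_pos hδ (neg_pos.2 hτ)).le)

theorem exists_left_eigenvector {μ : ℝ} (hμ : μ ^ 2 - (a + d) * μ + (a * d - b * c) = 0)
    (hδ : a * d - b * c < 0) :
    ∃ l m : ℝ, (l ≠ 0 ∨ m ≠ 0) ∧ l * a + m * c = μ * l ∧ l * b + m * d = μ * m := by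
  by_cases h : c ≠ 0 ∨ μ - a ≠ 0
  · exact ⟨c, μ - a, h, by ring, by linarith⟩
  push Not at h
  refine ⟨μ - d, b, ?_, by linarith, by ring⟩
  by_contra! h'
  rw [show a = μ by linarith, show d = μ by linarith, h.1] at hδ
  nlinarith [sq_nonneg μ]

theorem det_left_eigenvectors_ne_zero {μ ν l m l' m' : ℝ} (hne : μ ≠ ν)
    (h : l ≠ 0 ∨ m ≠ 0) (h' : l' ≠ 0 ∨ m' ≠ 0)
    (hla : l * a + m * c = μ * l) (hlb : l * b + m * d = μ * m)
    (hla' : l' * a + m' * c = ν * l') (hlb' : l' * b + m' * d = ν * m') :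
    l * m' - m * l' ≠ 0 := by
  intro h0
  have hs : μ - ν ≠ 0 := sub_ne_zero.2 hne
  have hll : l * l' = 0 := (mul_eq_zero_iff_left hs).1 <| by
    linear_combination (-l') * hla + l * hla' + (-c) * h0
  have hmm : m * m' = 0 := (mul_eq_zero_iff_left hs).1 <| by
    linear_combination (-m') * hlb + m * hlb' + b * h0
  have hlm : l * m' = 0 := (mul_eq_zero_iff_left hs).1 <| by
    linear_combination (-m') * hla + m * hla' + (a - ν) * h0
  have hml : m * l' = 0 := by linarith
  simp only [mul_eq_zero] at hll hmm hlm hml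
  tauto

theorem exists_neg_pos_roots (hδ : a * d - b * c < 0) :
    ∃ μ₁ μ₂ : ℝ, μ₁ < 0 ∧ 0 < μ₂ ∧ μ₁ ^ 2 - (a + d) * μ₁ + (a * d - b * c) = 0 ∧
      μ₂ ^ 2 - (a + d) * μ₂ + (a * d - b * c) = 0 := by
  set s := √((a + d) ^ 2 - 4 * (a * d - b * c))
  have hs : s ^ 2 = (a + d) ^ 2 - 4 * (a * d - b * c) :=
    Real.sq_sqrt (by nlinarith [sq_nonneg (a + d)])
  obtain ⟨hlt₁, hlt₂⟩ := abs_lt.1 (abs_lt_of_sq_lt_sq (by linarith : (a + d) ^ 2 < s ^ 2)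
    (Real.sqrt_nonneg _))
  exact ⟨(a + d - s) / 2, (a + d + s) / 2, by linarith, by linarith,
    by linear_combination hs / 4, by linear_combination hs / 4⟩

theorem norm_sq_le_of_det_ne_zero {l m l' m' : ℝ} (hdet : l * m' - m * l' ≠ 0) (x : ℝ × ℝ) :
    ‖x‖ ^ 2 ≤ (l ^ 2 + m ^ 2 + l' ^ 2 + m' ^ 2) / (l * m' - m * l') ^ 2 *
      ((l * x.1 + m * x.2) ^ 2 + (l' * x.1 + m' * x.2) ^ 2) := by
  refine (norm_sq_le_fst_sq_add_snd_sq x).trans ?_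
  rw [div_mul_eq_mul_div, le_div_iff₀ (by positivity)]
  set u := l * x.1 + m * x.2
  set v := l' * x.1 + m' * x.2
  calc (x.1 ^ 2 + x.2 ^ 2) * (l * m' - m * l') ^ 2
    _ = (m' * u - m * v) ^ 2 + (l * v - l' * u) ^ 2 := by
        simp only [u, v]
        ring
    _ ≤ (l ^ 2 + m ^ 2 + l' ^ 2 + m' ^ 2) * (u ^ 2 + v ^ 2) := by
        nlinarith [sq_nonneg (m' * v + m * u), sq_nonneg (l * u + l' * v)]

theorem exists_hasFlatSolutions_of_det_neg (p : E →L[ℝ] ℝ × ℝ)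
    (hA : ∀ x, A x = (a * x.1 + b * x.2, c * x.1 + d * x.2)) (hδ : a * d - b * c < 0) :
    ∃ ε > 0, ∀ V, IsTameField p V → (∀ e, ‖p (V e) - A (p e)‖ ≤ ε * ‖p e‖) →
      HasFlatSolutions p V := by
  obtain ⟨μ₁, μ₂, hμ₁, hμ₂, hroot₁, hroot₂⟩ := exists_neg_pos_roots hδ
  obtain ⟨l, m, hlm, hla, hlb⟩ := exists_left_eigenvector hroot₁ hδ
  obtain ⟨l', m', hlm', hla', hlb'⟩ := exists_left_eigenvector hroot₂ hδ
  have hdet := det_left_eigenvectors_ne_zero (hμ₁.trans hμ₂).ne hlm hlm' hla hlb hla' hlb'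
  let covector (α β : ℝ) : ℝ × ℝ →L[ℝ] ℝ :=
    α • ContinuousLinearMap.fst ℝ ℝ ℝ + β • ContinuousLinearMap.snd ℝ ℝ ℝ
  have hcov : ∀ α β x, covector α β x = α * x.1 + β * x.2 := fun α β x => by simp [covector]
  refine exists_hasFlatSolutions_of_saddle (a := covector l m) (b := covector l' m') p hμ₁ hμ₂
    (fun x => ?_) (fun x => ?_) (K := (l ^ 2 + m ^ 2 + l' ^ 2 + m' ^ 2) / (l * m' - m * l') ^ 2)
    (by positivity) fun x => ?_
  · simp only [hcov, hA]
    linear_combination x.1 * hla + x.2 * hlb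
  · simp only [hcov, hA]
    linear_combination x.1 * hla' + x.2 * hlb'
  · simpa only [hcov] using norm_sq_le_of_det_ne_zero hdet x

theorem exists_hasFlatSolutions_of_hyperbolic (p : E →L[ℝ] ℝ × ℝ)
    (hA : ∀ x, A x = (a * x.1 + b * x.2, c * x.1 + d * x.2))
    (h : a * d - b * c < 0 ∨ 0 < a * d - b * c ∧ a + d ≠ 0) :
    ∃ ε > 0, ∀ V, IsTameField p V → (∀ e, ‖p (V e) - A (p e)‖ ≤ ε * ‖p e‖) →
      HasFlatSolutions p V := by
  rcases h with hδ | ⟨hδ, hτ⟩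
  · exact exists_hasFlatSolutions_of_det_neg p hA hδ
  rcases hτ.lt_or_gt with hτ | hτ
  · exact exists_hasFlatSolutions_of_det_pos_of_trace_neg p hA hδ hτ
  · obtain ⟨ε, hε, hsol⟩ := exists_hasFlatSolutions_of_det_pos_of_trace_neg p (A := -A)
      (a := -a) (b := -b) (c := -c) (d := -d)
      (fun x => by simp only [neg_apply, hA, Prod.neg_mk]; ext <;> ring) (by linarith)
      (by linarith)
    refine ⟨ε, hε, fun V hV hVA => (hsol (-V) hV.neg fun e => ?_).of_neg⟩
    rw [Pi.neg_apply, map_neg, neg_apply, ← neg_sub', norm_neg]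
    exact hVA e

end Planar

section Derivation

-- Applying `D i - b` to the relation replaces `D i` by the scalar `a`; once `(D i - b) f = 0` is
-- known, `D i` acts on `f` as the scalar `b`. Either way one operator is absorbed into `s`.
theorem eq_zero_of_smul_add_sum_eq_zero {M ι : Type*} [AddCommGroup M] [Module ℂ M]
    {D : ι → Module.End ℂ M} (hD : ∀ i k, Commute (D i) (D k)) {a b : ℂ} {F : Finset ι} {s : ℂ}
    (hs : ∀ m n : ℕ, m + n = F.card → s + (m * a + n * b) ≠ 0) {f : M}
    (hf : ∀ i ∈ F, (D i - algebraMap ℂ _ a) ((D i - algebraMap ℂ _ b) f) = 0)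
    (h : s • f + ∑ i ∈ F, D i f = 0) : f = 0 := by
  classical
  induction F using Finset.induction_on generalizing s f with
  | empty =>
    have hs0 : s ≠ 0 := by simpa using hs 0 0 rfl
    simpa [hs0] using h
  | insert i F hi ih =>
    rw [Finset.sum_insert hi] at h
    rw [Finset.card_insert_of_notMem hi] at hs
    set P := D i - algebraMap ℂ (Module.End ℂ M) b
    have hcomm : ∀ Q : Module.End ℂ M, Commute Q (D i) → ∀ u, Q (P u) = P (Q u) := fun Q hQ u =>
      LinearMap.congr_fun (hQ.sub_right (Algebra.commutes b Q).symm).eq u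
    have hDP : D i (P f) = a • P f := by
      have := hf i (Finset.mem_insert_self i F)
      rwa [LinearMap.sub_apply, Module.algebraMap_end_apply, sub_eq_zero] at this
    have hPf : P f = 0 := by
      refine ih (s := s + a) (fun m n hmn => ?_) (fun k hk => ?_) ?_
      · have := hs (m + 1) n (by omega)
        push_cast at this
        convert this using 1
        ring
      · rw [hcomm _ ((hD k i).sub_left (Algebra.commutes b _)),
          hcomm _ ((hD k i).sub_left (Algebra.commutes a _)),
          hf k (Finset.mem_insert_of_mem hk), map_zero]
      · calc (s + a) • P f + ∑ k ∈ F, D k (P f) = s • P f + (D i (P f) + ∑ k ∈ F, D k (P f)) := by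
              rw [hDP, add_smul, add_assoc]
          _ = P (s • f + (D i f + ∑ k ∈ F, D k f)) := by
              simp only [map_add, map_smul, map_sum, hcomm _ (hD _ i)]
          _ = 0 := by rw [h, map_zero]
    refine ih (s := s + b) (fun m n hmn => ?_)
      (fun k hk => hf k (Finset.mem_insert_of_mem hk)) ?_
    · have := hs m (n + 1) (by omega)
      push_cast at this
      convert this using 1
      ring
    · have hDf : D i f = b • f := by simpa [P, sub_eq_zero] using hPf
      rwa [add_smul, add_assoc, ← hDf]

variable {X : Type*} [NormedAddCommGroup X] [NormedSpace ℝ X] {N : ℕ} {A : X →L[ℝ] X}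

/-- The derivation on `N`-linear forms on `X` induced by an endomorphism of `X`. -/
noncomputable def multilinearDerivation (N : ℕ) (A : X →L[ℝ] X) :
    (X [×N]→L[ℝ] ℝ) →L[ℝ] (X [×N]→L[ℝ] ℝ) :=
  ∑ i, ContinuousMultilinearMap.compContinuousLinearMapContinuousMultilinear ℝ
    (fun _ : Fin N => X) (fun _ => X) ℝ
    (Function.update (fun _ => ContinuousLinearMap.id ℝ X) i A)

theorem multilinearDerivation_apply (A : X →L[ℝ] X) (T : X [×N]→L[ℝ] ℝ) (x : Fin N → X) :
    multilinearDerivation N A T x = ∑ i, T (Function.update x i (A (x i))) := by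
  simp only [multilinearDerivation, sum_apply]
  refine Finset.sum_congr rfl fun i _ => ?_
  change T (fun k => _) = _
  congr 1
  ext k
  rcases eq_or_ne k i with rfl | h
  · simp
  · simp [h]

theorem contDiff_multilinearDerivation (N : ℕ) :
    ContDiff ℝ ∞ (multilinearDerivation N : (X →L[ℝ] X) → _) := by
  unfold multilinearDerivation
  exact ContDiff.sum fun i _ => (ContinuousMultilinearMap.contDiff _).comp (contDiff_update _ _ _)

/-- The action of `A` on the `i`-th argument of a function of `N` variables. The functions are
arbitrary and complex-valued, so that eigenvalues of `A` are available without complexifying the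
space of multilinear forms. -/
def argumentOperator (A : X →L[ℝ] X) (i : Fin N) : Module.End ℂ ((Fin N → X) → ℂ) :=
  LinearMap.funLeft ℂ ℂ fun x => Function.update x i (A (x i))

theorem argumentOperator_apply (i : Fin N) (f : (Fin N → X) → ℂ) (x : Fin N → X) :
    argumentOperator A i f x = f (Function.update x i (A (x i))) :=
  rfl

theorem commute_argumentOperator (i k : Fin N) :
    Commute (argumentOperator A i) (argumentOperator A k) := by
  refine LinearMap.ext fun f => funext fun x => ?_
  simp only [Module.End.mul_apply, argumentOperator_apply]
  rcases eq_or_ne i k with rfl | hik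
  · rfl
  · rw [Function.update_of_ne hik, Function.update_of_ne hik.symm, Function.update_comm hik]

theorem argumentOperator_sub_apply_sub_apply {a b : ℂ} {τ δ : ℝ}
    (hA : ∀ x, A (A x) = τ • A x - δ • x) (hτ : a + b = τ) (hδ : a * b = δ)
    (T : X [×N]→L[ℝ] ℝ) (i : Fin N) :
    (argumentOperator A i - algebraMap ℂ _ a)
      ((argumentOperator A i - algebraMap ℂ _ b) fun x => (T x : ℂ)) = 0 := by
  funext x
  have hT : T (Function.update x i (A (A (x i)))) =
      τ * T (Function.update x i (A (x i))) - δ * T x := by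
    rw [hA, ContinuousMultilinearMap.map_update_sub, ContinuousMultilinearMap.map_update_smul,
      ContinuousMultilinearMap.map_update_smul, Function.update_eq_self, smul_eq_mul, smul_eq_mul]
  simp only [LinearMap.sub_apply, Pi.sub_apply, argumentOperator_apply,
    Module.algebraMap_end_apply, Pi.smul_apply, map_sub, map_smul, smul_eq_mul, Pi.zero_apply,
    Function.update_self, Function.update_idem, hT]
  push_cast
  rw [← hτ, ← hδ]
  ring

theorem multilinearDerivation_injective {a b : ℂ} {τ δ : ℝ}
    (hA : ∀ x, A (A x) = τ • A x - δ • x) (hτ : a + b = τ) (hδ : a * b = δ)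
    (h : ∀ m n : ℕ, m + n = N → (m : ℂ) * a + n * b ≠ 0) :
    Function.Injective (multilinearDerivation N A) := by
  refine (injective_iff_map_eq_zero _).2 fun T hT => ?_
  have hzero : (fun x => (T x : ℂ)) = (0 : (Fin N → X) → ℂ) := by
    refine eq_zero_of_smul_add_sum_eq_zero commute_argumentOperator (a := a) (b := b)
      (F := Finset.univ) (s := 0) (by simpa using h)
      (fun i _ => argumentOperator_sub_apply_sub_apply hA hτ hδ T i) (funext fun x => ?_)
    have hTx : ((multilinearDerivation N A T x : ℝ) : ℂ) = 0 := by simp [hT]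
    simpa [multilinearDerivation_apply, argumentOperator_apply, Finset.sum_apply] using hTx
  ext x
  simpa using congrFun hzero x

theorem isUnit_multilinearDerivation [FiniteDimensional ℝ X] {a b : ℂ} {τ δ : ℝ}
    (hA : ∀ x, A (A x) = τ • A x - δ • x) (hτ : a + b = τ) (hδ : a * b = δ)
    (h : ∀ m n : ℕ, m + n = N → (m : ℂ) * a + n * b ≠ 0) :
    IsUnit (multilinearDerivation N A) := by
  have : FiniteDimensional ℝ (X [×N]→L[ℝ] ℝ) :=
    FiniteDimensional.of_injective (ContinuousMultilinearMap.toMultilinearMapLinear :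
      (X [×N]→L[ℝ] ℝ) →ₗ[ℝ] MultilinearMap ℝ (fun _ : Fin N => X) ℝ)
      ContinuousMultilinearMap.toMultilinearMap_injective
  have hinj : Function.Injective (multilinearDerivation N A).toLinearMap :=
    multilinearDerivation_injective hA hτ hδ h
  exact ⟨(LinearEquiv.ofInjectiveEndo _ hinj).toContinuousLinearEquiv.toUnit,
    ContinuousLinearMap.ext fun T => rfl⟩

end Derivation

section Taylor

theorem eq_zero_of_abs_le_mul {c K : ℝ} (h : ∀ t ∈ Set.Ioc (0 : ℝ) 1, |c| ≤ K * t) : c = 0 := by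
  have hlim : Tendsto (fun t : ℝ => K * t) (𝓝[>] 0) (𝓝 0) :=
    ((continuous_const_mul K).tendsto' 0 0 (mul_zero K)).mono_left nhdsWithin_le_nhds
  refine abs_nonpos_iff.1 (ge_of_tendsto hlim ?_)
  filter_upwards [Ioc_mem_nhdsGT (zero_lt_one' ℝ)] with t ht using h t ht

theorem abs_sub_taylor_sum_le {φ : ℝ → ℝ} (hφ : ContDiff ℝ ∞ φ) {n : ℕ} {B t : ℝ}
    (hB : ∀ t ∈ Set.Icc (0 : ℝ) 1, |iteratedDeriv (n + 1) φ t| ≤ B) (ht : t ∈ Set.Icc (0 : ℝ) 1) :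
    |φ t - ∑ k ∈ Finset.range (n + 1), iteratedDeriv k φ 0 * t ^ k / (k.factorial : ℝ)|
      ≤ B * t ^ (n + 1) := by
  have hk : ∀ k, ∀ s ∈ Set.Icc (0 : ℝ) 1,
      iteratedDerivWithin k φ (Set.Icc 0 1) s = iteratedDeriv k φ s := fun k s hs =>
    iteratedDerivWithin_eq_iteratedDeriv (uniqueDiffOn_Icc zero_lt_one)
      (hφ.contDiffAt.of_le (by exact_mod_cast le_top)) hs
  have htaylor := taylor_mean_remainder_bound (f := φ) (n := n) zero_le_one
    (hφ.contDiffOn.of_le (by exact_mod_cast le_top)) ht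
    (fun y hy => by rw [hk _ y hy]; exact hB y hy)
  have hsum : taylorWithinEval φ n (Set.Icc 0 1) 0 t =
      ∑ k ∈ Finset.range (n + 1), iteratedDeriv k φ 0 * t ^ k / (k.factorial : ℝ) := by
    rw [taylor_within_apply]
    refine Finset.sum_congr rfl fun k _ => ?_
    rw [hk k 0 (by simp), smul_eq_mul]
    ring
  rw [hsum, Real.norm_eq_abs, sub_zero] at htaylor
  have hB0 : 0 ≤ B := (abs_nonneg _).trans (hB 0 (by simp))
  exact htaylor.trans (div_le_self (mul_nonneg hB0 (pow_nonneg ht.1 _))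
    (by exact_mod_cast n.factorial_pos))

theorem abs_sub_taylor_monomial_le {φ : ℝ → ℝ} (hφ : ContDiff ℝ ∞ φ) {n : ℕ} {B t : ℝ}
    (hvan : ∀ k < n, iteratedDeriv k φ 0 = 0)
    (hB : ∀ t ∈ Set.Icc (0 : ℝ) 1, |iteratedDeriv (n + 1) φ t| ≤ B) (ht : t ∈ Set.Icc (0 : ℝ) 1) :
    |φ t - iteratedDeriv n φ 0 * t ^ n / (n.factorial : ℝ)| ≤ B * t ^ (n + 1) := by
  have hsum : ∑ k ∈ Finset.range n, iteratedDeriv k φ 0 * t ^ k / (k.factorial : ℝ) = 0 :=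
    Finset.sum_eq_zero fun k hk => by simp [hvan k (Finset.mem_range.1 hk)]
  simpa only [Finset.sum_range_succ, hsum, zero_add] using abs_sub_taylor_sum_le hφ hB ht

theorem iteratedDeriv_eq_zero_of_abs_le_mul_pow {φ : ℝ → ℝ} (hφ : ContDiff ℝ ∞ φ) {N : ℕ} {C : ℝ}
    (hC : ∀ t ∈ Set.Icc (0 : ℝ) 1, |φ t| ≤ C * t ^ N) {k : ℕ} (hk : k < N) :
    iteratedDeriv k φ 0 = 0 := by
  induction k using Nat.strong_induction_on with
  | _ k ih =>
    have hC0 : 0 ≤ C := by simpa using (abs_nonneg _).trans (hC 1 (by simp))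
    obtain ⟨B, hB⟩ := isCompact_Icc.exists_bound_of_continuousOn
      (hφ.continuous_iteratedDeriv (k + 1) (by exact_mod_cast le_top)).continuousOn
    set c := iteratedDeriv k φ 0 / (k.factorial : ℝ) with hc
    suffices c = 0 from (div_eq_zero_iff.1 this).resolve_right
      (by exact_mod_cast k.factorial_ne_zero)
    refine eq_zero_of_abs_le_mul (K := C + B) fun t ht => ?_
    have ht' : t ∈ Set.Icc (0 : ℝ) 1 := ⟨ht.1.le, ht.2⟩
    have hrem := abs_sub_taylor_monomial_le hφ (fun i hi => ih i hi (hi.trans hk)) hB ht'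
    have hφt : |φ t| ≤ C * t ^ (k + 1) := (hC t ht').trans
      (mul_le_mul_of_nonneg_left (pow_le_pow_of_le_one ht.1.le ht.2 hk) hC0)
    refine le_of_mul_le_mul_right ?_ (pow_pos ht.1 k)
    calc |c| * t ^ k = |φ t - (φ t - iteratedDeriv k φ 0 * t ^ k / (k.factorial : ℝ))| := by
          rw [sub_sub_cancel, mul_div_right_comm, ← hc, abs_mul, abs_of_pos (pow_pos ht.1 k)]
      _ ≤ C * t ^ (k + 1) + B * t ^ (k + 1) := (abs_sub _ _).trans (add_le_add hφt hrem)
      _ = (C + B) * t * t ^ k := by ring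

theorem abs_sub_iteratedDeriv_le {φ : ℝ → ℝ} (hφ : ContDiff ℝ ∞ φ) {N : ℕ} {C B : ℝ}
    (hC : ∀ t ∈ Set.Icc (0 : ℝ) 1, |φ t| ≤ C * t ^ N)
    (hB : ∀ t ∈ Set.Icc (0 : ℝ) 1, |iteratedDeriv (N + 1) φ t| ≤ B) :
    |φ 1 - iteratedDeriv N φ 0 / (N.factorial : ℝ)| ≤ B := by
  simpa using abs_sub_taylor_monomial_le hφ
    (fun k hk => iteratedDeriv_eq_zero_of_abs_le_mul_pow hφ hC hk) hB (t := 1) (by simp)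

variable {E : Type*} [NormedAddCommGroup E] [NormedSpace ℝ E] {g : E → ℝ}

theorem iteratedDeriv_comp_line (hg : ContDiff ℝ ∞ g) (a b : E) (n : ℕ) (t : ℝ) :
    iteratedDeriv n (fun t : ℝ => g (a + t • b)) t
      = iteratedFDeriv ℝ n g (a + t • b) fun _ => b := by
  have hline : (fun t : ℝ => g (a + t • b)) =
      (fun x => g (a + x)) ∘ ContinuousLinearMap.toSpanSingleton ℝ b := by
    funext t
    simp
  have hga : ContDiff ℝ ∞ fun x => g (a + x) := hg.comp (contDiff_const.add contDiff_id)
  rw [iteratedDeriv_eq_iteratedFDeriv, hline, ContinuousLinearMap.iteratedFDeriv_comp_right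
    _ hga t (by exact_mod_cast le_top), iteratedFDeriv_comp_add_left]
  simp

theorem abs_sub_iteratedFDeriv_le (hg : ContDiff ℝ ∞ g) {N : ℕ} {C B : ℝ} {a b : E}
    (hC : ∀ t ∈ Set.Icc (0 : ℝ) 1, |g (a + t • b)| ≤ C * t ^ N)
    (hB : ∀ t ∈ Set.Icc (0 : ℝ) 1, ‖iteratedFDeriv ℝ (N + 1) g (a + t • b)‖ ≤ B) :
    |g (a + b) - (iteratedFDeriv ℝ N g a fun _ => b) / (N.factorial : ℝ)|
      ≤ B * ‖b‖ ^ (N + 1) := by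
  have h := abs_sub_iteratedDeriv_le (φ := fun t : ℝ => g (a + t • b)) (B := B * ‖b‖ ^ (N + 1))
    (hg.comp (by fun_prop)) hC fun t ht => by
      rw [iteratedDeriv_comp_line hg]
      refine ((iteratedFDeriv ℝ (N + 1) g (a + t • b)).le_opNorm _).trans ?_
      simp only [Finset.prod_const, Finset.card_univ, Fintype.card_fin]
      gcongr
      exact hB t ht
  rw [iteratedDeriv_comp_line hg] at h
  simpa using h

end Taylor

section FormalSolution

variable {E X : Type*} [NormedAddCommGroup E] [NormedSpace ℝ E]
  [NormedAddCommGroup X] [NormedSpace ℝ X] {p : E →L[ℝ] X} {j : X →L[ℝ] E} {V : E → E} {r : ℝ}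
  {N : ℕ}

/-- The projection onto the kernel of `p` along the range of a section `j` of `p`. -/
def kerProj (p : E →L[ℝ] X) (j : X →L[ℝ] E) : E →L[ℝ] E := ContinuousLinearMap.id ℝ E - j.comp p

theorem kerProj_apply (e : E) : kerProj p j e = e - j (p e) := rfl

theorem kerProj_add (e : E) : kerProj p j e + j (p e) = e := by simp [kerProj_apply]

theorem apply_kerProj (hpj : ∀ x, p (j x) = x) (e : E) : p (kerProj p j e) = 0 := by
  simp [kerProj_apply, hpj]

theorem apply_kerProj_add (hpj : ∀ x, p (j x) = x) (e : E) (x : X) :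
    p (kerProj p j e + j x) = x := by
  simp [kerProj_apply, hpj]

theorem kerProj_kerProj_add (hpj : ∀ x, p (j x) = x) (e : E) (x : X) :
    kerProj p j (kerProj p j e + j x) = kerProj p j e := by
  simp [kerProj_apply, hpj]

/-- `g` is of size `‖p e‖ ^ N` on the points at distance at most `1` from the ball of radius `r`
of the kernel of `p`; distance and ball are measured through the splitting given by `j`. -/
def HasOrder (p : E →L[ℝ] X) (j : X →L[ℝ] E) (r : ℝ) (N : ℕ) (g : E → ℝ) : Prop :=
  ∃ C, ∀ e, ‖kerProj p j e‖ ≤ r → ‖p e‖ ≤ 1 → |g e| ≤ C * ‖p e‖ ^ N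

/-- `h` is homogeneous of degree `d` along the fibres, that is, the translates of the range of
`j`. -/
def IsFiberHomogeneous (p : E →L[ℝ] X) (j : X →L[ℝ] E) (d : ℕ) (h : E → ℝ) : Prop :=
  ∀ (t : ℝ) e, h (kerProj p j e + t • j (p e)) = t ^ d * h e

theorem HasOrder.add {f g : E → ℝ} (hf : HasOrder p j r N f) (hg : HasOrder p j r N g) :
    HasOrder p j r N (fun e => f e + g e) := by
  obtain ⟨C, hC⟩ := hf
  obtain ⟨D, hD⟩ := hg
  refine ⟨C + D, fun e h1 h2 => (abs_add_le _ _).trans ?_⟩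
  rw [add_mul]
  exact add_le_add (hC e h1 h2) (hD e h1 h2)

theorem HasOrder.sum {ι : Type*} {s : Finset ι} {f : ι → E → ℝ}
    (hf : ∀ i ∈ s, HasOrder p j r N (f i)) : HasOrder p j r N fun e => ∑ i ∈ s, f i e := by
  choose! C hC using hf
  refine ⟨∑ i ∈ s, C i, fun e h1 h2 => (s.abs_sum_le_sum_abs _).trans ?_⟩
  rw [Finset.sum_mul]
  exact Finset.sum_le_sum fun i hi => hC i hi e h1 h2

theorem exists_norm_iteratedFDeriv_le_of_closedBall [FiniteDimensional ℝ E] {F : Type*}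
    [NormedAddCommGroup F] [NormedSpace ℝ F] {f : E → F} (hf : ContDiff ℝ ∞ f) (n : ℕ) (R : ℝ) :
    ∃ C, 0 ≤ C ∧ ∀ e ∈ Metric.closedBall (0 : E) R, ‖iteratedFDeriv ℝ n f e‖ ≤ C := by
  have : ProperSpace E := FiniteDimensional.proper ℝ E
  obtain ⟨C, hC⟩ := (isCompact_closedBall (0 : E) R).exists_bound_of_continuousOn
    (hf.continuous_iteratedFDeriv (m := n) (by exact_mod_cast le_top)).continuousOn
  exact ⟨|C|, abs_nonneg C, fun e he => (hC e he).trans (le_abs_self C)⟩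

theorem kerProj_add_smul_mem_closedBall {e : E} {t : ℝ} (ht : t ∈ Set.Icc (0 : ℝ) 1)
    (h1 : ‖kerProj p j e‖ ≤ r) (h2 : ‖p e‖ ≤ 1) :
    kerProj p j e + t • j (p e) ∈ Metric.closedBall (0 : E) (r + ‖j‖) := by
  rw [mem_closedBall_zero_iff]
  refine (norm_add_le _ _).trans (add_le_add h1 ?_)
  rw [norm_smul, Real.norm_of_nonneg ht.1]
  exact (mul_le_of_le_one_left (norm_nonneg _) ht.2).trans (j.le_of_opNorm_le_of_le le_rfl h2
    |>.trans_eq (mul_one _))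

theorem kerProj_mem_closedBall {e : E} (h1 : ‖kerProj p j e‖ ≤ r) (h2 : ‖p e‖ ≤ 1) :
    kerProj p j e ∈ Metric.closedBall (0 : E) (r + ‖j‖) := by
  simpa using kerProj_add_smul_mem_closedBall (t := 0) (by simp) h1 h2

theorem mem_closedBall_of_norm_kerProj_le {e : E} (h1 : ‖kerProj p j e‖ ≤ r) (h2 : ‖p e‖ ≤ 1) :
    e ∈ Metric.closedBall (0 : E) (r + ‖j‖) := by
  simpa [kerProj_add] using kerProj_add_smul_mem_closedBall (t := 1) (by simp) h1 h2

/-- The `N`-th Taylor coefficient of `g` in the directions of the range of `j`, taken at the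
projection of `e` to the kernel of `p`. -/
noncomputable def taylorForm (p : E →L[ℝ] X) (j : X →L[ℝ] E) (N : ℕ) (g : E → ℝ) (e : E) :
    X [×N]→L[ℝ] ℝ :=
  ((N.factorial : ℝ)⁻¹) • ContinuousMultilinearMap.compContinuousLinearMapL (fun _ => j)
    (iteratedFDeriv ℝ N g (kerProj p j e))

theorem taylorForm_apply (g : E → ℝ) (e : E) (x : X) :
    (taylorForm p j N g e fun _ => x) =
      (iteratedFDeriv ℝ N g (kerProj p j e) fun _ => j x) / (N.factorial : ℝ) := by
  rw [div_eq_inv_mul]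
  rfl

theorem contDiff_taylorForm {g : E → ℝ} (hg : ContDiff ℝ ∞ g) :
    ContDiff ℝ ∞ (taylorForm p j N g) :=
  ((ContinuousLinearMap.contDiff _).comp ((hg.iteratedFDeriv_right (i := N) (m := ∞)
    (by exact_mod_cast le_top)).comp (kerProj p j).contDiff)).const_smul _

theorem HasOrder.sub_taylorForm [FiniteDimensional ℝ E] (hpj : ∀ x, p (j x) = x)
    {g : E → ℝ} (hg : ContDiff ℝ ∞ g) (h : HasOrder p j r N g) :
    HasOrder p j r (N + 1) fun e => g e - taylorForm p j N g e fun _ => p e := by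
  obtain ⟨C, hC⟩ := h
  obtain ⟨B, hB0, hB⟩ := exists_norm_iteratedFDeriv_le_of_closedBall hg (N + 1) (r + ‖j‖)
  refine ⟨B * ‖j‖ ^ (N + 1), fun e h1 h2 => ?_⟩
  have hline : ∀ t ∈ Set.Icc (0 : ℝ) 1,
      |g (kerProj p j e + t • j (p e))| ≤ C * ‖p e‖ ^ N * t ^ N := fun t ht => by
    have hn : ‖p (kerProj p j e + j (t • p e))‖ = t * ‖p e‖ := by
      rw [apply_kerProj_add hpj, norm_smul, Real.norm_of_nonneg ht.1]
    have := hC (kerProj p j e + j (t • p e)) (by rwa [kerProj_kerProj_add hpj])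
      (by rw [hn]; exact mul_le_one₀ ht.2 (norm_nonneg _) h2)
    rw [hn, mul_pow, map_smul] at this
    linarith
  have key := abs_sub_iteratedFDeriv_le hg hline
    (fun t ht => hB _ (kerProj_add_smul_mem_closedBall ht h1 h2))
  rw [kerProj_add] at key
  beta_reduce
  rw [taylorForm_apply, mul_assoc, ← mul_pow]
  grw [key, j.le_opNorm]

/-- The linear part of a vector field transverse to the kernel of `p`, at the projection of `e` to
that kernel. -/
noncomputable def transverseLinear (p : E →L[ℝ] X) (j : X →L[ℝ] E) (V : E → E) (e : E) :
    X →L[ℝ] X :=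
  p.comp ((fderiv ℝ V (kerProj p j e)).comp j)

theorem contDiff_transverseLinear (hV : ContDiff ℝ ∞ V) :
    ContDiff ℝ ∞ (transverseLinear p j V) := by
  have h : ContDiff ℝ ∞ fun e => fderiv ℝ V (kerProj p j e) :=
    (hV.fderiv_right (by simp)).comp (kerProj p j).contDiff
  exact contDiff_const.clm_comp (h.clm_comp contDiff_const)

theorem exists_norm_le_mul_norm_map [FiniteDimensional ℝ E] (hpj : ∀ x, p (j x) = x)
    {F : Type*} [NormedAddCommGroup F] [NormedSpace ℝ F] {f : E → F} (hf : ContDiff ℝ ∞ f)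
    (hf0 : ∀ e, p e = 0 → f e = 0) (r : ℝ) :
    ∃ L, 0 ≤ L ∧ ∀ e, ‖kerProj p j e‖ ≤ r → ‖p e‖ ≤ 1 → ‖f e‖ ≤ L * ‖p e‖ := by
  obtain ⟨B, hB0, hB⟩ := exists_norm_iteratedFDeriv_le_of_closedBall hf 1 (r + ‖j‖)
  refine ⟨B * ‖j‖, by positivity, fun e h1 h2 => ?_⟩
  have hmean := (convex_closedBall (0 : E) (r + ‖j‖)).norm_image_sub_le_of_norm_fderiv_le
    (𝕜 := ℝ) (fun x _ => hf.differentiable (by simp) x)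
    (fun x hx => by simpa [norm_iteratedFDeriv_one] using hB x hx)
    (kerProj_mem_closedBall h1 h2) (mem_closedBall_of_norm_kerProj_le h1 h2)
  rw [hf0 _ (apply_kerProj hpj e), sub_zero, kerProj_apply, sub_sub_cancel] at hmean
  grw [hmean, j.le_opNorm, mul_assoc]

theorem exists_norm_sub_transverseLinear_le [FiniteDimensional ℝ E] (hpj : ∀ x, p (j x) = x)
    (hV : ContDiff ℝ ∞ V) (hV0 : ∀ e, p e = 0 → V e = 0) (r : ℝ) :
    ∃ L, 0 ≤ L ∧ ∀ e, ‖kerProj p j e‖ ≤ r → ‖p e‖ ≤ 1 →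
      ‖p (V e) - transverseLinear p j V e (p e)‖ ≤ L * ‖p e‖ ^ 2 := by
  obtain ⟨B, hB0, hB⟩ := exists_norm_iteratedFDeriv_le_of_closedBall hV 2 (r + ‖j‖)
  refine ⟨‖p‖ * (B * ‖j‖ ^ 2), by positivity, fun e h1 h2 => ?_⟩
  have htaylor := norm_sub_sub_fderiv_le_of_convex (mod_cast contDiff_infty.1 hV 2)
    (convex_closedBall (0 : E) (r + ‖j‖)) hB (kerProj_mem_closedBall h1 h2)
    (mem_closedBall_of_norm_kerProj_le h1 h2)
  have hsub : e - kerProj p j e = j (p e) := by rw [kerProj_apply, sub_sub_cancel]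
  rw [hV0 _ (apply_kerProj hpj e), sub_zero, hsub] at htaylor
  have hpV : p (V e) - transverseLinear p j V e (p e)
      = p (V e - fderiv ℝ V (kerProj p j e) (j (p e))) := by
    simp [transverseLinear]
  grw [hpV, p.le_opNorm, htaylor, j.le_opNorm]
  exact le_of_eq (by ring)

theorem contDiff_multilinear_apply {S : E → X [×N]→L[ℝ] ℝ} (hS : ContDiff ℝ ∞ S) :
    ContDiff ℝ ∞ fun e => S e fun _ => p e := by
  have h1 : ContDiff ℝ ∞ fun z : (X [×N]→L[ℝ] ℝ) × (Fin N → X) => z.1 z.2 :=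
    contDiff_iff_contDiffAt.2 fun z => ((ContinuousLinearMap.id ℝ
      (X [×N]→L[ℝ] ℝ)).analyticAt_uncurry_of_multilinear (x := z)).contDiffAt
  exact h1.comp (hS.prodMk (contDiff_pi.2 fun _ => p.contDiff))

theorem fderiv_multilinear_apply {S : E → X [×N]→L[ℝ] ℝ} (hS : ContDiff ℝ ∞ S) (e u : E) :
    fderiv ℝ (fun e => S e fun _ => p e) e u =
      fderiv ℝ S e u (fun _ => p e) + ∑ i, S e (Function.update (fun _ => p e) i (p u)) := by
  have h := ((hS.differentiable (by simp) e).hasFDerivAt).continuousMultilinearMap_apply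
    (g := fun _ e => p e) (g' := fun _ => p) (fun _ => p.hasFDerivAt)
  rw [h.fderiv]
  simp

theorem norm_multilinear_update_le (T : X [×N]→L[ℝ] ℝ) (x y : X) (i : Fin N) {L : ℝ}
    (hy : ‖y‖ ≤ L * ‖x‖ ^ 2) :
    ‖T (Function.update (fun _ => x) i y)‖ ≤ ‖T‖ * L * ‖x‖ ^ (N + 1) := by
  have hprod : ∏ k, ‖Function.update (fun _ : Fin N => x) i y k‖ = ‖y‖ * ‖x‖ ^ (N - 1) := by
    rw [← Finset.mul_prod_erase _ _ (Finset.mem_univ i), Function.update_self,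
      Finset.prod_congr rfl (g := fun _ => ‖x‖)
        fun k hk => by rw [Function.update_of_ne (Finset.ne_of_mem_erase hk)]]
    simp
  have hN : 2 + (N - 1) = N + 1 := by have := i.pos; omega
  grw [T.le_opNorm, hprod, hy, mul_assoc, ← pow_add, hN, mul_assoc]

theorem hasOrder_fderiv_apply_multilinear [FiniteDimensional ℝ E] (hpj : ∀ x, p (j x) = x)
    (hV : ContDiff ℝ ∞ V) (hV0 : ∀ e, p e = 0 → V e = 0) (r : ℝ)
    {S : E → X [×N]→L[ℝ] ℝ} (hS : ContDiff ℝ ∞ S) :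
    HasOrder p j r (N + 1) fun e => fderiv ℝ S e (V e) fun _ => p e := by
  obtain ⟨L, -, hL⟩ := exists_norm_le_mul_norm_map hpj hV hV0 r
  obtain ⟨B, hB0, hB⟩ := exists_norm_iteratedFDeriv_le_of_closedBall hS 1 (r + ‖j‖)
  refine ⟨B * L, fun e h1 h2 => ?_⟩
  have hBe := hB e (mem_closedBall_of_norm_kerProj_le h1 h2)
  rw [norm_iteratedFDeriv_one] at hBe
  calc |fderiv ℝ S e (V e) fun _ => p e| ≤ ‖fderiv ℝ S e (V e)‖ * ‖p e‖ ^ N := by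
        simpa using (fderiv ℝ S e (V e)).le_opNorm fun _ => p e
    _ ≤ B * (L * ‖p e‖) * ‖p e‖ ^ N := by grw [(fderiv ℝ S e).le_opNorm, hBe, hL e h1 h2]
    _ = B * L * ‖p e‖ ^ (N + 1) := by ring

theorem hasOrder_multilinear_update [FiniteDimensional ℝ E] (hpj : ∀ x, p (j x) = x)
    (hV : ContDiff ℝ ∞ V) (hV0 : ∀ e, p e = 0 → V e = 0) (r : ℝ)
    {S : E → X [×N]→L[ℝ] ℝ} (hS : ContDiff ℝ ∞ S) (i : Fin N) :
    HasOrder p j r (N + 1) fun e => S e (Function.update (fun _ => p e) i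
      (p (V e) - transverseLinear p j V e (p e))) := by
  obtain ⟨L, hL0, hL⟩ := exists_norm_sub_transverseLinear_le hpj hV hV0 r
  obtain ⟨B, -, hB⟩ := exists_norm_iteratedFDeriv_le_of_closedBall hS 0 (r + ‖j‖)
  refine ⟨B * L, fun e h1 h2 => ?_⟩
  have hBe := hB e (mem_closedBall_of_norm_kerProj_le h1 h2)
  rw [norm_iteratedFDeriv_zero] at hBe
  rw [← Real.norm_eq_abs]
  grw [norm_multilinear_update_le _ _ _ _ (hL e h1 h2), hBe]

theorem hasOrder_fderiv_sub_multilinearDerivation [FiniteDimensional ℝ E]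
    (hpj : ∀ x, p (j x) = x) (hV : ContDiff ℝ ∞ V) (hV0 : ∀ e, p e = 0 → V e = 0) (r : ℝ)
    {S : E → X [×N]→L[ℝ] ℝ} (hS : ContDiff ℝ ∞ S) :
    HasOrder p j r (N + 1) fun e => fderiv ℝ (fun e => S e fun _ => p e) e (V e) -
      multilinearDerivation N (transverseLinear p j V e) (S e) fun _ => p e := by
  have h := (hasOrder_fderiv_apply_multilinear hpj hV hV0 r hS).add
    (HasOrder.sum (s := Finset.univ) fun i _ => hasOrder_multilinear_update hpj hV hV0 r hS i)
  refine cast (congrArg _ (funext fun e => ?_)) h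
  simp only [fderiv_multilinear_apply hS, multilinearDerivation_apply, add_sub_assoc,
    ContinuousMultilinearMap.map_update_sub, Finset.sum_sub_distrib]

theorem contDiff_smul_ringInverse {R : Type*} [NormedRing R] [NormedAlgebra ℝ R]
    [HasSummableGeomSeries R] {χ : E → ℝ} {a : E → R} (hχ : ContDiff ℝ ∞ χ)
    (ha : ContDiff ℝ ∞ a) (hu : ∀ e ∈ tsupport χ, IsUnit (a e)) :
    ContDiff ℝ ∞ fun e => χ e • Ring.inverse (a e) := by
  refine contDiff_iff_contDiffAt.2 fun e => ?_
  by_cases he : e ∈ tsupport χ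
  · obtain ⟨u, hu⟩ := hu e he
    have hinv := contDiffAt_ringInverse (n := ∞) ℝ u
    rw [hu] at hinv
    exact hχ.contDiffAt.smul (hinv.comp e ha.contDiffAt)
  · refine (contDiffAt_const (c := 0)).congr_of_eventuallyEq ?_
    filter_upwards [notMem_tsupport_iff_eventuallyEq.1 he] with z hz
    rw [hz, Pi.zero_apply, zero_smul]

/-- The coefficient of the homogeneous function of degree `N` whose derivative along `V` cancels
the Taylor coefficient of `g`, cut off by `θ` along the kernel of `p`. -/
noncomputable def solutionForm (p : E →L[ℝ] X) (j : X →L[ℝ] E) (V : E → E) (θ : E → ℝ) (N : ℕ)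
    (g : E → ℝ) (e : E) : X [×N]→L[ℝ] ℝ :=
  -(θ (kerProj p j e) •
    Ring.inverse (multilinearDerivation N (transverseLinear p j V e))) (taylorForm p j N g e)

theorem solutionForm_kerProj_add (hpj : ∀ x, p (j x) = x) (θ g : E → ℝ) (e : E) (x : X) :
    solutionForm p j V θ N g (kerProj p j e + j x) = solutionForm p j V θ N g e := by
  simp only [solutionForm, transverseLinear, taylorForm, kerProj_kerProj_add hpj]

theorem contDiff_solutionForm (hV : ContDiff ℝ ∞ V) {θ : E → ℝ}
    (hθ : ContDiff ℝ ∞ θ) (hunit : ∀ e, kerProj p j e ∈ tsupport θ →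
      IsUnit (multilinearDerivation N (transverseLinear p j V e)))
    {g : E → ℝ} (hg : ContDiff ℝ ∞ g) : ContDiff ℝ ∞ (solutionForm p j V θ N g) :=
  ((contDiff_smul_ringInverse (hθ.comp (kerProj p j).contDiff)
    ((contDiff_multilinearDerivation N).comp (contDiff_transverseLinear hV))
    fun e he => hunit e (tsupport_comp_subset_preimage _ (kerProj p j).continuous he)).clm_apply
    (contDiff_taylorForm hg)).neg

theorem multilinearDerivation_solutionForm {θ : E → ℝ} {e : E} (hθ : θ (kerProj p j e) = 1)
    (hunit : IsUnit (multilinearDerivation N (transverseLinear p j V e))) (g : E → ℝ) :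
    multilinearDerivation N (transverseLinear p j V e) (solutionForm p j V θ N g e) =
      -taylorForm p j N g e := by
  rw [solutionForm, hθ, one_smul, map_neg, ← mul_apply_eq_comp,
    Ring.mul_inverse_cancel _ hunit, one_apply_eq_self]

theorem exists_homogeneous_hasOrder_add_fderiv [FiniteDimensional ℝ E]
    (hpj : ∀ x, p (j x) = x) (hV : ContDiff ℝ ∞ V) (hV0 : ∀ e, p e = 0 → V e = 0) {r r' : ℝ}
    (hr : 0 < r) (hrr : r < r') (hunit : ∀ e, ‖kerProj p j e‖ ≤ r' →
      IsUnit (multilinearDerivation N (transverseLinear p j V e)))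
    {g : E → ℝ} (hg : ContDiff ℝ ∞ g) (hgN : HasOrder p j r N g) :
    ∃ h : E → ℝ, ContDiff ℝ ∞ h ∧ IsFiberHomogeneous p j N h ∧
      HasOrder p j r (N + 1) fun e => g e + fderiv ℝ h e (V e) := by
  let θ : ContDiffBump (0 : E) := ⟨r, r', hr, hrr⟩
  have hS : ContDiff ℝ ∞ (solutionForm p j V θ N g) :=
    contDiff_solutionForm hV θ.contDiff
      (fun e he => hunit e (by simpa [θ.tsupport_eq] using he)) hg
  refine ⟨fun e => solutionForm p j V θ N g e fun _ => p e, contDiff_multilinear_apply hS,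
    fun t e => ?_, ?_⟩
  · beta_reduce
    rw [← map_smul, solutionForm_kerProj_add hpj, apply_kerProj_add hpj]
    simpa using (solutionForm p j V θ N g e).map_smul_univ (fun _ => t) fun _ => p e
  · obtain ⟨C, hC⟩ := (hgN.sub_taylorForm hpj hg).add
      (hasOrder_fderiv_sub_multilinearDerivation hpj hV hV0 r hS)
    refine ⟨C, fun e h1 h2 => le_trans (le_of_eq ?_) (hC e h1 h2)⟩
    beta_reduce
    rw [multilinearDerivation_solutionForm (θ.one_of_mem_closedBall (by simpa [θ] using h1))
      (hunit e (h1.trans hrr.le)), neg_apply]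
    congr 1
    ring

theorem exists_formal_solution [FiniteDimensional ℝ E]
    (hpj : ∀ x, p (j x) = x) (hV : ContDiff ℝ ∞ V) (hV0 : ∀ e, p e = 0 → V e = 0) {r r' : ℝ}
    (hr : 0 < r) (hrr : r < r') (hunit : ∀ N ≥ 1, ∀ e, ‖kerProj p j e‖ ≤ r' →
      IsUnit (multilinearDerivation N (transverseLinear p j V e)))
    {g : E → ℝ} (hg : ContDiff ℝ ∞ g) (hg1 : HasOrder p j r 1 g) :
    ∃ h : ℕ → E → ℝ, (∀ n, ContDiff ℝ ∞ (h n)) ∧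
      (∀ n, IsFiberHomogeneous p j (n + 1) (h n)) ∧
      ∀ n, HasOrder p j r (n + 1) fun e => g e + ∑ k ∈ Finset.range n, fderiv ℝ (h k) e (V e) := by
  have step : ∀ (n : ℕ) (f : {f : E → ℝ // ContDiff ℝ ∞ f ∧ HasOrder p j r (n + 1) f}),
      ∃ h : E → ℝ, ContDiff ℝ ∞ h ∧
        IsFiberHomogeneous p j (n + 1) h ∧
        HasOrder p j r (n + 2) fun e => f.1 e + fderiv ℝ h e (V e) := fun n f =>
    exists_homogeneous_hasOrder_add_fderiv hpj hV hV0 hr hrr (hunit (n + 1) (by omega)) f.2.1 f.2.2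
  choose H hHs hHh hHo using step
  let G : ∀ n, {f : E → ℝ // ContDiff ℝ ∞ f ∧ HasOrder p j r (n + 1) f} := fun n =>
    Nat.rec ⟨g, hg, hg1⟩ (fun n f => ⟨fun e => f.1 e + fderiv ℝ (H n f) e (V e),
      f.2.1.add (((hHs n f).fderiv_right (by simp)).clm_apply hV), hHo n f⟩) n
  have hG : ∀ n e, (G n).1 e = g e + ∑ k ∈ Finset.range n, fderiv ℝ (H k (G k)) e (V e) := by
    intro n e
    induction n with
    | zero => simp [G]
    | succ n ih => rw [Finset.sum_range_succ, ← add_assoc, ← ih]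
  refine ⟨fun n => H n (G n), fun n => hHs n _, fun n => hHh n _, fun n => ?_⟩
  have := (G n).2.2
  rwa [funext (hG n)] at this

end FormalSolution

section Borel

variable {E X : Type*} [NormedAddCommGroup E] [NormedSpace ℝ E]
  [NormedAddCommGroup X] [NormedSpace ℝ X] {p : E →L[ℝ] X} {j : X →L[ℝ] E}

theorem norm_iteratedFDeriv_comp_clm_le {G : E → ℝ} (hG : ContDiff ℝ ∞ G) (L : E →L[ℝ] E) (i : ℕ)
    (e : E) :
    ‖iteratedFDeriv ℝ i (fun e => G (L e)) e‖ ≤ ‖iteratedFDeriv ℝ i G (L e)‖ * ‖L‖ ^ i := by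
  have h := L.iteratedFDeriv_comp_right hG e (i := i) (by exact_mod_cast le_top)
  change iteratedFDeriv ℝ i (fun e => G (L e)) e = _ at h
  rw [h]
  simpa using ContinuousMultilinearMap.norm_compContinuousLinearMap_le
    (iteratedFDeriv ℝ i G (L e)) fun _ => L

/-- The dilation by the factor `t` along the range of `j`, fixing the kernel of `p`. -/
def fiberDilation (p : E →L[ℝ] X) (j : X →L[ℝ] E) (t : ℝ) : E →L[ℝ] E :=
  kerProj p j + t • j.comp p

theorem fiberDilation_apply (t : ℝ) (e : E) :
    fiberDilation p j t e = kerProj p j e + t • j (p e) :=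
  rfl

theorem fiberDilation_eq_self {t : ℝ} {e : E} (h : t = 1 ∨ p e = 0) :
    fiberDilation p j t e = e := by
  rcases h with rfl | h
  · rw [fiberDilation_apply, one_smul, kerProj_add]
  · simp [fiberDilation_apply, kerProj_apply, h]

theorem map_fiberDilation (hpj : ∀ x, p (j x) = x) (t : ℝ) (e : E) :
    p (fiberDilation p j t e) = t • p e := by
  rw [fiberDilation_apply, ← map_smul, apply_kerProj_add hpj]

theorem fiberDilation_fiberDilation (hpj : ∀ x, p (j x) = x) (s t : ℝ) (e : E) :
    fiberDilation p j s (fiberDilation p j t e) = fiberDilation p j (s * t) e := by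
  rw [fiberDilation_apply, map_fiberDilation hpj, fiberDilation_apply, ← map_smul j,
    kerProj_kerProj_add hpj, fiberDilation_apply, map_smul, smul_smul]

theorem norm_fiberDilation_le {s t : ℝ} (hs : 1 ≤ s) (ht : |t| ≤ s) :
    ‖fiberDilation p j t‖ ≤ s * (‖kerProj p j‖ + ‖j‖ * ‖p‖) := by
  refine (norm_add_le _ _).trans ?_
  rw [norm_smul, Real.norm_eq_abs, mul_add]
  grw [ht, j.opNorm_comp_le]
  gcongr
  exact le_mul_of_one_le_left (norm_nonneg _) hs

theorem IsFiberHomogeneous.eq_zero {d : ℕ} {h : E → ℝ} (hh : IsFiberHomogeneous p j d h)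
    (hd : d ≠ 0) {e : E} (he : p e = 0) : h e = 0 := by
  have h0 := hh 0 e
  rwa [← fiberDilation_apply, fiberDilation_eq_self (Or.inr he), zero_pow hd, zero_mul] at h0

theorem IsFiberHomogeneous.exists_abs_le [FiniteDimensional ℝ E] (hpj : ∀ x, p (j x) = x) {d : ℕ}
    {h : E → ℝ} (hh : IsFiberHomogeneous p j d h) (hc : Continuous h) (R : ℝ) :
    ∃ C, 0 ≤ C ∧ ∀ e, ‖e‖ ≤ R → |h e| ≤ C * ‖p e‖ ^ d := by
  have : ProperSpace E := FiniteDimensional.proper ℝ E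
  obtain ⟨B, hB⟩ := (isCompact_closedBall (0 : E)
    (‖kerProj p j‖ * R + ‖j‖)).exists_bound_of_continuousOn hc.continuousOn
  refine ⟨|B|, abs_nonneg B, fun e he => ?_⟩
  set y := fiberDilation p j ‖p e‖⁻¹ e with hy
  have hyB : |h y| ≤ |B| := by
    refine (hB y ?_).trans (le_abs_self B)
    rw [mem_closedBall_zero_iff, hy, fiberDilation_apply]
    grw [norm_add_le, (kerProj p j).le_opNorm, he, norm_smul, j.le_opNorm, norm_inv, norm_norm,
      mul_left_comm, inv_mul_le_one, mul_one]
  have hhy : h e = ‖p e‖ ^ d * h y := by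
    rw [← hh, ← fiberDilation_apply, hy, fiberDilation_fiberDilation hpj, fiberDilation_eq_self]
    exact (eq_or_ne (p e) 0).symm.imp_left fun h0 => mul_inv_cancel₀ (norm_ne_zero_iff.2 h0)
  rw [hhy, abs_mul, abs_of_nonneg (by positivity), mul_comm]
  gcongr

theorem norm_iteratedFDeriv_comp_fiberDilation_le {G : E → ℝ} (hG : ContDiff ℝ ∞ G) {C ε : ℝ}
    {i n : ℕ} (hC : ∀ e, ‖iteratedFDeriv ℝ i G e‖ ≤ C) (hε : 0 < ε) (hε1 : ε ≤ 1) (hi : i ≤ n)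
    (e : E) :
    ‖iteratedFDeriv ℝ i (fun e => ε ^ (n + 1) * G (fiberDilation p j ε⁻¹ e)) e‖
      ≤ ε * (C * (‖kerProj p j‖ + ‖j‖ * ‖p‖) ^ i) := by
  set τ := fiberDilation p j ε⁻¹
  set c := ‖kerProj p j‖ + ‖j‖ * ‖p‖
  have hC0 : 0 ≤ C := (norm_nonneg _).trans (hC 0)
  have hτ : ‖τ‖ ≤ ε⁻¹ * c :=
    norm_fiberDilation_le ((one_le_inv₀ hε).2 hε1) (abs_of_pos (inv_pos.2 hε)).le
  have hsmul : iteratedFDeriv ℝ i (fun e => ε ^ (n + 1) * G (τ e)) e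
      = ε ^ (n + 1) • iteratedFDeriv ℝ i (fun e => G (τ e)) e :=
    iteratedFDeriv_const_smul_apply' (a := ε ^ (n + 1))
      ((hG.comp τ.contDiff).contDiffAt.of_le (by exact_mod_cast le_top))
  have hpow : ε ^ (n + 1) = ε * ε ^ (n - i) * ε ^ i := by
    rw [mul_assoc, ← pow_add, Nat.sub_add_cancel hi, pow_succ']
  rw [hsmul, norm_smul, Real.norm_of_nonneg (by positivity)]
  calc ε ^ (n + 1) * ‖iteratedFDeriv ℝ i (fun e => G (τ e)) e‖
      ≤ ε ^ (n + 1) * (C * (ε⁻¹ * c) ^ i) := by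
        grw [norm_iteratedFDeriv_comp_clm_le hG, hC, hτ]
    _ = ε * ε ^ (n - i) * (C * c ^ i) := by
        rw [hpow, mul_pow, inv_pow]
        field_simp
    _ ≤ ε * (C * c ^ i) := by
        gcongr
        exact mul_le_of_le_one_right hε.le (pow_le_one₀ hε.le hε1)

/-- `f` agrees with `h` near the ball of radius `r` of the kernel of `p`, is supported in the ball
of radius `R`, and is small together with its derivatives of order at most `n`. -/
structure IsSmallCutoff (p : E →L[ℝ] X) (j : X →L[ℝ] E) (R r ε : ℝ) (n : ℕ) (h f : E → ℝ) :
    Prop where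
  pos : 0 < ε
  smooth : ContDiff ℝ ∞ f
  norm_le : ∀ e, f e ≠ 0 → ‖e‖ ≤ R
  norm_iteratedFDeriv_le : ∀ i ≤ n, ∀ e, ‖iteratedFDeriv ℝ i f e‖ ≤ (1 / 2) ^ n
  abs_le : ∀ e, |f e| ≤ (1 / 2) ^ n * ‖p e‖ ^ n
  eq : ∀ e, ‖kerProj p j e‖ ≤ r → ‖p e‖ ≤ ε → f e = h e

theorem exists_pos_le_one_mul_le (D : ℝ) {δ : ℝ} (hδ : 0 < δ) :
    ∃ ε : ℝ, 0 < ε ∧ ε ≤ 1 ∧ ε * D ≤ δ := by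
  obtain ⟨c, hc, h⟩ := exists_pos_mul_lt hδ |D|
  refine ⟨min c 1, by positivity, min_le_right _ _, ?_⟩
  grw [le_abs_self D, min_le_left, mul_comm, h]

theorem norm_le_of_norm_fiberDilation_le (hpj : ∀ x, p (j x) = x) {ε R : ℝ} (hε : 0 < ε)
    (hε1 : ε ≤ 1) {e : E} (he : ‖fiberDilation p j ε⁻¹ e‖ ≤ R) :
    ‖e‖ ≤ (‖kerProj p j‖ + ‖j‖ * ‖p‖) * R ∧ ‖p e‖ ≤ ε * (‖p‖ * R) := by
  have hR : 0 ≤ R := (norm_nonneg _).trans he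
  constructor
  · rw [← fiberDilation_eq_self (p := p) (j := j) (e := e) (Or.inl (mul_inv_cancel₀ hε.ne')),
      ← fiberDilation_fiberDilation hpj]
    grw [(fiberDilation p j ε).le_opNorm, he,
      norm_fiberDilation_le le_rfl ((abs_of_pos hε).trans_le hε1), one_mul]
  · have hpe : p e = ε • p (fiberDilation p j ε⁻¹ e) := by
      rw [map_fiberDilation hpj, smul_smul, mul_inv_cancel₀ hε.ne', one_smul]
    rw [hpe, norm_smul, Real.norm_of_nonneg hε.le]
    grw [p.le_opNorm, he]

theorem norm_fiberDilation_inv_apply_le {ε r : ℝ} (hε : 0 < ε) {e : E} (h1 : ‖kerProj p j e‖ ≤ r)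
    (h2 : ‖p e‖ ≤ ε) : ‖fiberDilation p j ε⁻¹ e‖ ≤ r + ‖j‖ := by
  rw [fiberDilation_apply]
  grw [norm_add_le, h1, norm_smul, j.le_opNorm, h2, norm_inv, Real.norm_of_nonneg hε.le,
    mul_left_comm, inv_mul_cancel₀ hε.ne', mul_one]

theorem IsFiberHomogeneous.mul_comp_fiberDilation_inv {n : ℕ} {h : E → ℝ}
    (hhom : IsFiberHomogeneous p j n h) {ε : ℝ} (hε : ε ≠ 0) (χ : E → ℝ) (e : E) :
    χ (fiberDilation p j ε⁻¹ e) * h e =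
      ε ^ n * (χ (fiberDilation p j ε⁻¹ e) * h (fiberDilation p j ε⁻¹ e)) := by
  rw [show h (fiberDilation p j ε⁻¹ e) = _ from hhom _ e, inv_pow]
  field_simp

theorem exists_isSmallCutoff [FiniteDimensional ℝ E] (hpj : ∀ x, p (j x) = x) {n : ℕ} {h : E → ℝ}
    (hh : ContDiff ℝ ∞ h) (hhom : IsFiberHomogeneous p j (n + 1) h) {r : ℝ} (hr : 0 < r) :
    ∃ (f : E → ℝ) (ε : ℝ),
      IsSmallCutoff p j ((‖kerProj p j‖ + ‖j‖ * ‖p‖) * (r + ‖j‖ + 1)) r ε n h f := by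
  set R := r + ‖j‖ + 1
  let χ : ContDiffBump (0 : E) := ⟨r + ‖j‖, R, by positivity, by linarith⟩
  have hχ : ∀ e, χ e ≠ 0 → ‖e‖ ≤ R := fun e he => by
    by_contra! hlt
    exact he (χ.zero_of_le_dist (by simpa [χ] using hlt.le))
  have hG : ContDiff ℝ ∞ fun e => χ e * h e := χ.contDiff.mul hh
  obtain ⟨B, hB0, hB⟩ := hhom.exists_abs_le hpj hh.continuous
    ((‖kerProj p j‖ + ‖j‖ * ‖p‖) * R)
  choose C hC using fun i =>
    exists_norm_iteratedFDeriv_le_of_hasCompactSupport hG χ.hasCompactSupport.mul_right i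
  set D : ℕ → ℝ := fun i => C i * (‖kerProj p j‖ + ‖j‖ * ‖p‖) ^ i
  have hD : ∀ i, 0 ≤ D i := fun i =>
    mul_nonneg ((norm_nonneg _).trans (hC i 0)) (by positivity)
  obtain ⟨ε, hε, hε1, hεD⟩ := exists_pos_le_one_mul_le
    (B * (‖p‖ * R) + ∑ i ∈ Finset.range (n + 1), D i) (δ := (1 / 2) ^ n) (by positivity)
  rw [mul_add] at hεD
  set τ := fiberDilation p j ε⁻¹
  refine ⟨fun e => χ (τ e) * h e, ε, hε, (χ.contDiff.comp τ.contDiff).mul hh, fun e he => ?_,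
    fun i hi e => ?_, fun e => ?_, fun e h1 h2 => ?_⟩
  · exact (norm_le_of_norm_fiberDilation_le hpj hε hε1 (hχ _ (left_ne_zero_of_mul he))).1
  · rw [funext (hhom.mul_comp_fiberDilation_inv hε.ne' χ)]
    grw [norm_iteratedFDeriv_comp_fiberDilation_le hG (hC i) hε hε1 hi]
    have hDi := Finset.single_le_sum (fun k _ => hD k) (Finset.mem_range_succ_iff.2 hi)
    have := mul_le_mul_of_nonneg_left hDi hε.le
    have : 0 ≤ ε * (B * (‖p‖ * R)) := by positivity
    linarith
  · rcases eq_or_ne (χ (τ e)) 0 with h0 | h0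
    · simp only [h0, zero_mul, abs_zero]
      positivity
    obtain ⟨heR, hpe⟩ := norm_le_of_norm_fiberDilation_le hpj hε hε1 (hχ _ h0)
    rw [abs_mul, abs_of_nonneg χ.nonneg]
    have hsum := mul_nonneg hε.le (Finset.sum_nonneg fun i (_ : i ∈ Finset.range (n + 1)) => hD i)
    grw [χ.le_one, one_mul, hB e heR, pow_succ', ← mul_assoc, hpe]
    gcongr
    linarith
  · rw [χ.one_of_mem_closedBall, one_mul]
    exact mem_closedBall_zero_iff.2 (norm_fiberDilation_inv_apply_le hε h1 h2)

section Sum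

variable {R r : ℝ} {ε : ℕ → ℝ} {h f : ℕ → E → ℝ}

theorem IsSmallCutoff.abs_le_geometric {n : ℕ} {ε : ℝ} {h f : E → ℝ}
    (hf : IsSmallCutoff p j R r ε n h f) (e : E) : |f e| ≤ (1 / 2) ^ n := by
  simpa using hf.norm_iteratedFDeriv_le 0 n.zero_le e

theorem contDiff_tsum_tail (hf : ∀ n, IsSmallCutoff p j R r (ε n) n (h n) (f n)) (M : ℕ) :
    ContDiff ℝ ∞ fun e => ∑' n, f (n + M) e := by
  refine contDiff_tsum_of_eventually (v := fun _ n => (1 / 2 : ℝ) ^ (n + M))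
    (fun n => (hf _).smooth) (fun k _ => (summable_nat_add_iff M).2 summable_geometric_two)
    fun k _ => ?_
  rw [Nat.cofinite_eq_atTop]
  filter_upwards [eventually_ge_atTop k] with n hn e
  exact (hf (n + M)).norm_iteratedFDeriv_le k (hn.trans le_self_add) e

theorem hasCompactSupport_tsum_tail [FiniteDimensional ℝ E]
    (hf : ∀ n, IsSmallCutoff p j R r (ε n) n (h n) (f n)) (M : ℕ) :
    HasCompactSupport fun e => ∑' n, f (n + M) e := by
  have : ProperSpace E := FiniteDimensional.proper ℝ E
  refine HasCompactSupport.intro (isCompact_closedBall (0 : E) R) fun e he => ?_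
  have hfe : ∀ n, f (n + M) e = 0 := fun n => by
    by_contra h0
    exact he (mem_closedBall_zero_iff.2 ((hf _).norm_le e h0))
  simp [hfe]

theorem abs_tsum_tail_le (hf : ∀ n, IsSmallCutoff p j R r (ε n) n (h n) (f n)) (M : ℕ) (e : E) :
    ‖∑' n, f (n + M) e‖ ≤ 2 * ‖p e‖ ^ M := by
  refine tsum_of_norm_bounded (hasSum_geometric_two.mul_right (‖p e‖ ^ M)) fun n => ?_
  have hgeo : ((1 : ℝ) / 2) ^ (n + M) ≤ (1 / 2) ^ n :=
    pow_le_pow_of_le_one (by norm_num) (by norm_num) (by omega)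
  rw [Real.norm_eq_abs]
  rcases le_total ‖p e‖ 1 with he | he
  · grw [(hf (n + M)).abs_le, hgeo]
    gcongr ?_ * ?_
    exact pow_le_pow_of_le_one (norm_nonneg _) he (by omega)
  · grw [(hf (n + M)).abs_le_geometric, hgeo]
    exact le_mul_of_one_le_right (by positivity) (one_le_pow₀ he)

theorem fderiv_tsum_eq (hf : ∀ n, IsSmallCutoff p j R r (ε n) n (h n) (f n)) (M : ℕ) {e : E}
    (h1 : ‖kerProj p j e‖ < r) (h2 : ∀ k < M, ‖p e‖ < ε k) :
    fderiv ℝ (fun e => ∑' n, f n e) e =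
      ∑ k ∈ Finset.range M, fderiv ℝ (h k) e + fderiv ℝ (fun e => ∑' n, f (n + M) e) e := by
  have hsplit : (fun e => ∑' n, f n e) =
      fun e => ∑ k ∈ Finset.range M, f k e + ∑' n, f (n + M) e := funext fun e =>
    ((Summable.of_norm_bounded summable_geometric_two
      fun n => (hf n).abs_le_geometric e).sum_add_tsum_nat_add M).symm
  have hd : ∀ k ∈ Finset.range M, DifferentiableAt ℝ (f k) e := fun k _ =>
    (hf k).smooth.differentiable (by simp) e
  have hfh : ∀ k ∈ Finset.range M, fderiv ℝ (f k) e = fderiv ℝ (h k) e := fun k hk => by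
    refine EventuallyEq.fderiv_eq ?_
    filter_upwards [(kerProj p j).continuous.norm.continuousAt.eventually_lt_const h1,
      p.continuous.norm.continuousAt.eventually_lt_const (h2 k (Finset.mem_range.1 hk))]
      with z hz hz'
    exact (hf k).eq z hz.le hz'.le
  rw [hsplit, fderiv_fun_add (DifferentiableAt.fun_sum hd)
    ((contDiff_tsum_tail hf M).differentiable (by simp) e), fderiv_fun_sum hd,
    Finset.sum_congr rfl hfh]

end Sum

theorem exists_forall_lt_of_pos {ε : ℕ → ℝ} (hε : ∀ k, 0 < ε k) (M : ℕ) :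
    ∃ ρ > 0, ∀ k < M, ρ < ε k := by
  have h : ∀ᶠ ρ in 𝓝[>] (0 : ℝ), ∀ k ∈ Finset.range M, ρ < ε k :=
    (Finset.eventually_all _).2 fun k _ =>
      mem_nhdsWithin_of_mem_nhds (Iio_mem_nhds (hε k))
  obtain ⟨ρ, hρ, hρ0⟩ := (h.and self_mem_nhdsWithin).exists
  exact ⟨ρ, hρ0, fun k hk => hρ k (Finset.mem_range.2 hk)⟩

theorem exists_asymptotic_expansion [FiniteDimensional ℝ E] (hpj : ∀ x, p (j x) = x)
    {h : ℕ → E → ℝ} (hh : ∀ n, ContDiff ℝ ∞ (h n))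
    (hhom : ∀ n, IsFiberHomogeneous p j (n + 1) (h n)) {r : ℝ} (hr : 0 < r) :
    ∃ f : E → ℝ, ContDiff ℝ ∞ f ∧ (∀ e, p e = 0 → ‖kerProj p j e‖ < r → f e = 0) ∧
      ∀ N : ℕ, ∃ ρ > 0, ∃ C, ∀ e, ‖kerProj p j e‖ < r → ‖p e‖ < ρ →
        ‖fderiv ℝ f e - ∑ k ∈ Finset.range (2 * N), fderiv ℝ (h k) e‖ ≤ C * ‖p e‖ ^ N := by
  choose f ε hf using fun n => exists_isSmallCutoff hpj (hh n) (hhom n) hr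
  refine ⟨fun e => ∑' n, f n e, by simpa using contDiff_tsum_tail hf 0, fun e he hr' => ?_,
    fun N => ?_⟩
  · have hfe : ∀ n, f n e = 0 := fun n => by
      rw [(hf n).eq e hr'.le (by simpa [he] using (hf n).pos.le),
        (hhom n).eq_zero n.succ_ne_zero he]
    simp [hfe]
  · obtain ⟨C, hC⟩ := exists_norm_fderiv_le_of_norm_le (N := N) (contDiff_tsum_tail hf (2 * N))
      (hasCompactSupport_tsum_tail hf _) zero_le_two (abs_tsum_tail_le hf (2 * N))
    obtain ⟨ρ, hρ0, hρ⟩ := exists_forall_lt_of_pos (fun k => (hf k).pos) (2 * N)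
    refine ⟨ρ, hρ0, C, fun e h1 h2 => ?_⟩
    rw [fderiv_tsum_eq hf (2 * N) h1 fun k hk => h2.trans (hρ k hk), add_sub_cancel_left]
    exact hC e

end Borel

section CohomologicalEquation

variable {E X : Type*} [NormedAddCommGroup E] [NormedSpace ℝ E]
  [NormedAddCommGroup X] [NormedSpace ℝ X] {p : E →L[ℝ] X} {j : X →L[ℝ] E} {V : E → E}
  {f g : E → ℝ}

theorem IsFlat.of_norm_lt (hg : ContDiff ℝ ∞ g) (hc : HasCompactSupport g)
    (h : ∀ N : ℕ, ∃ ρ > 0, ∃ C, ∀ e, ‖p e‖ < ρ → ‖g e‖ ≤ C * ‖p e‖ ^ N) : IsFlat p g := by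
  refine ⟨hg, hc, fun N => ?_⟩
  obtain ⟨ρ, hρ, C, hC⟩ := h N
  obtain ⟨B, hB⟩ := exists_norm_iteratedFDeriv_le_of_hasCompactSupport hg hc 0
  simp only [norm_iteratedFDeriv_zero] at hB
  have hB0 : 0 ≤ B := (norm_nonneg _).trans (hB 0)
  refine ⟨max C (B / ρ ^ N), fun e => ?_⟩
  rcases lt_or_ge ‖p e‖ ρ with he | he
  · grw [hC e he, ← le_max_left]
  · calc ‖g e‖ ≤ B / ρ ^ N * ρ ^ N := by
          rw [div_mul_cancel₀ _ (by positivity)]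
          exact hB e
      _ ≤ max C (B / ρ ^ N) * ‖p e‖ ^ N := by
          gcongr
          exact le_max_right _ _

theorem exists_abs_add_fderiv_le [FiniteDimensional ℝ E] (hpj : ∀ x, p (j x) = x)
    (hV : ContDiff ℝ ∞ V) (hV0 : ∀ e, p e = 0 → V e = 0) {r : ℝ} {h : ℕ → E → ℝ}
    (hord : ∀ n, HasOrder p j r (n + 1) fun e => g e + ∑ k ∈ Finset.range n, fderiv ℝ (h k) e (V e))
    (hf : ∀ N : ℕ, ∃ ρ > 0, ∃ C, ∀ e, ‖kerProj p j e‖ < r → ‖p e‖ < ρ →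
      ‖fderiv ℝ f e - ∑ k ∈ Finset.range (2 * N), fderiv ℝ (h k) e‖ ≤ C * ‖p e‖ ^ N) (N : ℕ) :
    ∃ ρ > 0, ∃ C, 0 ≤ C ∧ ∀ e, ‖kerProj p j e‖ < r → ‖p e‖ < ρ →
      |g e + fderiv ℝ f e (V e)| ≤ C * ‖p e‖ ^ N := by
  obtain ⟨L, hL0, hL⟩ := exists_norm_le_mul_norm_map hpj hV hV0 r
  obtain ⟨ρ, hρ, C, hC⟩ := hf N
  obtain ⟨C', hC'⟩ := hord (2 * N)
  refine ⟨min ρ 1, by positivity, |C'| + |C| * L, by positivity, fun e he hpe => ?_⟩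
  have hpe1 : ‖p e‖ ≤ 1 := (hpe.trans_le (min_le_right _ _)).le
  have hsplit : g e + fderiv ℝ f e (V e) =
      (g e + ∑ k ∈ Finset.range (2 * N), fderiv ℝ (h k) e (V e)) +
        (fderiv ℝ f e - ∑ k ∈ Finset.range (2 * N), fderiv ℝ (h k) e) (V e) := by
    simp
  have hpow : ‖p e‖ ^ (2 * N + 1) ≤ ‖p e‖ ^ N :=
    pow_le_pow_of_le_one (norm_nonneg _) hpe1 (by omega)
  rw [hsplit, add_mul]
  refine (abs_add_le _ _).trans (add_le_add ?_ ?_)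
  · grw [hC' e he.le hpe1, le_abs_self C', hpow]
  · have hVe : ‖V e‖ ≤ L := (hL e he.le hpe1).trans (mul_le_of_le_one_right hL0 hpe1)
    rw [← Real.norm_eq_abs, mul_right_comm]
    grw [ContinuousLinearMap.le_opNorm, hC e he (hpe.trans_le (min_le_left _ _)), le_abs_self C,
      hVe]

theorem HasFlatSolutions.exists_local_solution [FiniteDimensional ℝ E]
    (hflat : HasFlatSolutions p V) (hpj : ∀ x, p (j x) = x) (hV : ContDiff ℝ ∞ V)
    (hV0 : ∀ e, p e = 0 → V e = 0) {r : ℝ} (hr : 0 < r)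
    (hunit : ∀ N ≥ 1, ∀ e, ‖kerProj p j e‖ ≤ r →
      IsUnit (multilinearDerivation N (transverseLinear p j V e)))
    (hg : ContDiff ℝ ∞ g) (hg0 : ∀ e, p e = 0 → g e = 0) :
    ∃ f : E → ℝ, ContDiff ℝ ∞ f ∧ (∀ᶠ e in 𝓝 0, fderiv ℝ f e (V e) = -g e) ∧
      ∀ᶠ e in 𝓝 0, p e = 0 → f e = 0 := by
  have hr2 : 0 < r / 2 := by positivity
  have hg1 : HasOrder p j (r / 2) 1 g := by
    obtain ⟨L, -, hL⟩ := exists_norm_le_mul_norm_map hpj hg hg0 (r / 2)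
    exact ⟨L, by simpa using hL⟩
  obtain ⟨h, hh, hhom, hord⟩ := exists_formal_solution hpj hV hV0 hr2 (half_lt_self hr) hunit hg hg1
  obtain ⟨f, hf, hf0, hfh⟩ := exists_asymptotic_expansion hpj hh hhom hr2
  have hball : ∀ᶠ e in 𝓝 (0 : E), ‖kerProj p j e‖ < r / 2 :=
    ((kerProj p j).continuous.norm.tendsto' 0 0 (by simp)).eventually_lt_const hr2
  obtain ⟨s, hs0, hs⟩ := Metric.eventually_nhds_iff_ball.1 hball
  let χ : ContDiffBump (0 : E) := ⟨s / 2, s, by positivity, half_lt_self hs0⟩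
  have hflatχ : IsFlat p fun e => χ e * (g e + fderiv ℝ f e (V e)) := by
    refine .of_norm_lt (χ.contDiff.mul (hg.add ((hf.fderiv_right (by simp)).clm_apply hV)))
      χ.hasCompactSupport.mul_right fun N => ?_
    obtain ⟨ρ, hρ, C, hC0, hC⟩ := exists_abs_add_fderiv_le hpj hV hV0 hord hfh N
    refine ⟨ρ, hρ, C, fun e he => ?_⟩
    rw [norm_mul, Real.norm_of_nonneg χ.nonneg, Real.norm_eq_abs]
    rcases lt_or_ge (dist e 0) s with hes | hes
    · grw [χ.le_one, one_mul, hC e (hs e hes) he]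
    · rw [χ.zero_of_le_dist hes, zero_mul]
      positivity
  obtain ⟨k, hk, hkV, hk0⟩ := hflat _ hflatχ
  refine ⟨fun e => f e + k e, hf.add hk, ?_, ?_⟩
  · filter_upwards [Metric.ball_mem_nhds (0 : E) (half_pos hs0)] with e he
    rw [fderiv_fun_add (hf.differentiable (by simp) e) (hk.differentiable (by simp) e),
      add_apply, hkV, χ.one_of_mem_closedBall (Metric.ball_subset_closedBall he)]
    ring
  · filter_upwards [hball] with e he hpe
    rw [hf0 e hpe he, hk0 e hpe, add_zero]

end CohomologicalEquation

section TameExtension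

variable {E X F : Type*} [NormedAddCommGroup E] [NormedSpace ℝ E]
  [NormedAddCommGroup X] [NormedSpace ℝ X] [NormedAddCommGroup F] [NormedSpace ℝ F]
  {p : E →L[ℝ] X} {j : X →L[ℝ] E} {U : Set E}

theorem exists_norm_iteratedFDeriv_clm_le (L : E →L[ℝ] F) {n : ℕ} (hn : 1 ≤ n) :
    ∃ C, ∀ x, ‖iteratedFDeriv ℝ n L x‖ ≤ C := by
  obtain ⟨n, rfl⟩ := Nat.exists_eq_add_of_le' hn
  have hL : fderiv ℝ L = fun _ => L := funext fun _ => L.fderiv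
  refine ⟨‖iteratedFDeriv ℝ n (fun _ : E => L) 0‖, fun x => le_of_eq ?_⟩
  rw [← norm_iteratedFDeriv_fderiv, hL]
  cases n with
  | zero => simp only [norm_iteratedFDeriv_zero]
  | succ n => simp only [iteratedFDeriv_succ_const, Pi.zero_apply]

theorem IsTameField.clm_add {L : E →L[ℝ] E} (hL : ∀ e, p e = 0 → L e = 0)
    {P : E → E} (hP : ContDiff ℝ ∞ P) (hPc : HasCompactSupport P) (hP0 : ∀ e, p e = 0 → P e = 0) :
    IsTameField p fun e => L e + P e where
  smooth := L.contDiff.add hP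
  bounded n hn := by
    obtain ⟨B, hB⟩ := exists_norm_iteratedFDeriv_clm_le L hn
    obtain ⟨C, hC⟩ := exists_norm_iteratedFDeriv_le_of_hasCompactSupport hP hPc n
    refine ⟨B + C, fun x => ?_⟩
    have hadd := iteratedFDeriv_add_apply (x := x) (i := n) L.contDiff.contDiffAt
      (hP.of_le (by exact_mod_cast le_top)).contDiffAt
    exact (congrArg norm hadd).trans_le (norm_add_le_of_le (hB x) (hC x))
  vanish e he := by rw [hL e he, hP0 e he, add_zero]

theorem contDiff_smul_of_tsupport_subset {χ : E → ℝ} (hχ : ContDiff ℝ ∞ χ) (hU : IsOpen U)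
    {f : E → F} (hf : ContDiffOn ℝ ∞ f U) (h : tsupport χ ⊆ U) :
    ContDiff ℝ ∞ fun e => χ e • f e := by
  rw [contDiff_iff_contDiffAt]
  intro e
  by_cases he : e ∈ tsupport χ
  · exact hχ.contDiffAt.smul (hf.contDiffAt (hU.mem_nhds (h he)))
  · refine contDiffAt_const (c := (0 : F)) |>.congr_of_eventuallyEq ?_
    filter_upwards [notMem_tsupport_iff_eventuallyEq.1 he] with x hx
    rw [hx, Pi.zero_apply, zero_smul]

theorem norm_sub_apply_kerProj_le {s : Set E} (hs : Convex ℝ s) {f : E → F} {ε : ℝ}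
    (hf : ∀ x ∈ s, DifferentiableAt ℝ f x) (hε : ∀ x ∈ s, ‖(fderiv ℝ f x).comp j‖ ≤ ε) {e : E}
    (h1 : kerProj p j e ∈ s) (h2 : e ∈ s) : ‖f e - f (kerProj p j e)‖ ≤ ε * ‖p e‖ := by
  let ι : X → E := fun x => kerProj p j e + j x
  have hconv : Convex ℝ (ι ⁻¹' s) :=
    (hs.translate_preimage_right (kerProj p j e)).linear_preimage j.toLinearMap
  have hd : ∀ x ∈ ι ⁻¹' s,
      HasFDerivWithinAt (fun x => f (ι x)) ((fderiv ℝ f (ι x)).comp j) (ι ⁻¹' s) x := fun x hx =>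
    ((hf _ hx).hasFDerivAt.comp x (j.hasFDerivAt.const_add _)).hasFDerivWithinAt
  simpa [ι, kerProj_add] using hconv.norm_image_sub_le_of_norm_hasFDerivWithin_le hd
    (fun x hx => hε _ hx) (x := 0) (y := p e) (by simpa [ι] using h1)
    (by simpa [ι, kerProj_add] using h2)

theorem exists_norm_le_mul_of_fderiv_comp_eq_zero (hpj : ∀ x, p (j x) = x) (hU : IsOpen U)
    (h0 : (0 : E) ∈ U) {f : E → F} (hf : ContDiffOn ℝ ∞ f U) (hf0 : ∀ e ∈ U, p e = 0 → f e = 0)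
    (hd : (fderiv ℝ f 0).comp j = 0) {ε : ℝ} (hε : 0 < ε) :
    ∃ ρ > 0, Metric.closedBall 0 ρ ⊆ U ∧ ∀ e ∈ Metric.closedBall 0 ρ, ‖f e‖ ≤ ε * ‖p e‖ := by
  have hc : ContinuousOn (fun e => (fderiv ℝ f e).comp j) U :=
    (hf.continuousOn_fderiv_of_isOpen hU (by simp)).clm_comp continuousOn_const
  have hsmall : ∀ᶠ e in 𝓝 (0 : E), ‖(fderiv ℝ f e).comp j‖ < ε :=
    (hc.continuousAt (hU.mem_nhds h0)).norm.eventually_lt_const (by simpa [hd] using hε)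
  obtain ⟨s, hs, hsU⟩ := Metric.eventually_nhds_iff_ball.1 ((hU.eventually_mem h0).and hsmall)
  have hball := Metric.ball_mem_nhds (0 : E) hs
  have hker : ∀ᶠ e in 𝓝 (0 : E), kerProj p j e ∈ Metric.ball (0 : E) s :=
    ((kerProj p j).continuous.tendsto' 0 0 (map_zero _)).eventually hball
  obtain ⟨ρ, hρ, hρs⟩ := Metric.nhds_basis_closedBall.eventually_iff.1 (hker.and hball)
  refine ⟨ρ, hρ, fun e he => (hsU e (hρs he).2).1, fun e he => ?_⟩
  obtain ⟨he1, he2⟩ := hρs he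
  have h := norm_sub_apply_kerProj_le (convex_ball 0 s)
    (fun x hx => (hf.contDiffAt (hU.mem_nhds (hsU x hx).1)).differentiableAt (by simp))
    (fun x hx => (hsU x hx).2.le) he1 he2
  rwa [hf0 _ (hsU _ he1).1 (apply_kerProj hpj e), sub_zero] at h

theorem exists_isTameField_eventuallyEq [FiniteDimensional ℝ E] (hpj : ∀ x, p (j x) = x)
    (hU : IsOpen U) (h0 : (0 : E) ∈ U) {V : E → E} (hV : ContDiffOn ℝ ∞ V U)
    (hV0 : ∀ e ∈ U, p e = 0 → V e = 0) {ε : ℝ} (hε : 0 < ε) :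
    ∃ V', IsTameField p V' ∧ V' =ᶠ[𝓝 0] V ∧
      ∀ e, ‖p (V' e) - transverseLinear p j V 0 (p e)‖ ≤ ε * ‖p e‖ := by
  set A := transverseLinear p j V 0 with hA
  set L : E →L[ℝ] E := j.comp (A.comp p) with hL
  have hLp : ∀ e, p (L e) = A (p e) := fun e => hpj _
  have hL0 : ∀ e, p e = 0 → L e = 0 := fun e he => by simp [hL, he]
  have hQ : ContDiffOn ℝ ∞ (fun e => V e - L e) U := hV.sub L.contDiff.contDiffOn
  have hd : (fderiv ℝ (fun e => p (V e - L e)) 0).comp j = 0 := by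
    have hVd := ((hV.contDiffAt (hU.mem_nhds h0)).differentiableAt (by simp)).hasFDerivAt
    have hpd : HasFDerivAt (fun e => p (V e - L e)) (p.comp (fderiv ℝ V 0 - L)) 0 :=
      p.hasFDerivAt.comp 0 (hVd.sub L.hasFDerivAt)
    rw [hpd.fderiv]
    ext x
    simp [hLp, hpj, hA, transverseLinear]
  obtain ⟨ρ, hρ, hρU, hρQ⟩ := exists_norm_le_mul_of_fderiv_comp_eq_zero hpj hU h0
    (p.contDiff.comp_contDiffOn hQ) (fun e he hpe => by simp [hV0 e he hpe, hL0 e hpe]) hd hε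
  let χ : ContDiffBump (0 : E) := ⟨ρ / 2, ρ, by positivity, half_lt_self hρ⟩
  have hχ0 : ∀ e ∉ Metric.closedBall (0 : E) ρ, χ e = 0 := fun e he =>
    χ.zero_of_le_dist (not_le.1 he).le
  refine ⟨fun e => L e + χ e • (V e - L e), .clm_add hL0
    (contDiff_smul_of_tsupport_subset χ.contDiff hU hQ (χ.tsupport_eq.trans_subset hρU))
    χ.hasCompactSupport.smul_right fun e he => ?_, ?_, fun e => ?_⟩
  · by_cases heρ : e ∈ Metric.closedBall (0 : E) ρ
    · rw [hV0 e (hρU heρ) he, hL0 e he, sub_zero, smul_zero]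
    · rw [hχ0 e heρ, zero_smul]
  · filter_upwards [Metric.ball_mem_nhds (0 : E) (half_pos hρ)] with e he
    rw [χ.one_of_mem_closedBall (Metric.ball_subset_closedBall he), one_smul, add_sub_cancel]
  · rw [← hLp, map_add, add_sub_cancel_left, map_smul, norm_smul, Real.norm_of_nonneg χ.nonneg]
    by_cases he : e ∈ Metric.closedBall (0 : E) ρ
    · exact (mul_le_of_le_one_left (norm_nonneg _) χ.le_one).trans (hρQ e he)
    · rw [hχ0 e he, zero_mul]
      positivity

end TameExtension

section Nonresonance

/-- The eigenvalues of the endomorphism `A` of the plane, given by their sum and product, have no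
resonances of first type. -/
def IsNonresonant (A : ℝ × ℝ →L[ℝ] ℝ × ℝ) : Prop :=
  ∃ a b : ℂ, a + b = ((A (1, 0)).1 + (A (0, 1)).2 : ℝ) ∧
    a * b = ((A (1, 0)).1 * (A (0, 1)).2 - (A (0, 1)).1 * (A (1, 0)).2 : ℝ) ∧
    ∀ m n : ℕ, 1 ≤ m + n → m * a + n * b ≠ 0

theorem plane_clm_apply (A : ℝ × ℝ →L[ℝ] ℝ × ℝ) (x : ℝ × ℝ) :
    A x = ((A (1, 0)).1 * x.1 + (A (0, 1)).1 * x.2, (A (1, 0)).2 * x.1 + (A (0, 1)).2 * x.2) := by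
  have hx : x = x.1 • ((1 : ℝ), (0 : ℝ)) + x.2 • ((0 : ℝ), (1 : ℝ)) := by ext <;> simp
  conv_lhs => rw [hx, map_add, map_smul, map_smul]
  ext <;> simp [mul_comm]

theorem plane_clm_apply_apply (A : ℝ × ℝ →L[ℝ] ℝ × ℝ) (x : ℝ × ℝ) :
    A (A x) = ((A (1, 0)).1 + (A (0, 1)).2) • A x -
      ((A (1, 0)).1 * (A (0, 1)).2 - (A (0, 1)).1 * (A (1, 0)).2) • x := by
  rw [plane_clm_apply A (A x), plane_clm_apply A x]
  ext <;> simp <;> ring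

namespace IsNonresonant

variable {A : ℝ × ℝ →L[ℝ] ℝ × ℝ}

theorem isUnit_multilinearDerivation (hA : IsNonresonant A) {N : ℕ} (hN : 1 ≤ N) :
    IsUnit (multilinearDerivation N A) := by
  obtain ⟨a, b, hτ, hδ, h⟩ := hA
  exact _root_.isUnit_multilinearDerivation (plane_clm_apply_apply A) hτ hδ
    fun m n hmn => h m n (hmn ▸ hN)

theorem det_neg_or_det_pos_and_trace_ne_zero (hA : IsNonresonant A) :
    (A (1, 0)).1 * (A (0, 1)).2 - (A (0, 1)).1 * (A (1, 0)).2 < 0 ∨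
      0 < (A (1, 0)).1 * (A (0, 1)).2 - (A (0, 1)).1 * (A (1, 0)).2 ∧
        (A (1, 0)).1 + (A (0, 1)).2 ≠ 0 := by
  obtain ⟨a, b, hτ, hδ, h⟩ := hA
  have ha : a ≠ 0 := by simpa using h 1 0
  have hb : b ≠ 0 := by simpa using h 0 1
  have hab : a + b ≠ 0 := by simpa using h 1 1
  have hdet := hδ ▸ mul_ne_zero ha hb
  have htr := hτ ▸ hab
  norm_cast at hdet htr
  exact (lt_or_gt_of_ne hdet).imp_right fun hpos => ⟨hpos, htr⟩

theorem exists_hasFlatSolutions {E : Type*} [NormedAddCommGroup E] [NormedSpace ℝ E]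
    [FiniteDimensional ℝ E] (hA : IsNonresonant A) (p : E →L[ℝ] ℝ × ℝ) :
    ∃ ε > 0, ∀ V, IsTameField p V → (∀ e, ‖p (V e) - A (p e)‖ ≤ ε * ‖p e‖) →
      HasFlatSolutions p V :=
  exists_hasFlatSolutions_of_hyperbolic p (plane_clm_apply A)
    hA.det_neg_or_det_pos_and_trace_ne_zero

end IsNonresonant

end Nonresonance

section LocalSolution

variable {E X F : Type*} [NormedAddCommGroup E] [NormedSpace ℝ E]
  [NormedAddCommGroup X] [NormedSpace ℝ X] [NormedAddCommGroup F] [NormedSpace ℝ F]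
  {p : E →L[ℝ] X} {j : X →L[ℝ] E}

theorem transverseLinear_eq_of_eventuallyEq (hpj : ∀ x, p (j x) = x) {V V' : E → E} {e : E}
    (h : V' =ᶠ[𝓝 (kerProj p j e)] V) :
    transverseLinear p j V' e = transverseLinear p j V (kerProj p j e) := by
  rw [transverseLinear, transverseLinear, h.fderiv_eq, kerProj_apply (kerProj p j e),
    apply_kerProj hpj, map_zero, sub_zero]

theorem fderiv_zero_apply_eq_zero_of_eventually {f : E → F} (hf : DifferentiableAt ℝ f 0)
    (hf0 : ∀ᶠ e in 𝓝 0, p e = 0 → f e = 0) {x : E} (hx : p x = 0) : fderiv ℝ f 0 x = 0 := by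
  have hline : HasDerivAt (fun t : ℝ => t • x) x 0 := by
    simpa using (hasDerivAt_id (0 : ℝ)).smul_const x
  have hcomp : HasDerivAt (fun t : ℝ => f (t • x)) (fderiv ℝ f 0 x) 0 :=
    HasFDerivAt.comp_hasDerivAt (0 : ℝ) (by simpa using hf.hasFDerivAt) hline
  have hzero : (fun t : ℝ => f (t • x)) =ᶠ[𝓝 0] fun _ => 0 := by
    have htend : Tendsto (fun t : ℝ => t • x) (𝓝 0) (𝓝 0) := by
      simpa using hline.continuousAt.tendsto
    filter_upwards [htend.eventually hf0] with t ht
    exact ht (by rw [map_smul, hx, smul_zero])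
  exact hcomp.unique ((hasDerivAt_const 0 0).congr_of_eventuallyEq hzero)

end LocalSolution

section Straightening

variable {E F : Type*} [NormedAddCommGroup E] [NormedSpace ℝ E] [FiniteDimensional ℝ E]
  [NormedAddCommGroup F] [NormedSpace ℝ F] [FiniteDimensional ℝ F]

theorem exists_local_diffeomorphism_of_injective_fderiv {Φ : E → E} {x : E}
    (hΦ : ContDiff ℝ ∞ Φ) (hΦ' : Function.Injective (fderiv ℝ Φ x)) {S : Set E} (hS : S ∈ 𝓝 x) :
    ∃ (U U' : Set E) (Ψ : E → E), IsOpen U ∧ IsOpen U' ∧ x ∈ U ∧ U ⊆ S ∧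
      ContDiffOn ℝ ∞ Ψ U' ∧ Set.MapsTo Φ U U' ∧ Set.MapsTo Ψ U' U ∧
      (∀ e ∈ U, Ψ (Φ e) = e) ∧ ∀ y ∈ U', Φ (Ψ y) = y := by
  have : CompleteSpace E := FiniteDimensional.complete ℝ E
  let A : E ≃L[ℝ] E :=
    (LinearEquiv.ofInjectiveEndo (fderiv ℝ Φ x).toLinearMap hΦ').toContinuousLinearEquiv
  have hA : (A : E →L[ℝ] E) = fderiv ℝ Φ x := by ext e; rfl
  have hΦA : HasFDerivAt Φ (A : E →L[ℝ] E) x :=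
    hA ▸ (hΦ.differentiable (by simp) x).hasFDerivAt
  have hinv : ∀ᶠ e in 𝓝 x, ∃ B : E ≃L[ℝ] E, (B : E →L[ℝ] E) = fderiv ℝ Φ e :=
    (hΦ.continuous_fderiv (by simp)).tendsto x (hA ▸ ContinuousLinearEquiv.nhds A)
  obtain ⟨T, hT, hTo, hxT⟩ := mem_nhds_iff.1 (hinv.and hS)
  let φ := (hΦ.contDiffAt.toOpenPartialHomeomorph Φ hΦA (by simp)).restrOpen T hTo
  refine ⟨φ.source, φ.target, φ.symm, φ.open_source, φ.open_target,
    ⟨hΦ.contDiffAt.mem_toOpenPartialHomeomorph_source hΦA (by simp), hxT⟩,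
    fun e he => (hT he.2).2, fun y hy => ?_, φ.mapsTo, φ.symm.mapsTo,
    fun e he => φ.left_inv he, fun y hy => φ.right_inv hy⟩
  obtain ⟨B, hB⟩ := (hT (φ.map_target hy).2).1
  refine (φ.contDiffAt_symm (f₀' := B) hy ?_ hΦ.contDiffAt).contDiffWithinAt
  rw [hB]
  exact (hΦ.differentiable (by simp) _).hasFDerivAt

variable {p : E →L[ℝ] ℝ × ℝ} {j : ℝ × ℝ →L[ℝ] E} {V : E → E} {U₀ : Set E}

theorem exists_local_solution_of_isNonresonant (hpj : ∀ x, p (j x) = x) (hU₀ : IsOpen U₀)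
    (h0 : (0 : E) ∈ U₀) (hV : ContDiffOn ℝ ∞ V U₀) (hV0 : ∀ e ∈ U₀, p e = 0 → V e = 0)
    (hA : ∀ᶠ e in 𝓝 0, IsNonresonant (transverseLinear p j V e)) (q : E →L[ℝ] ℝ) :
    ∃ f : E → ℝ, ContDiff ℝ ∞ f ∧ (∀ᶠ e in 𝓝 0, fderiv ℝ f e (V e) = -q (V e)) ∧
      ∀ᶠ e in 𝓝 0, p e = 0 → f e = 0 := by
  obtain ⟨ε, hε, hflat⟩ := hA.self_of_nhds.exists_hasFlatSolutions p
  obtain ⟨V', htame, heq, hlin⟩ := exists_isTameField_eventuallyEq hpj hU₀ h0 hV hV0 hε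
  obtain ⟨r, hr, hball⟩ := Metric.nhds_basis_closedBall.eventually_iff.1
    (heq.eventually_nhds.and hA)
  have hunit : ∀ N ≥ 1, ∀ e, ‖kerProj p j e‖ ≤ r →
      IsUnit (multilinearDerivation N (transverseLinear p j V' e)) := by
    intro N hN e he
    obtain ⟨hVe, hAe⟩ := hball (mem_closedBall_zero_iff.2 he)
    rw [transverseLinear_eq_of_eventuallyEq hpj hVe]
    exact hAe.isUnit_multilinearDerivation hN
  obtain ⟨f, hf, hfV, hf0⟩ := (hflat V' htame hlin).exists_local_solution hpj htame.smooth
    htame.vanish hr hunit (g := q ∘ V') (q.contDiff.comp htame.smooth)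
    fun e he => by rw [Function.comp_apply, htame.vanish e he, map_zero]
  refine ⟨f, hf, ?_, hf0⟩
  filter_upwards [hfV, heq] with e he hVe
  rwa [Function.comp_apply, hVe] at he

theorem exists_local_vector_solution_of_isNonresonant (hpj : ∀ x, p (j x) = x) (hU₀ : IsOpen U₀)
    (h0 : (0 : E) ∈ U₀) (hV : ContDiffOn ℝ ∞ V U₀) (hV0 : ∀ e ∈ U₀, p e = 0 → V e = 0)
    (hA : ∀ᶠ e in 𝓝 0, IsNonresonant (transverseLinear p j V e)) (q : E →L[ℝ] F) :
    ∃ f : E → F, ContDiff ℝ ∞ f ∧ (∀ᶠ e in 𝓝 0, fderiv ℝ f e (V e) = -q (V e)) ∧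
      ∀ᶠ e in 𝓝 0, p e = 0 → f e = 0 := by
  let b := (Module.finBasis ℝ F).equivFunL
  choose f hf hfV hf0 using fun i => exists_local_solution_of_isNonresonant hpj hU₀ h0 hV hV0 hA
    ((ContinuousLinearMap.proj i).comp (b.toContinuousLinearMap.comp q))
  have hd : ∀ e, HasFDerivAt (fun x => b.symm fun i => f i x)
      (b.symm.toContinuousLinearMap.comp (.pi fun i => fderiv ℝ (f i) e)) e := fun e =>
    b.symm.hasFDerivAt.comp e
      (hasFDerivAt_pi.2 fun i => ((hf i).differentiable (by simp) e).hasFDerivAt)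
  refine ⟨fun x => b.symm fun i => f i x, b.symm.contDiff.comp (contDiff_pi.2 hf), ?_, ?_⟩
  · filter_upwards [eventually_all.2 hfV] with e he
    rw [(hd e).fderiv, ContinuousLinearMap.comp_apply, ContinuousLinearEquiv.coe_coe,
      ContinuousLinearEquiv.symm_apply_eq, map_neg]
    ext i
    exact he i
  · filter_upwards [eventually_all.2 hf0] with e he hpe
    rw [funext fun i => he i hpe]
    exact map_zero b.symm

theorem exists_straightening (hpj : ∀ x, p (j x) = x) (hU₀ : IsOpen U₀) (h0 : (0 : E) ∈ U₀)
    (hV : ContDiffOn ℝ ∞ V U₀) (hV0 : ∀ e ∈ U₀, p e = 0 → V e = 0)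
    (hA : ∀ᶠ e in 𝓝 0, IsNonresonant (transverseLinear p j V e)) :
    ∃ (U U' : Set E) (Φ Ψ : E → E), IsOpen U ∧ IsOpen U' ∧ 0 ∈ U ∧ 0 ∈ U' ∧ U ⊆ U₀ ∧
      ContDiffOn ℝ ∞ Φ U ∧ ContDiffOn ℝ ∞ Ψ U' ∧ Φ 0 = 0 ∧ Set.MapsTo Φ U U' ∧
      Set.MapsTo Ψ U' U ∧ (∀ x ∈ U, Ψ (Φ x) = x) ∧ (∀ y ∈ U', Φ (Ψ y) = y) ∧
      ∀ x ∈ U, kerProj p j (fderiv ℝ Φ x (V x)) = 0 := by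
  set k := kerProj p j
  have hpk : ∀ x, p (k x) = 0 := apply_kerProj hpj
  have hk : ∀ x, p x = 0 → k x = x := fun x hx => by simp [k, kerProj_apply, hx]
  obtain ⟨f, hf, hfV, hf0⟩ :=
    exists_local_vector_solution_of_isNonresonant hpj hU₀ h0 hV hV0 hA k
  let Φ : E → E := fun e => e + k (f e)
  have hΦ : ContDiff ℝ ∞ Φ := contDiff_id.add (k.contDiff.comp hf)
  have hΦ0 : Φ 0 = 0 := by simp [Φ, hf0.self_of_nhds (map_zero p)]
  have hfd : ∀ e, fderiv ℝ Φ e = .id ℝ E + k.comp (fderiv ℝ f e) := fun e =>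
    ((hasFDerivAt_id e).add
      (k.hasFDerivAt.comp e (hf.differentiable (by simp) e).hasFDerivAt)).fderiv
  have hinj : Function.Injective (fderiv ℝ Φ 0) := by
    refine (injective_iff_map_eq_zero _).2 fun x hx => ?_
    have hx' : x + k (fderiv ℝ f 0 x) = 0 := by simpa [hfd] using hx
    have hpx : p x = 0 := by simpa [hpk] using congrArg p hx'
    simpa [fderiv_zero_apply_eq_zero_of_eventually (hf.differentiable (by simp) 0) hf0 hpx]
      using hx'
  obtain ⟨U, U', Ψ, hU, hU', h0U, hUS, hΨ, hΦU, hΨU', hl, hr⟩ :=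
    exists_local_diffeomorphism_of_injective_fderiv hΦ hinj ((hU₀.eventually_mem h0).and hfV)
  refine ⟨U, U', Φ, Ψ, hU, hU', h0U, hΦ0 ▸ hΦU h0U, fun x hx => (hUS hx).1, hΦ.contDiffOn, hΨ,
    hΦ0, hΦU, hΨU', hl, hr, fun x hx => ?_⟩
  have hsol : fderiv ℝ f x (V x) = -k (V x) := (hUS hx).2
  simp [hfd, hsol, hk _ (hpk _)]

end Straightening

section Plane

variable {F : Type*} [NormedAddCommGroup F] [NormedSpace ℝ F]

/-- The projection `(ξ, η, ζ) ↦ (ξ, η)`, whose kernel is the subspace of singular points. -/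
def planeProj (F : Type*) [NormedAddCommGroup F] [NormedSpace ℝ F] : ℝ × ℝ × F →L[ℝ] ℝ × ℝ :=
  (ContinuousLinearMap.fst ℝ ℝ (ℝ × F)).prod
    ((ContinuousLinearMap.fst ℝ ℝ F).comp (ContinuousLinearMap.snd ℝ ℝ (ℝ × F)))

/-- The section `(ξ, η) ↦ (ξ, η, 0)` of `planeProj F`. -/
def planeIncl (F : Type*) [NormedAddCommGroup F] [NormedSpace ℝ F] : ℝ × ℝ →L[ℝ] ℝ × ℝ × F :=
  (ContinuousLinearMap.fst ℝ ℝ ℝ).prod ((ContinuousLinearMap.snd ℝ ℝ ℝ).prod 0)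

theorem planeProj_planeIncl (x : ℝ × ℝ) : planeProj F (planeIncl F x) = x := rfl

theorem kerProj_plane (e : ℝ × ℝ × F) : kerProj (planeProj F) (planeIncl F) e = (0, 0, e.2.2) := by
  simp [kerProj_apply, planeProj, planeIncl, Prod.ext_iff]

theorem eq_zero_of_planeProj_eq_zero {v w : ℝ × ℝ × F → ℝ} {g : ℝ × ℝ × F → F} {U : Set (ℝ × ℝ × F)}
    (h : ∀ ζ, (0, 0, ζ) ∈ U → v (0, 0, ζ) = 0 ∧ w (0, 0, ζ) = 0 ∧ g (0, 0, ζ) = 0)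
    {e : ℝ × ℝ × F} (heU : e ∈ U) (he : planeProj F e = 0) : (v e, w e, g e) = 0 := by
  obtain ⟨ξ, η, ζ⟩ := e
  obtain ⟨rfl, rfl⟩ := Prod.mk.inj he
  obtain ⟨hv, hw, hg⟩ := h ζ heU
  simp [hv, hw, hg]

theorem transverseLinear_plane {v w : ℝ × ℝ × F → ℝ} {g : ℝ × ℝ × F → F} {ζ : F}
    (hv : DifferentiableAt ℝ v (0, 0, ζ)) (hw : DifferentiableAt ℝ w (0, 0, ζ))
    (hg : DifferentiableAt ℝ g (0, 0, ζ)) (ξ η : ℝ) (x : ℝ × ℝ) :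
    transverseLinear (planeProj F) (planeIncl F) (fun e => (v e, w e, g e)) (ξ, η, ζ) x =
      (fderiv ℝ v (0, 0, ζ) (x.1, x.2, 0), fderiv ℝ w (0, 0, ζ) (x.1, x.2, 0)) := by
  rw [transverseLinear, kerProj_plane,
    (hv.hasFDerivAt.prodMk (hw.hasFDerivAt.prodMk hg.hasFDerivAt)).fderiv]
  rfl

end Plane

theorem stmt8_general {F : Type*} [NormedAddCommGroup F] [NormedSpace ℝ F] [FiniteDimensional ℝ F]
    {U₀ : Set (ℝ × ℝ × F)} (hU₀ : IsOpen U₀) (h0 : (0 : ℝ × ℝ × F) ∈ U₀)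
    {v w : ℝ × ℝ × F → ℝ} {g : ℝ × ℝ × F → F}
    (hv : ContDiffOn ℝ ∞ v U₀) (hw : ContDiffOn ℝ ∞ w U₀) (hg : ContDiffOn ℝ ∞ g U₀)
    (hvanish : ∀ ζ, (0, 0, ζ) ∈ U₀ → v (0, 0, ζ) = 0 ∧ w (0, 0, ζ) = 0 ∧ g (0, 0, ζ) = 0)
    {Z : Set F} (hZ : Z ∈ 𝓝 0) {lam₁ lam₂ : F → ℂ}
    (hlam : ∀ ζ ∈ Z,
      lam₁ ζ + lam₂ ζ =
        (fderiv ℝ v (0, 0, ζ) (1, 0, 0) + fderiv ℝ w (0, 0, ζ) (0, 1, 0) : ℝ) ∧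
      lam₁ ζ * lam₂ ζ =
        (fderiv ℝ v (0, 0, ζ) (1, 0, 0) * fderiv ℝ w (0, 0, ζ) (0, 1, 0) -
          fderiv ℝ v (0, 0, ζ) (0, 1, 0) * fderiv ℝ w (0, 0, ζ) (1, 0, 0) : ℝ))
    (hres : ∀ ζ ∈ Z, ∀ p₁ p₂ : ℕ, 1 ≤ p₁ + p₂ → p₁ * lam₁ ζ + p₂ * lam₂ ζ ≠ 0) :
    ∃ (U U' : Set (ℝ × ℝ × F)) (Φ Ψ : ℝ × ℝ × F → ℝ × ℝ × F),
      IsOpen U ∧ IsOpen U' ∧ 0 ∈ U ∧ 0 ∈ U' ∧ U ⊆ U₀ ∧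
      ContDiffOn ℝ ∞ Φ U ∧ ContDiffOn ℝ ∞ Ψ U' ∧ Φ 0 = 0 ∧ Set.MapsTo Φ U U' ∧
      Set.MapsTo Ψ U' U ∧ (∀ x ∈ U, Ψ (Φ x) = x) ∧ (∀ y ∈ U', Φ (Ψ y) = y) ∧
      ∀ x ∈ U, (fderiv ℝ Φ x (v x, w x, g x)).2.2 = 0 := by
  have hA : ∀ᶠ e in 𝓝 0, IsNonresonant
      (transverseLinear (planeProj F) (planeIncl F) (fun e => (v e, w e, g e)) e) := by
    have hsnd : Tendsto (fun e : ℝ × ℝ × F => e.2.2) (𝓝 0) (𝓝 0) :=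
      continuous_snd.snd.tendsto' 0 0 rfl
    have hker : Tendsto (fun e : ℝ × ℝ × F => ((0 : ℝ), (0 : ℝ), e.2.2)) (𝓝 0) (𝓝 0) :=
      Continuous.tendsto' (by fun_prop) 0 0 rfl
    filter_upwards [hsnd.eventually hZ, hker.eventually (hU₀.mem_nhds h0)] with ⟨ξ, η, ζ⟩ hζZ hζU
    have hd : DifferentiableAt ℝ (fun e => (v e, w e, g e)) (0, 0, ζ) :=
      ((hv.prodMk (hw.prodMk hg)).contDiffAt (hU₀.mem_nhds hζU)).differentiableAt (by simp)
    refine ⟨lam₁ ζ, lam₂ ζ, ?_, ?_, hres ζ hζZ⟩ <;>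
      simp only [transverseLinear_plane hd.fst hd.snd.fst hd.snd.snd, hlam ζ hζZ]
  obtain ⟨U, U', Φ, Ψ, hU, hU', h0U, h0U', hUU, hΦ, hΨ, hΦ0, hΦU, hΨU', hl, hr, hker⟩ :=
    exists_straightening planeProj_planeIncl hU₀ h0 (hv.prodMk (hw.prodMk hg))
      (fun e => eq_zero_of_planeProj_eq_zero hvanish) hA
  refine ⟨U, U', Φ, Ψ, hU, hU', h0U, h0U', hUU, hΦ, hΨ, hΦ0, hΦU, hΨU', hl, hr, fun x hx => ?_⟩
  simpa [kerProj_plane] using hker x hx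

/-- If `Re λ₁(0) ≠ 0`, `Re λ₂(0) ≠ 0` and there are no first-type resonances of any order
for all `ζ` near `0`, then the germ of `V` at `0` is `C^∞`-smoothly equivalent to a field
of the form `ξ̇ = v̄, η̇ = w̄, ζ̇ᵢ = 0`: there is a local `C^∞` diffeomorphism `Φ` fixing `0`
such that the transported field `DΦ(x)·V(x)` has its last `l` components zero. -/
theorem stmt8 (l : ℕ)
    (U₀ : Set (ℝ × ℝ × (Fin l → ℝ))) (hU₀ : IsOpen U₀) (h0 : (0 : ℝ × ℝ × (Fin l → ℝ)) ∈ U₀)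
    (v w : (ℝ × ℝ × (Fin l → ℝ)) → ℝ) (α β : Fin l → (ℝ × ℝ × (Fin l → ℝ)) → ℝ)
    (hv : ContDiffOn ℝ (⊤ : ℕ∞) v U₀) (hw : ContDiffOn ℝ (⊤ : ℕ∞) w U₀)
    (hα : ∀ i, ContDiffOn ℝ (⊤ : ℕ∞) (α i) U₀) (hβ : ∀ i, ContDiffOn ℝ (⊤ : ℕ∞) (β i) U₀)
    (hvanish : ∀ ζ : Fin l → ℝ, ((0 : ℝ), (0 : ℝ), ζ) ∈ U₀ →
      v ((0 : ℝ), (0 : ℝ), ζ) = 0 ∧ w ((0 : ℝ), (0 : ℝ), ζ) = 0)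
    (V : (ℝ × ℝ × (Fin l → ℝ)) → (ℝ × ℝ × (Fin l → ℝ)))
    (hV : V = fun x => (v x, w x, fun i => α i x * v x + β i x * w x))
    -- λ₁(ζ), λ₂(ζ) are the eigenvalues of the 2×2 matrix of partial derivatives of v, w
    -- with respect to (ξ, η) at (0, 0, ζ), for ζ in a neighborhood Z of 0
    (Z : Set (Fin l → ℝ)) (hZ : IsOpen Z) (hZ0 : (0 : Fin l → ℝ) ∈ Z)
    (lam₁ lam₂ : (Fin l → ℝ) → ℂ)
    (hlam : ∀ ζ ∈ Z,
      lam₁ ζ + lam₂ ζ =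
        ((fderiv ℝ v ((0 : ℝ), (0 : ℝ), ζ) ((1 : ℝ), (0 : ℝ), (0 : Fin l → ℝ)) +
          fderiv ℝ w ((0 : ℝ), (0 : ℝ), ζ) ((0 : ℝ), (1 : ℝ), (0 : Fin l → ℝ)) : ℝ) : ℂ) ∧
      lam₁ ζ * lam₂ ζ =
        ((fderiv ℝ v ((0 : ℝ), (0 : ℝ), ζ) ((1 : ℝ), (0 : ℝ), (0 : Fin l → ℝ)) *
          fderiv ℝ w ((0 : ℝ), (0 : ℝ), ζ) ((0 : ℝ), (1 : ℝ), (0 : Fin l → ℝ)) -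
          fderiv ℝ v ((0 : ℝ), (0 : ℝ), ζ) ((0 : ℝ), (1 : ℝ), (0 : Fin l → ℝ)) *
          fderiv ℝ w ((0 : ℝ), (0 : ℝ), ζ) ((1 : ℝ), (0 : ℝ), (0 : Fin l → ℝ)) : ℝ) : ℂ))
    (hre1 : (lam₁ 0).re ≠ 0) (hre2 : (lam₂ 0).re ≠ 0)
    (hres : ∀ ζ ∈ Z, ∀ p₁ p₂ : ℕ, 1 ≤ p₁ + p₂ →
      (p₁ : ℂ) * lam₁ ζ + (p₂ : ℂ) * lam₂ ζ ≠ 0) :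
    ∃ (U U' : Set (ℝ × ℝ × (Fin l → ℝ)))
      (Φ Ψ : (ℝ × ℝ × (Fin l → ℝ)) → (ℝ × ℝ × (Fin l → ℝ))),
      IsOpen U ∧ IsOpen U' ∧ (0 : ℝ × ℝ × (Fin l → ℝ)) ∈ U ∧
      (0 : ℝ × ℝ × (Fin l → ℝ)) ∈ U' ∧ U ⊆ U₀ ∧
      ContDiffOn ℝ (⊤ : ℕ∞) Φ U ∧ ContDiffOn ℝ (⊤ : ℕ∞) Ψ U' ∧
      Φ 0 = 0 ∧ Set.MapsTo Φ U U' ∧ Set.MapsTo Ψ U' U ∧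
      (∀ x ∈ U, Ψ (Φ x) = x) ∧ (∀ y ∈ U', Φ (Ψ y) = y) ∧
      ∀ x ∈ U, (fderiv ℝ Φ x (V x)).2.2 = 0 := by
  subst hV
  exact stmt8_general hU₀ h0 hv hw (contDiffOn_pi.2 fun i => ((hα i).mul hv).add ((hβ i).mul hw))
    (fun ζ hζ => ⟨(hvanish ζ hζ).1, (hvanish ζ hζ).2, funext fun i => by simp [hvanish ζ hζ]⟩)
    (hZ.mem_nhds hZ0) hlam hres
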